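/- arXiv:math/0302017 — 4 statements merged into one kernel-verified Lean document; each statement's English description precedes it below -/
import Mathlib

section
/- Let p be a prime, let R be a commutative Noetherian local pro-p domain, and let S be the integral closure of R in its fraction field. Then S is a local ring, S is finitely generated as an R-module (in particular S is a Noetherian ring), and the Krull dimension of S equals the Krull dimension of R. -/
namespace NormAux
open IsLocalRing

theorem dvd_of_almost {D : Type*} [CommRing D] [IsDomain D] [IsNoetherianRing D]
    [IsIntegrallyClosed D] (a b c : D) (hb : b ≠ 0) (hc : c ≠ 0)
    (h : ∀ n : ℕ, b ^ n ∣ c * a ^ n) : b ∣ a := by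
  let K := FractionRing D
  have hbK : algebraMap D K b ≠ 0 := by simpa using hb
  have hal : IsAlmostIntegral D (algebraMap D K a / algebraMap D K b) := by
    refine ⟨c, by simpa using hc, fun n => ?_⟩
    obtain ⟨d, hd⟩ := h n
    refine ⟨d, ?_⟩
    rw [Algebra.smul_def, div_pow, ← mul_div_assoc, eq_div_iff (pow_ne_zero _ hbK),
      ← map_pow, ← map_pow, ← map_mul, ← map_mul, hd, mul_comm]
  obtain ⟨y, hy⟩ := IsIntegrallyClosed.isIntegral_iff.mp hal.isIntegral
  refine ⟨y, ?_⟩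
  rw [eq_div_iff hbK, ← map_mul] at hy
  rw [mul_comm]
  exact (IsFractionRing.injective D K hy).symm

theorem almost_step {B : Type*} [CommRing B] [IsDomain B] [IsNoetherianRing B]
    (x : B) (hx : Prime x) [IsDomain (B ⧸ Ideal.span {x})]
    [IsIntegrallyClosed (B ⧸ Ideal.span {x})] (b c : B) (hb : ¬ x ∣ b) (hc : ¬ x ∣ c) (a : B)
    (h : ∀ n : ℕ, b ^ n ∣ c * a ^ n) :
    ∃ t a', a = b * t + x * a' ∧ ∀ n : ℕ, b ^ n ∣ c * a' ^ n := by
  have hz : ∀ y : B, Ideal.Quotient.mk (Ideal.span {x}) y = 0 ↔ x ∣ y := fun y => by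
    rw [Ideal.Quotient.eq_zero_iff_mem, Ideal.mem_span_singleton]
  have h0 := dvd_of_almost (Ideal.Quotient.mk (Ideal.span {x}) a) (Ideal.Quotient.mk _ b)
    (Ideal.Quotient.mk _ c) (by rwa [Ne, hz]) (by rwa [Ne, hz]) (fun n => by
      rw [← map_pow, ← map_pow, ← map_mul]; exact map_dvd _ (h n))
  obtain ⟨t, ht⟩ := h0
  obtain ⟨t, rfl⟩ := Ideal.Quotient.mk_surjective t
  rw [← map_mul, Ideal.Quotient.mk_eq_mk_iff_sub_mem, Ideal.mem_span_singleton] at ht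
  obtain ⟨a', ha'⟩ := ht
  refine ⟨t, a', by linear_combination ha', fun n => ?_⟩
  have h1 : b ^ n ∣ c * (x * a') ^ n := by
    rw [← ha', sub_eq_add_neg, add_pow, Finset.mul_sum]
    refine Finset.dvd_sum fun i hi => ?_
    obtain ⟨d, hd⟩ := h i
    have : i ≤ n := by simpa [Nat.lt_succ_iff] using hi
    refine ⟨d * (-t) ^ (n - i) * (n.choose i), ?_⟩
    have e : b ^ n = b ^ i * b ^ (n - i) := by rw [← pow_add]; congr 1; omega
    have e2 : (-(b * t)) ^ (n - i) = b ^ (n - i) * (-t) ^ (n - i) := by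
      rw [← mul_pow]; ring
    rw [e, e2]
    linear_combination (b ^ (n - i) * (-t) ^ (n - i) * (n.choose i)) * hd
  obtain ⟨s, hs⟩ := h1
  have h2 : x ^ n ∣ b ^ n * s := ⟨c * a' ^ n, by rw [← hs]; ring⟩
  have h3 : x ^ n ∣ s := hx.pow_dvd_of_dvd_mul_left n (fun h => hb (hx.dvd_of_dvd_pow h)) h2
  obtain ⟨w, rfl⟩ := h3
  refine ⟨w, mul_left_cancel₀ (pow_ne_zero n hx.ne_zero) ?_⟩
  linear_combination hs

theorem normal_of_prime {B : Type*} [CommRing B] [IsDomain B] [IsNoetherianRing B] [IsLocalRing B]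
    (x : B) (hx : Prime x) [IsDomain (B ⧸ Ideal.span {x})]
    [IsIntegrallyClosed (B ⧸ Ideal.span {x})] : IsIntegrallyClosed B := by
  have key : ∀ a b c : B, ¬ x ∣ b → ¬ x ∣ c → (∀ n : ℕ, b ^ n ∣ c * a ^ n) → b ∣ a := by
    intro a b c hb hc h
    by_cases hbu : IsUnit b
    · exact hbu.dvd
    have h1 : ∀ k : ℕ, ∃ t a', a = b * t + x ^ k * a' ∧ ∀ n : ℕ, b ^ n ∣ c * a' ^ n := by
      intro k
      induction k with
      | zero => exact ⟨0, a, by simp, h⟩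
      | succ k ih =>
        obtain ⟨t, a', e, h'⟩ := ih
        obtain ⟨t', a'', e', h''⟩ := almost_step x hx b c hb hc a' h'
        exact ⟨t + x ^ k * t', a'', by rw [e, e']; ring, h''⟩
    have hH : IsHausdorff (Ideal.span {x}) (B ⧸ Ideal.span {b}) :=
      IsHausdorff.of_isLocalRing _ _ (by
        rw [Ne, Ideal.span_singleton_eq_top]; exact hx.not_isUnit)
    rw [← Ideal.mem_span_singleton, ← Ideal.Quotient.eq_zero_iff_mem]
    refine hH.haus _ fun k => ?_
    obtain ⟨t, a', e, -⟩ := h1 k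
    rw [SModEq.zero, e, map_add, map_mul, Ideal.Quotient.eq_zero_iff_mem.mpr
      (Ideal.mem_span_singleton_self b), zero_mul, zero_add, map_mul]
    rw [show (Ideal.Quotient.mk (Ideal.span {b})) (x ^ k) * (Ideal.Quotient.mk (Ideal.span {b})) a'
      = x ^ k • (Ideal.Quotient.mk (Ideal.span {b})) a' from rfl]
    exact Submodule.smul_mem_smul (Ideal.pow_mem_pow (Ideal.mem_span_singleton_self x) k) trivial
  rw [isIntegrallyClosed_iff (FractionRing B)]
  intro z hz
  obtain ⟨r, hr, hrz⟩ := hz.isAlmostIntegral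
  have hr0 : r ≠ 0 := nonZeroDivisors.ne_zero hr
  obtain ⟨a, b, hb, rfl⟩ := IsFractionRing.div_surjective (A := B) z
  have hb0 : b ≠ 0 := nonZeroDivisors.ne_zero hb
  have hbK : algebraMap B (FractionRing B) b ≠ 0 := by simpa using hb0
  have hdiv : ∀ n : ℕ, b ^ n ∣ r * a ^ n := by
    intro n
    obtain ⟨d, hd⟩ := hrz n
    refine ⟨d, ?_⟩
    rw [Algebra.smul_def, div_pow, ← mul_div_assoc, eq_div_iff (pow_ne_zero _ hbK),
      ← map_pow, ← map_pow, ← map_mul, ← map_mul] at hd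
    rw [mul_comm (b ^ n)]
    exact (IsFractionRing.injective B (FractionRing B) hd).symm
  suffices h : b ∣ a by
    obtain ⟨d, rfl⟩ := h
    refine ⟨d, ?_⟩
    rw [map_mul, mul_div_cancel_left₀ _ hbK]
  by_cases ha0 : a = 0
  · simp [ha0]
  have strip : ∀ y : B, y ≠ 0 → ∃ (k : ℕ) (y' : B), y = x ^ k * y' ∧ ¬ x ∣ y' := fun y hy =>
    ⟨_, (FiniteMultiplicity.of_not_isUnit hx.not_isUnit hy).exists_eq_pow_mul_and_not_dvd⟩
  obtain ⟨k, b', rfl, hb'⟩ := strip b hb0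
  obtain ⟨j, a', rfl, ha'⟩ := strip a ha0
  obtain ⟨l, c, rfl, hc⟩ := strip r hr0
  have hxn : ∀ n : ℕ, x ^ n ≠ 0 := fun n => pow_ne_zero n hx.ne_zero
  have hkj : k ≤ j := by
    by_contra hlt
    push Not at hlt
    have h1 : x ^ (l + j * (l + 1)) * x ∣ x ^ (l + j * (l + 1)) * (c * a' ^ (l + 1)) := by
      refine dvd_trans ?_ (dvd_trans (hdiv (l + 1)) (dvd_of_eq (by ring)))
      rw [mul_pow, ← pow_mul, ← pow_succ]
      refine dvd_mul_of_dvd_left (pow_dvd_pow x ?_) _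
      nlinarith
    rcases hx.dvd_or_dvd ((mul_dvd_mul_iff_left (hxn _)).mp h1) with h | h
    · exact hc h
    · exact ha' (hx.dvd_of_dvd_pow h)
  have hd' : ∀ n : ℕ, b' ^ n ∣ c * a' ^ n := by
    intro n
    obtain ⟨s, hs⟩ : b' ^ n ∣ x ^ (l + j * n) * (c * a' ^ n) :=
      dvd_trans ⟨x ^ (k * n), by ring⟩ (dvd_trans (hdiv n) (dvd_of_eq (by ring)))
    obtain ⟨w, rfl⟩ : x ^ (l + j * n) ∣ s :=
      hx.pow_dvd_of_dvd_mul_left _ (fun h => hb' (hx.dvd_of_dvd_pow h)) ⟨_, hs.symm⟩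
    refine ⟨w, mul_left_cancel₀ (hxn (l + j * n)) ?_⟩
    linear_combination hs
  exact mul_dvd_mul (pow_dvd_pow x hkj) (key a' b' c hb' hc hd')


theorem precomplete_pi {A : Type*} [CommRing A] (I : Ideal A) [IsPrecomplete I A] (k : ℕ) 
    (_hI : I.FG) :
    IsPrecomplete I (Fin k → A) := by
  refine ⟨fun f hf => ?_⟩
  have h1 : ∀ i, ∃ L : A, ∀ n, f n i ≡ L [SMOD (I ^ n • ⊤ : Submodule A A)] := fun i => 
    IsPrecomplete.prec' (I := I) (fun n => f n i) (fun {m n} h => by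
      have := hf h
      rw [SModEq.sub_mem] at this ⊢
      have h2 := Submodule.mem_map_of_mem (f := LinearMap.proj (R := A) (φ := fun _ => A) i) this
      rw [Submodule.map_smul''] at h2
      exact Submodule.smul_mono le_rfl le_top h2)
  choose L hL using h1
  refine ⟨L, fun n => ?_⟩
  rw [SModEq.sub_mem]
  have h3 : ∀ i, f n i - L i ∈ (I ^ n : Ideal A) := fun i => by
    have := hL i n
    rw [SModEq.sub_mem] at this
    simpa using this
  have : f n - L = ∑ i, (f n i - L i) • (Pi.single i 1 : Fin k → A) := by
    ext j; simp [Finset.sum_apply, Pi.single_apply]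
  rw [this]
  exact Submodule.sum_mem _ fun i _ => Submodule.smul_mem_smul (h3 i) trivial

theorem finite_of_complete {A M : Type*} [CommRing A] [AddCommGroup M] [Module A M] (I : Ideal A)
    (hI : I.FG) [IsPrecomplete I A] [IsHausdorff I M]
    [Finite (M ⧸ (I • ⊤ : Submodule A M))] : Module.Finite A M := by
  obtain ⟨k, ⟨e⟩⟩ := Finite.exists_equiv_fin (M ⧸ (I • ⊤ : Submodule A M))
  choose s hs using fun j => Submodule.mkQ_surjective (I • ⊤ : Submodule A M) (e.symm j)
  have := precomplete_pi I k hI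
  let f : (Fin k → A) →ₗ[A] M := Fintype.linearCombination A s
  have hf : Function.Surjective f := by
    apply surjective_of_mkQ_comp_surjective (I := I)
    intro y
    refine ⟨Pi.single (e y) 1, ?_⟩
    simp [f, Fintype.linearCombination_apply_single, hs] 
  exact Module.Finite.of_surjective f hf

theorem ringHom_finite {A R : Type*} [CommRing A] [IsNoetherianRing A] [IsLocalRing A]
    [IsAdicComplete (maximalIdeal A) A] [CommRing R] [IsNoetherianRing R] [IsLocalRing R]
    [Finite (ResidueField R)] (f : A →+* R) (h1 : (maximalIdeal A).map f ≤ maximalIdeal R)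
    (n : ℕ) (h2 : maximalIdeal R ^ n ≤ (maximalIdeal A).map f) : f.Finite := by
  algebraize [f]
  change Module.Finite A R
  have e : (maximalIdeal A • ⊤ : Submodule A R) =
      ((maximalIdeal A).map (algebraMap A R)).restrictScalars A := by
    exact Ideal.smul_top_eq_map _
  have : IsHausdorff (maximalIdeal A) R := by
    rw [← IsHausdorff.map_algebraMap_iff (S := R)]
    exact IsHausdorff.of_isLocalRing _ _ (fun h => by
      have : (maximalIdeal A).map f = ⊤ := h
      rw [this] at h1
      exact (maximalIdeal.isMaximal R).ne_top (top_le_iff.mp h1))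
  have : Finite (R ⧸ maximalIdeal R) := ‹Finite (ResidueField R)›
  have : Finite (R ⧸ maximalIdeal R ^ n) :=
    Ideal.finite_quotient_pow (IsNoetherian.noetherian (maximalIdeal R)) n
  have : Finite (R ⧸ (maximalIdeal A).map (algebraMap A R)) :=
    Finite.of_surjective _ (Ideal.Quotient.factor_surjective h2)
  have : Finite (R ⧸ (maximalIdeal A • ⊤ : Submodule A R)) := by
    rw [e]; exact this
  exact finite_of_complete (maximalIdeal A) (IsNoetherian.noetherian _)

end NormAux

namespace NormAux
open IsLocalRing PowerSeries

/-- Class of base rings: complete Noetherian local normal domains with finite residue field. -/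
class Good (A : Type) [CommRing A] : Prop where
  dom : IsDomain A
  noeth : IsNoetherianRing A
  loc : IsLocalRing A
  intClosed : IsIntegrallyClosed A
  complete : IsAdicComplete (maximalIdeal A) A
  finres : Finite (ResidueField A)

attribute [instance] Good.dom Good.noeth Good.loc Good.intClosed Good.complete Good.finres

section PS
variable {A : Type} [CommRing A]

instance psLocal [IsLocalRing A] : IsLocalRing A⟦X⟧ :=
  inferInstanceAs (IsLocalRing (MvPowerSeries Unit A))

theorem mem_max_ps [IsLocalRing A] (f : A⟦X⟧) :
    f ∈ maximalIdeal A⟦X⟧ ↔ constantCoeff f ∈ maximalIdeal A := by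
  rw [mem_maximalIdeal, mem_maximalIdeal, mem_nonunits_iff, mem_nonunits_iff,
    isUnit_iff_constantCoeff]

theorem ker_cc : RingHom.ker (constantCoeff (R := A)) = Ideal.span {(X : A⟦X⟧)} := by
  ext f
  rw [RingHom.mem_ker, Ideal.mem_span_singleton, X_dvd_iff]

/-- The quotient of `A⟦X⟧` by `X`. -/
noncomputable def psQuot : (A⟦X⟧ ⧸ Ideal.span {(X : A⟦X⟧)}) ≃+* A :=
  (Ideal.quotEquivOfEq ker_cc.symm).trans
    (RingHom.quotientKerEquivOfSurjective (f := constantCoeff (R := A))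
      (fun a => ⟨C a, by simp⟩))

theorem coeff_pow_mem (I : Ideal A) (J : Ideal A⟦X⟧) (hJ : ∀ f ∈ J, constantCoeff f ∈ I) (n : ℕ) :
    ∀ f ∈ J ^ n, ∀ i, coeff i f ∈ I ^ (n - i) := by
  induction n with
  | zero => simp
  | succ n ih =>
    intro f hf
    rw [pow_succ] at hf
    refine Submodule.mul_induction_on hf ?_ ?_
    · intro g hg h hh i
      rw [coeff_mul]
      refine Ideal.sum_mem _ fun ⟨a, b⟩ hab => ?_
      have hab' : a + b = i := by simpa using hab
      rcases Nat.eq_zero_or_pos b with hb | hb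
      · subst hb
        have h0 : coeff 0 h ∈ I := by simpa using hJ h hh
        have := Ideal.mul_mem_mul (ih g hg a) h0
        rw [← pow_succ] at this
        exact Ideal.pow_le_pow_right (by omega) this
      · exact Ideal.pow_le_pow_right (by omega) (Ideal.mul_mem_right _ _ (ih g hg a))
    · intro g h hg hh i
      rw [map_add]
      exact add_mem (hg i) (hh i)

theorem mem_pow_of_coeff (I : Ideal A) (J : Ideal A⟦X⟧) (hC : ∀ a ∈ I, C a ∈ J) (hX : X ∈ J)
    (n : ℕ) : ∀ f : A⟦X⟧, (∀ i, i < n → coeff i f ∈ I ^ (n - i)) → f ∈ J ^ n := by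
  have hCn : ∀ k, ∀ a ∈ I ^ k, C a ∈ J ^ k := by
    intro k a ha
    have h1 : I.map (C (R := A)) ≤ J := Ideal.map_le_iff_le_comap.mpr hC
    have h2 := Ideal.mem_map_of_mem (C (R := A)) ha
    rw [Ideal.map_pow] at h2
    exact Ideal.pow_right_mono h1 k h2
  intro f hf
  have e : f = (trunc n f : A⟦X⟧) + (f - (trunc n f : A⟦X⟧)) := by ring
  rw [e]
  refine add_mem ?_ ?_
  · rw [trunc_apply, ← Polynomial.coeToPowerSeries.ringHom_apply, map_sum]
    refine Ideal.sum_mem _ fun i hi => ?_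
    have hi' : i < n := by simpa using hi
    have h1 : ((Polynomial.monomial i (coeff i f) : Polynomial A) : A⟦X⟧) = C (coeff i f) * X ^ i := by
      rw [Polynomial.coe_monomial, monomial_eq_C_mul_X_pow]
    rw [Polynomial.coeToPowerSeries.ringHom_apply, h1]
    have h2 := Ideal.mul_mem_mul (hCn _ _ (hf i hi')) (Ideal.pow_mem_pow hX i)
    rwa [← pow_add, Nat.sub_add_cancel hi'.le] at h2
  · have : X ^ n ∣ f - (trunc n f : A⟦X⟧) := by
      rw [X_pow_dvd_iff]
      intro m hm
      simp [coeff_trunc, hm]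
    obtain ⟨g, hg⟩ := this
    rw [hg]
    exact Ideal.mul_mem_right _ _ (Ideal.pow_mem_pow hX n)

instance psGood [Good A] : Good A⟦X⟧ where
  dom := inferInstance
  noeth := inferInstance
  loc := inferInstance
  intClosed := by
    have : IsDomain (A⟦X⟧ ⧸ Ideal.span {(X : A⟦X⟧)}) := (psQuot (A := A)).toMulEquiv.isDomain A
    have : IsIntegrallyClosed (A⟦X⟧ ⧸ Ideal.span {(X : A⟦X⟧)}) :=
      IsIntegrallyClosed.of_equiv psQuot.symm
    exact normal_of_prime (X : A⟦X⟧) X_prime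
  finres := by
    have hs : Function.Surjective ((residue A).comp (constantCoeff (R := A))) :=
      residue_surjective.comp (fun a => ⟨C a, by simp⟩)
    have hk : RingHom.ker ((residue A).comp (constantCoeff (R := A))) = maximalIdeal A⟦X⟧ := by
      ext f
      rw [RingHom.mem_ker, mem_max_ps]
      simp
    have e := (Ideal.quotEquivOfEq hk.symm).trans (RingHom.quotientKerEquivOfSurjective hs)
    exact Finite.of_equiv _ e.symm.toEquiv
  complete := by
    have : IsPrecomplete (maximalIdeal A⟦X⟧) A⟦X⟧ := by
      refine ⟨fun f hf => ?_⟩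
      have hJ : ∀ f ∈ maximalIdeal A⟦X⟧, constantCoeff f ∈ maximalIdeal A :=
        fun f hf => (mem_max_ps f).mp hf
      have h1 : ∀ i, ∃ L : A, ∀ n,
          coeff i (f (n + i)) ≡ L [SMOD (maximalIdeal A ^ n • ⊤ : Submodule A A)] := fun i =>
        IsPrecomplete.prec' (I := maximalIdeal A) (fun n => coeff i (f (n + i))) (fun {m n} h => by
          have := hf (Nat.add_le_add_right h i)
          rw [SModEq.sub_mem] at this ⊢
          simp only [smul_eq_mul, Ideal.mul_top] at this ⊢
          have h2 := coeff_pow_mem _ _ hJ _ _ this i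
          rw [map_sub] at h2
          simpa using h2)
      choose L hL using h1
      refine ⟨PowerSeries.mk L, fun n => ?_⟩
      rw [SModEq.sub_mem]
      simp only [smul_eq_mul, Ideal.mul_top]
      refine mem_pow_of_coeff (maximalIdeal A) _ (fun a ha => (mem_max_ps _).mpr (by simpa using ha))
        ((mem_max_ps _).mpr (by simp)) n _ fun i hi => ?_
      have := hL i (n - i)
      rw [SModEq.sub_mem, Nat.sub_add_cancel hi.le] at this
      simpa using this
    exact { }

theorem ps_dim [Good A] : ringKrullDim A⟦X⟧ ≤ ringKrullDim A + 1 := by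
  have h := ringKrullDim_le_ringKrullDim_quotient_add_card ({X} : Finset A⟦X⟧) (by
    simp only [Finset.coe_singleton, Set.singleton_subset_iff, SetLike.mem_coe]
    rw [IsLocalRing.ringJacobson_eq_maximalIdeal, mem_max_ps]
    simp)
  rw [Finset.card_singleton, Nat.cast_one] at h
  refine h.trans (le_of_eq ?_)
  have h2 : Ideal.span (({X} : Finset A⟦X⟧) : Set A⟦X⟧) = Ideal.span {X} := by simp
  rw [h2, ringKrullDim_eq_of_ringEquiv (psQuot (A := A))]

end PS

end NormAux

namespace NormAux
open IsLocalRing PowerSeries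

section Ev
variable {A Q : Type} [CommRing A] [CommRing Q]

theorem eval_trunc (ψ : A →+* Q) (y : Q) (n : ℕ) (hy : y ^ n = 0) (P : Polynomial A) :
    (trunc n (P : A⟦X⟧)).eval₂ ψ y = P.eval₂ ψ y := by
  have : (Polynomial.X : Polynomial A) ^ n ∣ P - trunc n (P : A⟦X⟧) := by
    rw [Polynomial.X_pow_dvd_iff]
    intro d hd
    simp [coeff_trunc, hd]
  obtain ⟨T, hT⟩ := this
  have h2 := congrArg (Polynomial.eval₂ ψ y) hT
  rw [Polynomial.eval₂_sub, Polynomial.eval₂_mul, Polynomial.eval₂_X_pow, hy, zero_mul, sub_eq_zero]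
    at h2
  exact h2.symm

/-- Evaluation of power series at a nilpotent element. -/
noncomputable def evalNil (ψ : A →+* Q) (y : Q) (n : ℕ) (hy : y ^ n = 0) : A⟦X⟧ →+* Q where
  toFun g := (trunc n g).eval₂ ψ y
  map_zero' := by simp
  map_add' f g := by simp [Polynomial.eval₂_add]
  map_one' := by
    have := eval_trunc ψ y n hy 1
    simpa using this
  map_mul' f g := by
    rw [← trunc_trunc_mul_trunc, ← Polynomial.coe_mul, eval_trunc ψ y n hy, Polynomial.eval₂_mul]

theorem evalNil_apply (ψ : A →+* Q) (y : Q) (n : ℕ) (hy : y ^ n = 0) (g : A⟦X⟧) :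
    evalNil ψ y n hy g = (trunc n g).eval₂ ψ y := rfl

theorem evalNil_coe (ψ : A →+* Q) (y : Q) (n : ℕ) (hy : y ^ n = 0) (P : Polynomial A) :
    evalNil ψ y n hy P = P.eval₂ ψ y := eval_trunc ψ y n hy P

theorem exists_eval {R : Type} [CommRing R] (I : Ideal R) [IsAdicComplete I R] (φ : A →+* R)
    (y : R) (hy : y ∈ I) : ∃ Φ : A⟦X⟧ →+* R, Φ X = y ∧ ∀ a, Φ (C a) = φ a := by
  have hn : ∀ n, (Ideal.Quotient.mk (I ^ n) y) ^ n = 0 := fun n => by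
    rw [← map_pow, Ideal.Quotient.eq_zero_iff_mem]
    exact Ideal.pow_mem_pow hy n
  let f : ∀ n, A⟦X⟧ →+* R ⧸ I ^ n := fun n =>
    evalNil ((Ideal.Quotient.mk (I ^ n)).comp φ) (Ideal.Quotient.mk (I ^ n) y) n (hn n)
  have hf : ∀ {m n : ℕ} (hle : m ≤ n), (Ideal.Quotient.factorPow I hle).comp (f n) = f m := by
    intro m n hle
    ext g
    simp only [f, RingHom.comp_apply, evalNil_apply]
    rw [Polynomial.hom_eval₂]
    have e1 : (Ideal.Quotient.factorPow I hle).comp ((Ideal.Quotient.mk (I ^ n)).comp φ) =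
      (Ideal.Quotient.mk (I ^ m)).comp φ := by ext; simp [Ideal.Quotient.factorPow]
    have e2 : Ideal.Quotient.factorPow I hle (Ideal.Quotient.mk (I ^ n) y) =
      Ideal.Quotient.mk (I ^ m) y := by simp [Ideal.Quotient.factorPow]
    rw [e1, e2, ← eval_trunc _ _ m (hn m), trunc_trunc_of_le _ hle]
  have key : ∀ P : Polynomial A, IsAdicComplete.liftRingHom I f hf (P : A⟦X⟧) = P.eval₂ φ y := by
    intro P
    rw [← sub_eq_zero]
    refine IsHausdorff.haus (I := I) inferInstance _ fun n => ?_
    rw [SModEq.sub_mem, sub_zero]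
    simp only [smul_eq_mul, Ideal.mul_top]
    rw [← Ideal.Quotient.eq_zero_iff_mem, map_sub, sub_eq_zero, IsAdicComplete.mk_liftRingHom]
    simp only [f]
    rw [evalNil_coe, Polynomial.hom_eval₂]
  refine ⟨IsAdicComplete.liftRingHom I f hf, ?_, fun a => ?_⟩
  · simpa using key Polynomial.X
  · simpa using key (Polynomial.C a)

end Ev

/-- Extension lemma. -/
theorem exists_ext {R : Type} [CommRing R] [IsLocalRing R] [IsAdicComplete (maximalIdeal R) R]
    (l : List R) (hl : ∀ y ∈ l, y ∈ maximalIdeal R) (A : Type) [CommRing A] [Good A] (φ : A →+* R)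
    (hφ : (maximalIdeal A).map φ ≤ maximalIdeal R) :
    ∃ (B : Type) (_ : CommRing B) (_ : Good B) (ψ : B →+* R),
      (maximalIdeal B).map ψ ≤ maximalIdeal R ∧
      (maximalIdeal A).map φ ≤ (maximalIdeal B).map ψ ∧
      (∀ y ∈ l, y ∈ (maximalIdeal B).map ψ) ∧
      ringKrullDim B ≤ ringKrullDim A + (l.length : ℕ) := by
  induction l with
  | nil => exact ⟨A, inferInstance, inferInstance, φ, hφ, le_rfl, by simp, by simp⟩
  | cons y l ih =>
    obtain ⟨B, _, _, ψ, h1, h2, h3, h4⟩ := ih (fun z hz => hl z (List.mem_cons_of_mem _ hz))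
    have hy : y ∈ maximalIdeal R := hl y List.mem_cons_self
    obtain ⟨Φ, hX, hC⟩ := exists_eval (maximalIdeal R) ψ y hy
    have h5 : (maximalIdeal B).map ψ ≤ (maximalIdeal B⟦X⟧).map Φ := by
      refine Ideal.map_le_iff_le_comap.mpr fun a ha => ?_
      rw [Ideal.mem_comap, ← hC]
      exact Ideal.mem_map_of_mem _ ((mem_max_ps _).mpr (by simpa using ha))
    refine ⟨B⟦X⟧, inferInstance, inferInstance, Φ, ?_, h2.trans h5, ?_, ?_⟩
    · refine Ideal.map_le_iff_le_comap.mpr fun g hg => ?_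
      rw [Ideal.mem_comap]
      obtain ⟨g', hg'⟩ : X ∣ g - C (constantCoeff g) := by rw [X_dvd_iff]; simp
      have e : g = C (constantCoeff g) + X * g' := by rw [← hg']; ring
      rw [e, map_add, map_mul, hX, hC]
      exact add_mem (h1 (Ideal.mem_map_of_mem _ ((mem_max_ps _).mp hg)))
        (Ideal.mul_mem_right _ _ hy)
    · intro z hz
      rcases List.mem_cons.mp hz with rfl | hz
      · rw [← hX]
        exact Ideal.mem_map_of_mem _ ((mem_max_ps _).mpr (by simp))
      · exact h5 (h3 z hz)
    · refine ps_dim.trans ?_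
      rw [List.length_cons, Nat.cast_add, Nat.cast_one, ← add_assoc]
      gcongr

end NormAux

namespace NormAux
open IsLocalRing

theorem dim_le_of_integral {A B : Type} [CommRing A] [CommRing B] (f : A →+* B)
    (hf : f.IsIntegral) : ringKrullDim B ≤ ringKrullDim A := by
  algebraize [f]
  refine Order.krullDim_le_of_strictMono (PrimeSpectrum.comap (algebraMap A B)) ?_
  intro P Q h
  exact Ideal.IsIntegral.comap_lt_comap (I := P.asIdeal) (J := Q.asIdeal) h

theorem dim_ge_of_integral {A B : Type} [CommRing A] [CommRing B] [Algebra A B]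
    [Algebra.IsIntegral A B] [IsDomain B] (h : Function.Injective (algebraMap A B)) :
    ringKrullDim A ≤ ringKrullDim B := by
  refine iSup_le fun l => ?_
  obtain ⟨P, hP, hP2⟩ := Ideal.exists_ideal_over_prime_of_isIntegral_of_isDomain
    (S := B) l.head.asIdeal (by
      rw [(RingHom.injective_iff_ker_eq_bot _).mp h]; exact bot_le)
  have : P.LiesOver (RelSeries.head l).asIdeal := ⟨hP2.symm⟩
  obtain ⟨L, hL, -⟩ := Ideal.exists_ltSeries_of_hasGoingUp (S := B) l P
  rw [← hL]
  exact le_iSup (fun L : LTSeries (PrimeSpectrum B) => ((L.length : ℕ∞) : WithBot ℕ∞)) L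

theorem exists_sop {Q : Type} [CommRing Q] [IsNoetherianRing Q] [IsLocalRing Q] :
    ∃ s : Finset Q, ((s.card : ℕ) : WithBot ℕ∞) = ringKrullDim Q ∧ (∀ x ∈ s, x ∈ maximalIdeal Q) ∧
      ∃ n, maximalIdeal Q ^ n ≤ Ideal.span (s : Set Q) := by
  obtain ⟨s, hs, hc⟩ := Ideal.exists_finset_card_eq_height_of_isNoetherianRing (maximalIdeal Q)
  refine ⟨s, ?_, fun x hx => hs.1.2 (Ideal.subset_span hx), ?_⟩
  · rw [← maximalIdeal_height_eq_ringKrullDim, ← hc]; rfl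
  · obtain ⟨n, hn⟩ := Ideal.exists_radical_pow_le_of_fg (Ideal.span (s : Set Q))
      (IsNoetherian.noetherian _)
    refine ⟨n, le_trans (Ideal.pow_right_mono ?_ n) hn⟩
    rw [Ideal.radical_eq_sInf]
    refine le_sInf fun J hJ => ?_
    have := hJ.2
    exact hs.2 ⟨hJ.2, hJ.1⟩ (le_maximalIdeal hJ.2.ne_top)

theorem exists_sop_quot {R : Type} [CommRing R] [IsNoetherianRing R] [IsLocalRing R]
    (I : Ideal R) (hI : I ≤ maximalIdeal R) :
    ∃ l : List R, ((l.length : ℕ) : WithBot ℕ∞) = ringKrullDim (R ⧸ I) ∧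
      (∀ x ∈ l, x ∈ maximalIdeal R) ∧
      ∃ n, maximalIdeal R ^ n ≤ I ⊔ Ideal.span {x | x ∈ l} := by
  have : Nontrivial (R ⧸ I) := Ideal.Quotient.nontrivial_iff.mpr
    (fun h => (maximalIdeal.isMaximal R).ne_top (top_le_iff.mp (h ▸ hI)))
  have : IsLocalRing (R ⧸ I) := IsLocalRing.of_surjective' (Ideal.Quotient.mk I)
    Ideal.Quotient.mk_surjective
  obtain ⟨s, hs, hm, n, hn⟩ := exists_sop (Q := R ⧸ I)
  let g := Function.surjInv (Ideal.Quotient.mk_surjective (I := I))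
  have hg : ∀ x, Ideal.Quotient.mk I (g x) = x := Function.surjInv_eq _
  refine ⟨s.toList.map g, by simpa using hs, ?_, n, ?_⟩
  · intro x hx
    obtain ⟨y, hy, rfl⟩ := List.mem_map.mp hx
    rw [mem_maximalIdeal, mem_nonunits_iff]
    intro hu
    have h1 := hu.map (Ideal.Quotient.mk I)
    rw [hg] at h1
    exact (mem_maximalIdeal _).mp (hm y (by simpa using hy)) h1
  · rw [← Ideal.comap_map_quotientMk, ← Ideal.map_le_iff_le_comap, Ideal.map_pow]
    refine (Ideal.pow_right_mono ?_ n).trans (hn.trans ?_)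
    · refine le_maximalIdeal fun h => (maximalIdeal.isMaximal R).ne_top ?_
      have h2 := Ideal.comap_map_quotientMk I (maximalIdeal R)
      rw [h, Ideal.comap_top, sup_eq_right.mpr hI] at h2
      exact h2.symm
    · rw [Ideal.span_le]
      intro x hx
      rw [SetLike.mem_coe, ← hg x]
      exact Ideal.mem_map_of_mem _ (Ideal.subset_span (by
        simp only [List.mem_map, Finset.mem_toList, Set.mem_ofPred_eq]
        exact ⟨x, hx, rfl⟩))

instance goodZMod (p : ℕ) [Fact p.Prime] : Good (ZMod p) where
  dom := inferInstance
  noeth := inferInstance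
  loc := inferInstance
  intClosed := inferInstance
  complete := by
    rw [IsLocalRing.maximalIdeal_eq_bot]
    infer_instance
  finres := Finite.of_surjective (residue (ZMod p)) residue_surjective

instance goodPadic (p : ℕ) [Fact p.Prime] : Good ℤ_[p] where
  dom := inferInstance
  noeth := inferInstance
  loc := inferInstance
  intClosed := inferInstance
  complete := inferInstance
  finres := Finite.of_equiv _ (PadicInt.residueField (p := p)).symm.toEquiv

theorem exists_padic (p : ℕ) [Fact p.Prime] {R : Type} [CommRing R] (I : Ideal R)
    [IsAdicComplete I R] (hp : (p : R) ∈ I) : Nonempty (ℤ_[p] →+* R) := by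
  have hp' : ∀ n, ((p ^ n : ℕ) : R ⧸ I ^ n) = 0 := fun n => by
    have h1 := Ideal.Quotient.eq_zero_iff_mem.mpr (Ideal.pow_mem_pow hp n)
    rw [map_pow, map_natCast] at h1
    exact_mod_cast h1
  have hc : ∀ n, Nonempty (ZMod (p ^ n) →+* R ⧸ I ^ n) := fun n => by
    obtain ⟨c, hc⟩ := CharP.exists (R ⧸ I ^ n)
    exact ⟨ZMod.castHom ((CharP.cast_eq_zero_iff _ c _).mp (hp' n)) _⟩
  let c : ∀ n, ZMod (p ^ n) →+* R ⧸ I ^ n := fun n => (hc n).some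
  let f : ∀ n, ℤ_[p] →+* R ⧸ I ^ n := fun n => (c n).comp (PadicInt.toZModPow n)
  refine ⟨IsAdicComplete.liftRingHom I f fun {m n} hle => ?_⟩
  simp only [f]
  rw [← PadicInt.zmod_cast_comp_toZModPow m n hle, ← RingHom.comp_assoc, ← RingHom.comp_assoc]
  congr 1
  exact Subsingleton.elim _ _

theorem exists_base (p : ℕ) [Fact p.Prime] (R : Type) [CommRing R] [IsDomain R]
    [IsLocalRing R] [IsAdicComplete (maximalIdeal R) R] [CharP (ResidueField R) p] :
    ∃ (A : Type) (_ : CommRing A) (_ : Good A) (φ : A →+* R),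
      (maximalIdeal A).map φ ≤ maximalIdeal R ∧
      ringKrullDim A + ringKrullDim (R ⧸ (maximalIdeal A).map φ) ≤ ringKrullDim R := by
  have hpm : (p : R) ∈ maximalIdeal R := by
    rw [← residue_eq_zero_iff, map_natCast]
    exact CharP.cast_eq_zero _ _
  by_cases h : (p : R) = 0
  · obtain ⟨c, hc⟩ := CharP.exists R
    let φ : ZMod p →+* R := ZMod.castHom ((CharP.cast_eq_zero_iff _ c _).mp h) _
    refine ⟨ZMod p, inferInstance, inferInstance, φ, ?_, ?_⟩
    · rw [IsLocalRing.maximalIdeal_eq_bot, Ideal.map_bot]; exact bot_le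
    · rw [ringKrullDim_eq_zero_of_field, zero_add]
      exact ringKrullDim_quotient_le _
  · obtain ⟨φ⟩ := exists_padic p (maximalIdeal R) hpm
    have e : (maximalIdeal ℤ_[p]).map φ = Ideal.span {(p : R)} := by
      rw [PadicInt.maximalIdeal_eq_span_p, Ideal.map_span]; simp
    refine ⟨ℤ_[p], inferInstance, inferInstance, φ, ?_, ?_⟩
    · rw [e, Ideal.span_singleton_le_iff_mem]; exact hpm
    · rw [e]
      refine le_trans ?_ (ringKrullDim_quotient_succ_le_of_nonZeroDivisor
        (mem_nonZeroDivisors_of_ne_zero h))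
      rw [add_comm]
      have := Ring.krullDimLE_iff.mp (inferInstance : Ring.KrullDimLE 1 ℤ_[p])
      gcongr
      exact_mod_cast this

theorem exists_normalization (p : ℕ) [Fact p.Prime] (R : Type) [CommRing R] [IsDomain R]
    [IsNoetherianRing R] [IsLocalRing R] [IsAdicComplete (maximalIdeal R) R]
    [Finite (ResidueField R)] [CharP (ResidueField R) p] :
    ∃ (A : Type) (_ : CommRing A) (_ : Good A) (φ : A →+* R),
      φ.Finite ∧ Function.Injective φ := by
  obtain ⟨A, _, _, φ, h1, h2⟩ := exists_base p R
  obtain ⟨l, hl, hlm, n, hn⟩ := exists_sop_quot ((maximalIdeal A).map φ) h1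
  obtain ⟨B, _, _, ψ, h3, h4, h5, h6⟩ := exists_ext l hlm A φ h1
  have hfin : ψ.Finite := by
    refine ringHom_finite ψ h3 n (hn.trans (sup_le h4 ?_))
    rw [Ideal.span_le]
    exact h5
  refine ⟨B, inferInstance, inferInstance, ψ, hfin, ?_⟩
  rw [injective_iff_map_eq_zero]
  intro f hf
  by_contra hne
  have hBR : ringKrullDim B ≤ ringKrullDim R := by
    refine h6.trans (le_trans (le_of_eq ?_) h2)
    rw [hl]
  let θ : B ⧸ Ideal.span {f} →+* R := Ideal.Quotient.lift _ ψ (by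
    intro a ha
    obtain ⟨b, rfl⟩ := Ideal.mem_span_singleton.mp ha
    rw [map_mul, hf, zero_mul])
  have hθ : θ.IsIntegral := by
    refine RingHom.IsIntegral.tower_top (Ideal.Quotient.mk _) θ ?_
    have : θ.comp (Ideal.Quotient.mk _) = ψ := Ideal.Quotient.lift_comp_mk _ _ _
    rw [this]
    exact hfin.to_isIntegral
  have h7 := dim_le_of_integral θ hθ
  have h8 := ringKrullDim_quotient_succ_le_of_nonZeroDivisor (mem_nonZeroDivisors_of_ne_zero hne)
  obtain ⟨s, hs, -⟩ := exists_sop (Q := R)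
  rw [← hs] at h7 hBR
  have h9 := (add_le_add_left h7 1).trans (h8.trans hBR)
  have : s.card + 1 ≤ s.card := by exact_mod_cast h9
  omega

end NormAux

namespace NormAux
open IsLocalRing

theorem fin_of_semilinear {A A' S B : Type} [CommRing A] [CommRing A'] [IsNoetherianRing A]
    [AddCommGroup S] [Module A S] [AddCommGroup B] [Module A' B] [Module.Finite A' B]
    (F : A →+* A') (hF : F.Finite) (g : S →+ B) (hg : Function.Injective g)
    (hg2 : ∀ a s, g (a • s) = F a • g s) : Module.Finite A S := by
  algebraize [F]
  let _ : Module A B := Module.compHom B F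
  have : IsScalarTower A A' B := ⟨fun a a' b => by
    rw [Algebra.smul_def, mul_smul]; rfl⟩
  have : Module.Finite A B := Module.Finite.trans A' B
  let g' : S →ₗ[A] B := { g with map_smul' := hg2 }
  exact Module.Finite.of_injective g' hg

theorem frob_finite {A : Type} [CommRing A] [Good A] (p : ℕ) [ExpChar A p] (e : ℕ) :
    (iterateFrobenius A p e).Finite := by
  have h1 : (maximalIdeal A).map (iterateFrobenius A p e) ≤ maximalIdeal A := by
    refine Ideal.map_le_iff_le_comap.mpr fun a ha => ?_
    rw [Ideal.mem_comap, iterateFrobenius_def]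
    exact Ideal.pow_mem_of_mem _ ha _ (pow_pos (expChar_pos A p) e)
  obtain ⟨n, hn⟩ := Ideal.exists_pow_le_of_le_radical_of_fg
    (I := maximalIdeal A) (J := (maximalIdeal A).map (iterateFrobenius A p e))
    (fun a ha => ⟨p ^ e, by
      rw [← iterateFrobenius_def]
      exact Ideal.mem_map_of_mem _ ha⟩) (IsNoetherian.noetherian _)
  exact ringHom_finite _ h1 n hn

theorem fin_insep {A E L : Type} [CommRing A] [Good A] [Field E] [Field L] [Algebra A E]
    [Algebra A L] [Algebra E L] [IsScalarTower A E L] [IsPurelyInseparable.HasExponent E L]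
    (hA : Function.Injective (algebraMap A L))
    [Module.Finite A (integralClosure A E)] : Module.Finite A (integralClosure A L) := by
  obtain ⟨p, hp⟩ := ExpChar.exists E
  have : ExpChar L p := expChar_of_injective_algebraMap (algebraMap E L).injective p
  have : ExpChar A p := by
    exact (algebraMap A L).expChar hA p
  set e := IsPurelyInseparable.exponent E L
  have h1 : ∀ s : integralClosure A L, ∃ t : integralClosure A E,
      algebraMap E L t = (s : L) ^ p ^ e := fun s => by
    obtain ⟨t, ht⟩ := IsPurelyInseparable.exponent_def' E p (s : L)
    refine ⟨⟨t, ?_⟩, ht⟩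
    rw [mem_integralClosure_iff, ← isIntegral_algebraMap_iff (algebraMap E L).injective, ht]
    exact s.2.pow _
  choose g hg using h1
  have inj : ∀ t t' : integralClosure A E, algebraMap E L t = algebraMap E L t' → t = t' :=
    fun t t' h => Subtype.ext ((algebraMap E L).injective h)
  let g' : integralClosure A L →+ integralClosure A E := AddMonoidHom.mk' g fun s t => inj _ _ (by
    change algebraMap E L (g (s + t)) = algebraMap E L ((g s : E) + (g t : E))
    rw [map_add, hg, hg, hg, ← add_pow_expChar_pow]; rfl)
  refine fin_of_semilinear (iterateFrobenius A p e) (frob_finite p e) g' ?_ ?_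
  · intro s t h
    have h2 : (s : L) ^ p ^ e = (t : L) ^ p ^ e := by rw [← hg, ← hg]; exact congrArg _ (congrArg _ h)
    exact Subtype.ext (iterateFrobenius_inj L p e (by simpa [iterateFrobenius_def] using h2))
  · intro a s
    refine inj _ _ ?_
    change algebraMap E L (g (a • s)) = algebraMap E L ((iterateFrobenius A p e a • g s : integralClosure A E) : E)
    rw [hg, iterateFrobenius_def]
    have e1 : ((a • s : integralClosure A L) : L) = algebraMap A L a * s := by
      rw [← Algebra.smul_def]; rfl
    have e2 : ((a ^ p ^ e • g s : integralClosure A E) : E) = algebraMap A E (a ^ p ^ e) * g s := by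
      rw [← Algebra.smul_def]; rfl
    rw [e1, e2, map_mul, hg, ← IsScalarTower.algebraMap_apply, mul_pow, map_pow]

theorem fin_closure {A K L : Type} [CommRing A] [Good A] [Field K] [Field L] [Algebra A K]
    [IsFractionRing A K] [Algebra A L] [Algebra K L] [IsScalarTower A K L]
    [FiniteDimensional K L] : Module.Finite A (integralClosure A L) := by
  have : Module.Finite A (integralClosure A (separableClosure K L)) :=
    IsIntegralClosure.finite A K (separableClosure K L) _
  have : IsScalarTower A (separableClosure K L) L := by
    refine IsScalarTower.of_algebraMap_eq fun a => ?_
    rw [IsScalarTower.algebraMap_apply A K L, IsScalarTower.algebraMap_apply A K (separableClosure K L)]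
    rfl
  refine fin_insep (E := separableClosure K L) ?_
  rw [IsScalarTower.algebraMap_eq A K L]
  exact (algebraMap K L).injective.comp (IsFractionRing.injective A K)

theorem fin_final {A R : Type} [CommRing A] [Good A] [CommRing R] [IsDomain R] (φ : A →+* R)
    (h1 : φ.Finite) (h2 : Function.Injective φ) :
    Module.Finite R (integralClosure R (FractionRing R)) := by
  algebraize [φ]
  have : FaithfulSMul A R := (faithfulSMul_iff_algebraMap_injective A R).mpr h2
  let _ := FractionRing.liftAlgebra A (FractionRing R)
  have hfd : FiniteDimensional (FractionRing A) (FractionRing R) :=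
    .of_isLocalization A R (nonZeroDivisors A)
  have h3 : Module.Finite A (integralClosure A (FractionRing R)) :=
    fin_closure (K := FractionRing A)
  have : Module.Finite A (integralClosure R (FractionRing R)) := by
    let g : integralClosure R (FractionRing R) →ₗ[A] integralClosure A (FractionRing R) :=
      { toFun := fun s => ⟨s, isIntegral_trans (R := A) (s : FractionRing R) s.2⟩
        map_add' := fun _ _ => rfl
        map_smul' := fun _ _ => rfl }
    have : IsNoetherian A (integralClosure A (FractionRing R)) := isNoetherian_of_isNoetherianRing_of_finite A _
    refine Module.Finite.of_injective g fun s t h => ?_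
    exact Subtype.ext (congrArg (fun x : integralClosure A (FractionRing R) => (x : FractionRing R)) h)
  exact Module.Finite.of_restrictScalars_finite A R _

end NormAux

namespace NormAux
open IsLocalRing

theorem exists_pow_idem {Q : Type} [CommRing Q] [Finite Q] (a : Q) :
    ∃ k, 0 < k ∧ a ^ k * a ^ k = a ^ k := by
  obtain ⟨i, j, hne, hij⟩ := Finite.exists_ne_map_eq_of_infinite (fun n : ℕ => a ^ n)
  wlog hlt : i < j generalizing i j
  · exact this j i hne.symm hij.symm (by omega)
  obtain ⟨d, rfl⟩ := Nat.exists_eq_add_of_lt hlt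
  have h1 : ∀ t m, i ≤ m → a ^ (m + t * (d + 1)) = a ^ m := by
    intro t
    induction t with
    | zero => simp
    | succ t ih =>
      intro m hm
      rw [add_mul, one_mul, ← add_assoc, show m + t * (d + 1) + (d + 1) = (m + (d + 1)) + t * (d + 1) by ring,
        ih _ (by omega)]
      obtain ⟨r, rfl⟩ := Nat.exists_eq_add_of_le hm
      rw [show i + r + (d + 1) = (i + d + 1) + r by ring, pow_add, pow_add a i r]
      rw [← hij]
  refine ⟨(i + 1) * (d + 1), by positivity, ?_⟩
  rw [← pow_add]
  exact h1 _ _ (by nlinarith)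

theorem complete_of_finite {R S : Type} [CommRing R] [IsNoetherianRing R] [IsLocalRing R]
    [IsAdicComplete (maximalIdeal R) R] [CommRing S] [Algebra R S] [Module.Finite R S] :
    IsAdicComplete (maximalIdeal R) S := by
  have h0 : IsHausdorff (maximalIdeal R) S :=
    IsHausdorff.of_le_jacobson _ _ (by rw [IsLocalRing.jacobson_eq_maximalIdeal _ bot_ne_top])
  obtain ⟨k, g, hg⟩ := Module.Finite.exists_fin' R S
  have := precomplete_pi (maximalIdeal R) k (IsNoetherian.noetherian _)
  have h1 : IsPrecomplete (maximalIdeal R) S := by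
    rw [← AdicCompletion.of_surjective_iff]
    intro y
    obtain ⟨x, rfl⟩ := AdicCompletion.map_surjective (maximalIdeal R) hg y
    obtain ⟨z, rfl⟩ := AdicCompletion.of_surjective (maximalIdeal R) (Fin k → R) x
    exact ⟨g z, (AdicCompletion.map_of (maximalIdeal R) g z).symm⟩
  exact { }

theorem local_of_finite {R S : Type} [CommRing R] [IsNoetherianRing R] [IsLocalRing R]
    [IsAdicComplete (maximalIdeal R) R] [Finite (ResidueField R)] [CommRing S] [IsDomain S]
    [Algebra R S] [Module.Finite R S] : IsLocalRing S := by
  set J : Ideal S := (maximalIdeal R).map (algebraMap R S) with hJ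
  have : IsAdicComplete J S := (IsAdicComplete.map_algebraMap_iff _ _).mpr complete_of_finite
  have hH : HenselianRing S J := inferInstance
  have hfin : Finite (S ⧸ J) := by
    have h1 : Finite (R ⧸ maximalIdeal R) := ‹Finite (ResidueField R)›
    have h2 : Module.Finite (R ⧸ maximalIdeal R) (S ⧸ J) :=
      Module.Finite.of_restrictScalars_finite R _ _
    exact Module.finite_of_finite (R ⧸ maximalIdeal R)
  have hjac : ∀ x ∈ J, ∀ y, IsUnit (x * y + 1) := fun x hx y =>
    Ideal.mem_jacobson_bot.mp (hH.jac hx) y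
  refine IsLocalRing.of_isUnit_or_isUnit_one_sub_self fun a => ?_
  obtain ⟨k, hk, hid⟩ := exists_pow_idem (Ideal.Quotient.mk J a)
  obtain ⟨r, hr, hra⟩ := hH.is_henselian (Polynomial.X ^ 2 - Polynomial.X) (by monicity!) (a ^ k) (by
      rw [← Ideal.Quotient.eq_zero_iff_mem]
      simp [pow_two, hid]) (by
      simp only [Polynomial.derivative_sub, Polynomial.derivative_X_pow, Polynomial.derivative_X]
      refine IsUnit.of_mul_eq_one (Ideal.Quotient.mk J (2 * a ^ k - 1)) ?_
      simp
      have h2 : Ideal.Quotient.mk J 2 = 2 := map_ofNat _ 2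
      rw [h2]
      linear_combination 4 * hid)
  have hr' : r * (r - 1) = 0 := by
    have := hr.eq_zero
    simp at this
    linear_combination this
  rcases mul_eq_zero.mp hr' with h | h
  · right
    rw [h, zero_sub] at hra
    have h1 := hjac _ hra 1
    have h2 : (1 - a) ∣ 1 - a ^ k := by simpa using sub_dvd_pow_sub_pow 1 a k
    refine isUnit_of_dvd_unit h2 ?_
    have e : 1 - a ^ k = -a ^ k * 1 + 1 := by ring
    rw [e]; exact h1
  · left
    have h' : r = 1 := by linear_combination h
    rw [h'] at hra
    have h1 := hjac _ hra (-1)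
    refine isUnit_of_dvd_unit (dvd_pow_self a hk.ne') ?_
    have e : a ^ k = (1 - a ^ k) * (-1) + 1 := by ring
    rw [e]; exact h1

end NormAux

set_option synthInstance.maxHeartbeats 400000

/-- The integral closure `S` of a commutative Noetherian local pro-`p`
domain `R` in its fraction field is local, module-finite over `R` (in particular a
Noetherian ring), and has the same Krull dimension as `R`. -/
theorem integralClosure_isLocalRing_finite_krullDim (p : ℕ) [Fact p.Prime] (R : Type)
    [CommRing R] [IsDomain R] [IsNoetherianRing R] [IsLocalRing R]
    [IsAdicComplete (IsLocalRing.maximalIdeal R) R]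
    [Finite (IsLocalRing.ResidueField R)] [CharP (IsLocalRing.ResidueField R) p] :
    IsLocalRing (integralClosure R (FractionRing R)) ∧
      Module.Finite R (integralClosure R (FractionRing R)) ∧
      IsNoetherianRing (integralClosure R (FractionRing R)) ∧
      ringKrullDim (integralClosure R (FractionRing R)) = ringKrullDim R := by
  obtain ⟨A, _, _, φ, h1, h2⟩ := NormAux.exists_normalization p R
  have hfin := NormAux.fin_final φ h1 h2
  refine ⟨NormAux.local_of_finite (R := R), hfin, IsNoetherianRing.of_finite R _, le_antisymm ?_ ?_⟩
  · exact NormAux.dim_le_of_integral (algebraMap R (integralClosure R (FractionRing R)))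
      (algebraMap_isIntegral_iff.mpr inferInstance)
  · exact NormAux.dim_ge_of_integral (FaithfulSMul.algebraMap_injective _ _)
end

section
/- Let R be a Henselian local integral domain with fraction field D, and let v be a multiplicative valuation on D with values in the nonnegative reals such that v(x) ≤ 1 for the image x of every element of R and v(m) < 1 for the image m of every element of the maximal ideal of R. If s lies in the integral closure of R in D and v(s) = 1, then s is invertible in the integral closure, i.e. s ≠ 0 and s⁻¹ is integral over R. -/
open scoped NNReal

open Polynomial in
/-- If `∏ (X - a i)` has coefficients in `R`, so does the product over all `q`-element index sets
of `X - ∏ a i`. -/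
theorem lifts_compound {R A : Type} [CommRing R] [CommRing A] [Algebra R A] {n : ℕ}
    (a : Fin n → A) (q : ℕ)
    (h : (∏ i, (X - C (a i))) ∈ lifts (algebraMap R A)) :
    (∏ I ∈ Finset.powersetCard q (Finset.univ : Finset (Fin n)), (X - C (∏ i ∈ I, a i))) ∈
      lifts (algebraMap R A) := by
  classical
  let G : (MvPolynomial (Fin n) R)[X] :=
    ∏ I ∈ Finset.powersetCard q (Finset.univ : Finset (Fin n)),
      (X - C (∏ i ∈ I, MvPolynomial.X i))
  have hGmap : G.map (MvPolynomial.aeval a : MvPolynomial (Fin n) R →ₐ[R] A).toRingHom =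
      ∏ I ∈ Finset.powersetCard q (Finset.univ : Finset (Fin n)), (X - C (∏ i ∈ I, a i)) := by
    simp [G, Polynomial.map_prod, map_prod]
  have hsym : ∀ j, (G.coeff j).IsSymmetric := by
    intro j e
    have : G.map (MvPolynomial.rename e : MvPolynomial (Fin n) R →ₐ[R] _).toRingHom = G := by
      simp only [G, Polynomial.map_prod, Polynomial.map_sub, map_X, map_C, map_prod,
        AlgHom.toRingHom_eq_coe, RingHom.coe_coe, MvPolynomial.rename_X]
      refine Finset.prod_bij' (fun I _ => I.map e.toEmbedding)
        (fun I _ => I.map e.symm.toEmbedding) ?_ ?_ ?_ ?_ ?_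
      · intro I hI; simpa [Finset.mem_powersetCard] using hI
      · intro I hI; simpa [Finset.mem_powersetCard] using hI
      · intro I hI; ext; simp
      · intro I hI; ext; simp
      · intro I hI; simp
    conv_rhs => rw [← this]
    simp
  have hes : ∀ k, MvPolynomial.aeval a (MvPolynomial.esymm (Fin n) R k) ∈
      (⊥ : Subalgebra R A) := by
    intro k
    rw [MvPolynomial.aeval_esymm_eq_multiset_esymm]
    by_cases hk : k ≤ n
    · have h2 := (lifts_iff_coeff_lifts _).1 h (n - k)
      have h3 := Multiset.prod_X_sub_C_coeff (Finset.univ.val.map a) (k := n - k) (by simp)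
      have h4 : n - (n - k) = k := by omega
      simp only [Multiset.card_map, Finset.card_val, Finset.card_univ, Fintype.card_fin, h4,
        Multiset.map_map] at h3
      have h5 : (∏ i, (X - C (a i))).coeff (n - k) =
        (-1) ^ k * (Finset.univ.val.map a).esymm k := h3
      have h6 : (Finset.univ.val.map a).esymm k =
          (-1) ^ k * (∏ i, (X - C (a i))).coeff (n - k) := by
        rw [h5, ← mul_assoc, ← mul_pow]; simp
      rw [h6]
      exact mul_mem (pow_mem (neg_mem (one_mem _)) _) (Algebra.mem_bot.2 h2)
    · rw [Multiset.esymm, Multiset.powersetCard_eq_empty]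
      · simp
      · simp; omega
  rw [lifts_iff_coeff_lifts]
  intro j
  rw [← hGmap, coeff_map]
  obtain ⟨Q, hQ⟩ := MvPolynomial.esymmAlgHom_surjective (σ := Fin n) R (n := n) (by simp)
    ⟨G.coeff j, hsym j⟩
  have hQ' := congrArg Subtype.val hQ
  rw [MvPolynomial.esymmAlgHom_apply] at hQ'
  simp only at hQ'
  rw [← hQ', ← Algebra.mem_bot]
  simp only [AlgHom.toRingHom_eq_coe, RingHom.coe_coe]
  rw [← AlgHom.comp_apply, MvPolynomial.comp_aeval]
  have : ∀ i : Fin n, ∃ r : R, algebraMap R A r =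
      MvPolynomial.aeval a (MvPolynomial.esymm (Fin n) R (i + 1)) := fun i =>
    Algebra.mem_bot.1 (hes _)
  choose r hr using this
  simp_rw [← hr]
  exact Algebra.mem_bot.2 ⟨MvPolynomial.aeval r Q, (MvPolynomial.aeval_algebraMap_apply A r Q).symm⟩

open Polynomial in
theorem hensel_core {R T K : Type} [CommRing R] [HenselianLocalRing R] [CommRing T] [IsDomain T]
    [CommRing K] [IsDomain K] [Algebra R T] (φ : T →+* K)
    (hφ : ∀ m ∈ IsLocalRing.maximalIdeal R, φ (algebraMap R T m) = 0) {n : ℕ} (a : Fin n → T)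
    (h : (∏ i, (X - C (a i))) ∈ lifts (algebraMap R T)) (i₀ : Fin n) (hi₀ : φ (a i₀) ≠ 0) :
    ∃ u : R, IsUnit u ∧ ∃ I : Finset (Fin n), i₀ ∈ I ∧ algebraMap R T u = ∏ i ∈ I, a i := by
  classical
  let J : Finset (Fin n) := Finset.univ.filter fun i => φ (a i) ≠ 0
  let P := Finset.powersetCard J.card (Finset.univ : Finset (Fin n))
  have hJP : J ∈ P := by simp [P, Finset.mem_powersetCard]
  have key : ∀ I ∈ P, φ (∏ i ∈ I, a i) ≠ 0 → I = J := by
    intro I hI hne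
    rw [map_prod, Finset.prod_ne_zero_iff] at hne
    refine Finset.eq_of_subset_of_card_le ?_ (by simp [P, Finset.mem_powersetCard] at hI; omega)
    intro i hi
    simpa [J] using hne i hi
  let c : K := φ (∏ i ∈ J, a i)
  have hc : c ≠ 0 := by
    simp only [c, map_prod]
    rw [Finset.prod_ne_zero_iff]
    intro i hi
    simpa [J] using hi
  obtain ⟨F, hF, -, hFm⟩ := lifts_and_natDegree_eq_and_monic (lifts_compound a J.card h)
    (monic_prod_of_monic _ _ fun I _ => monic_X_sub_C _)
  let ψ : R →+* K := φ.comp (algebraMap R T)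
  have hunit : ∀ r : R, ψ r ≠ 0 → IsUnit r := by
    intro r hr
    by_contra hn
    exact hr (hφ r ((IsLocalRing.mem_maximalIdeal r).2 hn))
  have hunit' : ∀ r : R, ψ r = 0 → r ∈ IsLocalRing.maximalIdeal R := by
    intro r hr
    rw [IsLocalRing.mem_maximalIdeal]
    intro hu
    exact (hu.map ψ).ne_zero hr
  have hFK : F.map ψ = X ^ (P.card - 1) * (X - C c) := by
    rw [← Polynomial.map_map, hF, Polynomial.map_prod]
    change ∏ I ∈ P, _ = _
    rw [← Finset.prod_erase_mul _ _ hJP, Finset.prod_congr rfl (g := fun _ => X),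
      Finset.prod_const, Finset.card_erase_of_mem hJP]
    · rw [Polynomial.map_sub, map_X, map_C]
    · intro I hI
      rw [Finset.mem_erase] at hI
      have : φ (∏ i ∈ I, a i) = 0 := by
        by_contra hne
        exact hI.1 (key I hI.2 hne)
      rw [Polynomial.map_sub, map_X, map_C, this]; simp
  have hPpos : 0 < P.card := Finset.card_pos.2 ⟨J, hJP⟩
  obtain ⟨a₀, ha₀⟩ : ∃ a₀ : R, ψ a₀ = c := by
    refine ⟨- F.coeff (P.card - 1), ?_⟩
    rw [map_neg, ← coeff_map, hFK]
    have := coeff_X_pow_mul (X - C c) (P.card - 1) 0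
    rw [zero_add] at this
    rw [this]; simp
  obtain ⟨u, hu, hua⟩ := HenselianLocalRing.is_henselian F hFm a₀
    (by
      apply hunit'
      rw [← eval_map_apply, hFK, ha₀]; simp)
    (by
      apply hunit
      rw [← eval_map_apply, ← derivative_map, hFK, ha₀]
      simp [hc])
  have hψu : ψ u = c := by
    have := hφ _ hua
    change ψ (u - a₀) = 0 at this
    rw [map_sub, sub_eq_zero] at this
    rw [this, ha₀]
  have hroot : (F.map (algebraMap R T)).eval (algebraMap R T u) = 0 := by
    rw [eval_map_apply, hu.eq_zero, map_zero]
  rw [hF, eval_prod, Finset.prod_eq_zero_iff] at hroot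
  obtain ⟨I, hI, hI0⟩ := hroot
  simp only [eval_sub, eval_X, eval_C, sub_eq_zero] at hI0
  have hIJ : I = J := by
    apply key I hI
    rw [← hI0]
    change ψ u ≠ 0
    rwa [hψu]
  refine ⟨u, hunit u (by rwa [hψu]), I, ?_, hI0⟩
  rw [hIJ]
  simpa [J] using hi₀

theorem inv_integral_of_valuation_eq_one (R : Type) [CommRing R] [IsDomain R]
    [HenselianLocalRing R] (v : Valuation (FractionRing R) ℝ≥0)
    (hle : ∀ x : R, v (algebraMap R (FractionRing R) x) ≤ 1)
    (hlt : ∀ m ∈ IsLocalRing.maximalIdeal R, v (algebraMap R (FractionRing R) m) < 1)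
    (s : FractionRing R) (hs : s ∈ integralClosure R (FractionRing R)) (hv : v s = 1) :
    s ≠ 0 ∧ IsIntegral R s⁻¹ := by
  classical
  have hs0 : s ≠ 0 := by rintro rfl; simp at hv
  refine ⟨hs0, ?_⟩
  let D := FractionRing R
  let L := AlgebraicClosure D
  let V := v.valuationSubring
  let T := integralClosure V L
  let _ : Algebra R V := ((algebraMap R D).codRestrict V.toSubring hle).toAlgebra
  have : IsScalarTower R V D := IsScalarTower.of_algebraMap_eq fun x => rfl
  have : IsScalarTower R V L := IsScalarTower.of_algebraMap_eq fun x => by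
    rw [IsScalarTower.algebraMap_apply R D L]; rfl
  obtain ⟨f, hf, hfs⟩ := hs
  let fL := f.map (algebraMap R L)
  have hfL : fL.Monic := hf.map _
  have hspl : fL.Splits := IsAlgClosed.splits fL
  obtain ⟨Q, hQ, hQV⟩ := Ideal.exists_ideal_over_maximal_of_isIntegral (R := V) (S := T)
    (IsLocalRing.maximalIdeal V) (by
      apply IsLocalRing.le_maximalIdeal
      exact RingHom.ker_ne_top _)
  have hroot : fL.eval (algebraMap D L s) = 0 := by
    rw [Polynomial.eval_map, IsScalarTower.algebraMap_eq R D L, ← Polynomial.hom_eval₂, hfs, map_zero]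
  obtain ⟨l, hl⟩ : ∃ l : List L, (l : Multiset L) = fL.roots := ⟨_, fL.roots.coe_toList⟩
  let a : Fin l.length → L := fun i => l.get i
  have haR : ∀ i, IsIntegral R (a i) := by
    intro i
    refine ⟨f, hf, ?_⟩
    have : a i ∈ fL.roots := by rw [← hl]; simp [a]
    rw [← Polynomial.eval_map]
    exact (Polynomial.mem_roots hfL.ne_zero).1 this
  let b : Fin l.length → T := fun i => ⟨a i, (haR i).tower_top⟩
  have hprod : fL = ∏ i, (Polynomial.X - Polynomial.C (a i)) := by
    rw [hspl.eq_prod_roots_of_monic hfL, ← hl, Multiset.map_coe, Multiset.prod_coe,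
      ← List.prod_ofFn]
    congr 1
    apply List.ext_get <;> simp [a]
  obtain ⟨i₀, hi₀⟩ : ∃ i, a i = algebraMap D L s := by
    rw [hprod, Polynomial.eval_prod, Finset.prod_eq_zero_iff] at hroot
    obtain ⟨i, -, hi⟩ := hroot
    exact ⟨i, by
      rw [Polynomial.eval_sub, Polynomial.eval_X, Polynomial.eval_C, sub_eq_zero] at hi
      exact hi.symm⟩
  have hlift : (∏ i, (Polynomial.X - Polynomial.C (b i))) ∈
      Polynomial.lifts (algebraMap R T) := by
    rw [Polynomial.mem_lifts]
    refine ⟨f, ?_⟩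
    apply Polynomial.map_injective (algebraMap T L) Subtype.val_injective
    rw [Polynomial.map_map, ← IsScalarTower.algebraMap_eq R T L, Polynomial.map_prod]
    refine hprod.trans ?_
    refine Finset.prod_congr rfl fun i _ => ?_
    simp only [Polynomial.map_sub, Polynomial.map_X, Polynomial.map_C]
    rfl
  obtain ⟨u, hu, I, hI, hprodI⟩ := hensel_core (Ideal.Quotient.mk Q) (by
      intro m hm
      rw [Ideal.Quotient.eq_zero_iff_mem, IsScalarTower.algebraMap_apply R V T]
      change algebraMap R V m ∈ Q.comap (algebraMap V T)
      rw [hQV, Valuation.mem_maximalIdeal_iff]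
      exact hlt m hm) b hlift i₀ (by
      rw [Ne, Ideal.Quotient.eq_zero_iff_mem]
      have : b i₀ = algebraMap V T ⟨s, hv.le⟩ := Subtype.ext hi₀
      rw [this]
      change ¬ (_ ∈ Q.comap (algebraMap V T))
      rw [hQV, Valuation.mem_maximalIdeal_iff]
      simp [hv])
  obtain ⟨w, hw⟩ := hu.exists_left_inv
  have h1 : algebraMap R L u = ∏ i ∈ I, a i := by
    have := congrArg (algebraMap T L) hprodI
    rw [← IsScalarTower.algebraMap_apply, map_prod] at this
    exact this
  rw [← Finset.mul_prod_erase _ _ hI, hi₀] at h1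
  have h2 : algebraMap D L s⁻¹ = algebraMap R L w * ∏ i ∈ I.erase i₀, a i := by
    rw [map_inv₀]
    apply inv_eq_of_mul_eq_one_right
    rw [mul_left_comm, ← h1, ← map_mul, hw, map_one]
  rw [← isIntegral_algebraMap_iff (algebraMap D L).injective, h2]
  exact isIntegral_algebraMap.mul (IsIntegral.prod _ fun i _ => haR i)
end

section
/- Let p be a prime, let R be a commutative Noetherian local pro-p domain, and let a ∈ R with a ≠ 0. Then there exist a commutative ring S that is a Noetherian local integral domain, integrally closed in its fraction field, Hausdorff and complete with respect to the adic topology of its maximal ideal, with finite residue field of characteristic p, and with Krull dimension equal to that of R, together with an injective ring homomorphism φ : R → S and a natural number k such that the image of (maximalIdeal R)^k under φ is contained in the principal ideal of S generated by φ(a). -/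
/-- The data asserted to exist in Statement 3: a commutative Noetherian local pro-`p`
domain `S`, integrally closed in its fraction field, of the same Krull dimension as `R`,
together with an injective ring homomorphism `φ : R → S` and `k : ℕ` such that
`φ((maximalIdeal R)^k) ⊆ φ(a)·S`. -/
structure EmbeddingIntoIntegrallyClosedProPDomain (p : ℕ) (R : Type) [CommRing R]
    [IsLocalRing R] (a : R) : Type 1 where
  S : Type
  [commRing : CommRing S]
  [isDomain : IsDomain S]
  [isNoetherianRing : IsNoetherianRing S]
  [isLocalRing : IsLocalRing S]
  [isAdicComplete : IsAdicComplete (IsLocalRing.maximalIdeal S) S]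
  [finiteResidueField : Finite (IsLocalRing.ResidueField S)]
  [charPResidueField : CharP (IsLocalRing.ResidueField S) p]
  [isIntegrallyClosed : IsIntegrallyClosed S]
  dim_eq : ringKrullDim S = ringKrullDim R
  φ : R →+* S
  injective : Function.Injective φ
  k : ℕ
  map_pow_le : Ideal.map φ (IsLocalRing.maximalIdeal R ^ k) ≤ Ideal.span {φ a}

section PowerSeriesPart
open PowerSeries




/-- coefficients of almost integral power series -/
theorem aux_coeff_almost {A K : Type*} [CommRing A] [IsDomain A] [Field K]
    [Algebra A K] [IsFractionRing A K] (q : K⟦X⟧) (hq : IsAlmostIntegral A⟦X⟧ q) :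
    ∀ i, (∀ j < i, coeff j q = 0) → IsAlmostIntegral A (coeff i q) := by
  intro i hi
  obtain ⟨h, hh, hn⟩ := hq
  have hh0 : h ≠ 0 := nonZeroDivisors.ne_zero hh
  obtain ⟨q', rfl⟩ : X ^ i ∣ q := X_pow_dvd_iff.2 hi
  have hex : ∃ m, coeff m h ≠ 0 := by
    by_contra hc
    push Not at hc
    exact hh0 (by ext m; simpa using hc m)
  classical
  obtain ⟨m, hm, hm2⟩ : ∃ m, coeff m h ≠ 0 ∧ ∀ j < m, coeff j h = 0 :=
    ⟨Nat.find hex, Nat.find_spec hex, fun j hj => by simpa using Nat.find_min hex hj⟩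
  obtain ⟨h', rfl⟩ : X ^ m ∣ h := X_pow_dvd_iff.2 hm2
  refine ⟨coeff m (X ^ m * h'), mem_nonZeroDivisors_of_ne_zero hm, fun n => ?_⟩
  obtain ⟨r, hr⟩ := hn n
  refine ⟨coeff (m + i * n) r, ?_⟩
  have e1 : (algebraMap A⟦X⟧ K⟦X⟧) X = X := by
    change PowerSeries.map (algebraMap A K) X = X
    simp
  rw [Algebra.smul_def, map_mul, map_pow, mul_pow, ← pow_mul, e1, mul_mul_mul_comm, ← pow_add] at hr
  have h1 := congrArg (coeff (m + i * n)) hr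
  have e2 : coeff (m + i * n) ((algebraMap A⟦X⟧ K⟦X⟧) r) = algebraMap A K (coeff (m + i * n) r) := by
    change coeff _ (PowerSeries.map (algebraMap A K) r) = _
    simp
  have e3 : constantCoeff ((algebraMap A⟦X⟧ K⟦X⟧) h') = algebraMap A K (constantCoeff h') := by
    rw [← coeff_zero_eq_constantCoeff_apply, ← coeff_zero_eq_constantCoeff_apply]
    change coeff 0 (PowerSeries.map (algebraMap A K) h') = _
    rw [PowerSeries.coeff_map]
  rw [e2, coeff_X_pow_mul'] at h1
  rw [h1, coeff_X_pow_mul', coeff_X_pow_mul', Algebra.smul_def]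
  simp [e3]

theorem aux_powerSeries_intClosed (A : Type*) [CommRing A] [IsDomain A] [IsNoetherianRing A]
    [IsIntegrallyClosed A] : IsIntegrallyClosed A⟦X⟧ := by
  let K := FractionRing A
  have hinj : Function.Injective (algebraMap A⟦X⟧ K⟦X⟧) :=
    PowerSeries.map_injective _ (IsFractionRing.injective A K)
  -- almost integral power series over `K` have coefficients in `A`
  have key : ∀ q : K⟦X⟧, IsAlmostIntegral A⟦X⟧ q → ∀ i, coeff i q ∈ (algebraMap A K).range := by
    intro q hq i
    induction i using Nat.strong_induction_on with
    | _ i ih =>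
      have : ∃ t : A⟦X⟧, ∀ j < i, coeff j (algebraMap A⟦X⟧ K⟦X⟧ t) = coeff j q := by
        choose! c hc using ih
        refine ⟨PowerSeries.mk c, fun j hj => ?_⟩
        change coeff j (PowerSeries.map (algebraMap A K) _) = _
        simp [hc j hj]
      obtain ⟨t, ht⟩ := this
      have h1 : IsAlmostIntegral A⟦X⟧ (q - algebraMap A⟦X⟧ K⟦X⟧ t) :=
        (completeIntegralClosure A⟦X⟧ K⟦X⟧).sub_mem hq
          ((completeIntegralClosure A⟦X⟧ K⟦X⟧).algebraMap_mem t)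
      have h2 := aux_coeff_almost (A := A) _ h1 i (fun j hj => by simp [ht j hj])
      have h3 := h2.isIntegral
      obtain ⟨y, hy⟩ := (IsIntegrallyClosed.isIntegral_iff (R := A) (K := K)).1 h3
      refine ⟨y + coeff i t, ?_⟩
      rw [map_add, hy, map_sub]
      have : coeff i ((algebraMap A⟦X⟧ K⟦X⟧) t) = algebraMap A K (coeff i t) := by
        change coeff _ (PowerSeries.map (algebraMap A K) t) = _
        simp
      rw [this]; ring
  rw [isIntegrallyClosed_iff (FractionRing A⟦X⟧)]
  intro y hy
  obtain ⟨f, g, hg, rfl⟩ := IsFractionRing.div_surjective (A := A⟦X⟧) y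
  have hg0 : g ≠ 0 := nonZeroDivisors.ne_zero hg
  let L := FractionRing K⟦X⟧
  let w : A⟦X⟧ →+* L := (algebraMap K⟦X⟧ L).comp (algebraMap A⟦X⟧ K⟦X⟧)
  have hw : Function.Injective w := (IsFractionRing.injective K⟦X⟧ L).comp hinj
  let W : FractionRing A⟦X⟧ →+* L := IsFractionRing.lift hw
  have hWa : ∀ x, W (algebraMap _ _ x) = w x := fun x => IsFractionRing.lift_algebraMap hw x
  obtain ⟨P, hP, hP2⟩ := hy
  have hWi : (P.map (algebraMap A⟦X⟧ K⟦X⟧)).eval₂ (algebraMap K⟦X⟧ L) (W (algebraMap _ _ f / algebraMap _ _ g)) = 0 := by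
    rw [Polynomial.eval₂_map]
    have := congrArg W hP2
    rw [Polynomial.hom_eval₂, map_zero] at this
    rw [← this]
    congr 1
    ext x
    simp [hWa, w]
  obtain ⟨q, hq⟩ := (IsIntegrallyClosed.isIntegral_iff (R := K⟦X⟧) (K := L)).1
    ⟨_, hP.map _, hWi⟩
  have hq1 : algebraMap A⟦X⟧ K⟦X⟧ g * q = algebraMap A⟦X⟧ K⟦X⟧ f := by
    apply IsFractionRing.injective K⟦X⟧ L
    rw [map_mul, hq, map_div₀, hWa, hWa]
    have : w g ≠ 0 := by rw [Ne, map_eq_zero_iff _ hw]; exact hg0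
    change w g * (w f / w g) = w f
    rw [mul_div_cancel₀ _ this]
  have hqi : IsIntegral A⟦X⟧ q := by
    refine ⟨P, hP, ?_⟩
    apply IsFractionRing.injective K⟦X⟧ L
    rw [Polynomial.hom_eval₂, hq, map_zero, ← hWi, Polynomial.eval₂_map]
  have hqa := hqi.isAlmostIntegral_of_exists_smul_mem_range
    ⟨g, hg, ⟨f, by rw [Algebra.smul_def, hq1]⟩⟩
  choose c hc using key q hqa
  refine ⟨PowerSeries.mk c, ?_⟩
  have hqc : algebraMap A⟦X⟧ K⟦X⟧ (PowerSeries.mk c) = q := by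
    ext i
    change coeff i (PowerSeries.map (algebraMap A K) _) = _
    simp [hc i]
  rw [← hqc, ← map_mul] at hq1
  have := hinj hq1
  rw [← this, map_mul, mul_div_cancel_left₀]
  rw [Ne, IsFractionRing.to_map_eq_zero_iff]
  exact hg0



theorem aux_mem_max {A : Type*} [CommRing A] [IsLocalRing A] (f : A⟦X⟧) :
    f ∈ IsLocalRing.maximalIdeal A⟦X⟧ ↔ constantCoeff f ∈ IsLocalRing.maximalIdeal A := by
  rw [IsLocalRing.mem_maximalIdeal, IsLocalRing.mem_maximalIdeal, mem_nonunits_iff,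
    mem_nonunits_iff, PowerSeries.isUnit_iff_constantCoeff]

theorem aux_mem_max_pow {A : Type*} [CommRing A] [IsLocalRing A] (k : ℕ) (f : A⟦X⟧) :
    f ∈ IsLocalRing.maximalIdeal A⟦X⟧ ^ k ↔
      ∀ i, coeff i f ∈ IsLocalRing.maximalIdeal A ^ (k - i) := by
  constructor
  · intro hf
    induction k generalizing f with
    | zero => intro i; simp
    | succ k ih =>
      rw [pow_succ] at hf
      refine Submodule.mul_induction_on hf ?_ ?_
      · intro a ha b hb i
        rw [coeff_mul]
        refine Ideal.sum_mem _ fun x hx => ?_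
        have hx' := Finset.HasAntidiagonal.mem_antidiagonal.1 hx
        have h1 : coeff x.2 b ∈ IsLocalRing.maximalIdeal A ^ (1 - x.2) := by
          rcases Nat.eq_zero_or_pos x.2 with h | h
          · rw [h]; simpa using (aux_mem_max b).1 hb
          · rw [Nat.sub_eq_zero_of_le h]; simp
        have h2 := Ideal.mul_mem_mul (ih a ha x.1) h1
        rw [← pow_add] at h2
        exact Ideal.pow_le_pow_right (by omega) h2
      · intro a b ha hb i
        rw [map_add]
        exact Ideal.add_mem _ (ha i) (hb i)
  · intro h
    rw [eq_X_pow_mul_shift_add_trunc k f]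
    have hX : (X : A⟦X⟧) ∈ IsLocalRing.maximalIdeal A⟦X⟧ := by
      rw [aux_mem_max]; simp
    refine Ideal.add_mem _ (Ideal.mul_mem_right _ _ (Ideal.pow_mem_pow hX k)) ?_
    have ht : trunc k f = ∑ i ∈ Finset.range k, Polynomial.C (coeff i f) * Polynomial.X ^ i := by
      ext j
      simp [coeff_trunc,  Polynomial.coeff_C_mul, Polynomial.coeff_X_pow]
    rw [ht, ← Polynomial.coeToPowerSeries.ringHom_apply, map_sum]
    refine Ideal.sum_mem _ fun i hi => ?_
    have hi' : i < k := by simpa using hi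
    have hC : Ideal.map (C : A →+* A⟦X⟧) (IsLocalRing.maximalIdeal A) ≤
        IsLocalRing.maximalIdeal A⟦X⟧ := by
      rw [Ideal.map_le_iff_le_comap]
      intro a ha
      rw [Ideal.mem_comap, aux_mem_max]
      simpa using ha
    have h3 : (C (coeff i f) : A⟦X⟧) ∈ IsLocalRing.maximalIdeal A⟦X⟧ ^ (k - i) := by
      have := Ideal.mem_map_of_mem (C : A →+* A⟦X⟧) (h i)
      rw [Ideal.map_pow] at this
      exact Ideal.pow_right_mono hC _ this
    have h4 := Ideal.mul_mem_mul h3 (Ideal.pow_mem_pow hX i)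
    rw [← pow_add, Nat.sub_add_cancel hi'.le] at h4
    simpa [Polynomial.coeToPowerSeries.ringHom_apply] using h4

theorem aux_complete_iff {A : Type*} [CommRing A] (I : Ideal A)
    (h1 : ∀ x, (∀ n, x ∈ I ^ n) → x = 0)
    (h2 : ∀ f : ℕ → A, (∀ m n, m ≤ n → f m - f n ∈ I ^ m) → ∃ L, ∀ n, f n - L ∈ I ^ n) :
    IsAdicComplete I A where
  haus' x hx := h1 x fun n => by
    have := hx n
    rwa [SModEq.zero, smul_eq_mul, Ideal.mul_top] at this
  prec' f hf := by
    obtain ⟨L, hL⟩ := h2 f fun m n hmn => by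
      have := hf hmn
      rwa [SModEq.sub_mem, smul_eq_mul, Ideal.mul_top] at this
    exact ⟨L, fun n => by rw [SModEq.sub_mem, smul_eq_mul, Ideal.mul_top]; exact hL n⟩

theorem aux_complete_lim {A : Type*} [CommRing A] (I : Ideal A) [IsAdicComplete I A]
    (f : ℕ → A) (h : ∀ m n, m ≤ n → f m - f n ∈ I ^ m) : ∃ L, ∀ n, f n - L ∈ I ^ n := by
  obtain ⟨L, hL⟩ := IsPrecomplete.prec' (I := I) f fun {m n} hmn => by
    rw [SModEq.sub_mem, smul_eq_mul, Ideal.mul_top]; exact h m n hmn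
  refine ⟨L, fun n => ?_⟩
  have := hL n
  rwa [SModEq.sub_mem, smul_eq_mul, Ideal.mul_top] at this

theorem aux_haus {A : Type*} [CommRing A] (I : Ideal A) [IsHausdorff I A]
    (x : A) (h : ∀ n, x ∈ I ^ n) : x = 0 :=
  IsHausdorff.haus' (I := I) x fun n => by
    rw [SModEq.zero, smul_eq_mul, Ideal.mul_top]; exact h n

theorem aux_powerSeries_complete (A : Type*) [CommRing A] [IsLocalRing A]
    [IsAdicComplete (IsLocalRing.maximalIdeal A) A] :
    IsAdicComplete (IsLocalRing.maximalIdeal A⟦X⟧) A⟦X⟧ := by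
  apply aux_complete_iff
  · intro x hx
    ext i
    refine aux_haus (IsLocalRing.maximalIdeal A) _ fun n => ?_
    have := (aux_mem_max_pow (n + i) x).1 (hx _) i
    simpa using this
  · intro f hf
    have h1 : ∀ i, ∃ L, ∀ n, coeff i (f (n + i)) - L ∈ IsLocalRing.maximalIdeal A ^ n := by
      intro i
      refine aux_complete_lim _ (fun n => coeff i (f (n + i))) fun m n hmn => ?_
      have := (aux_mem_max_pow _ _).1 (hf (m + i) (n + i) (by omega)) i
      simpa using this
    choose L hL using h1
    refine ⟨PowerSeries.mk L, fun n => (aux_mem_max_pow _ _).2 fun i => ?_⟩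
    rw [map_sub, coeff_mk]
    have h2 := (aux_mem_max_pow _ _).1 (hf n (n + i) (by omega)) i
    have h3 := hL i n
    have h4 := Ideal.add_mem _ h2 (Ideal.pow_le_pow_right (Nat.sub_le n i) h3)
    rw [map_sub] at h4
    convert h4 using 1
    ring

theorem aux_eval_exists {A R : Type*} [CommRing A] [CommRing R] (φ : A →+* R) (J : Ideal R)
    [IsAdicComplete J R] (r : R) (hr : r ∈ J) :
    ∃ ψ : A⟦X⟧ →+* R, (∀ a, ψ (C a) = φ a) ∧ ψ X = r := by
  have key : ∀ (n : ℕ) (P : Polynomial A), (∀ m < n, P.coeff m = 0) →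
      P.eval₂ φ r ∈ J ^ n := by
    intro n P hP
    obtain ⟨Q, rfl⟩ := Polynomial.X_pow_dvd_iff.2 hP
    rw [Polynomial.eval₂_mul, Polynomial.eval₂_X_pow]
    exact Ideal.mul_mem_right _ _ (Ideal.pow_mem_pow hr n)
  have key2 : ∀ (n : ℕ) (P Q : Polynomial A), (∀ m < n, P.coeff m = Q.coeff m) →
      Ideal.Quotient.mk (J ^ n) (P.eval₂ φ r) = Ideal.Quotient.mk (J ^ n) (Q.eval₂ φ r) := by
    intro n P Q h
    rw [Ideal.Quotient.eq, ← Polynomial.eval₂_sub]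
    exact key n _ fun m hm => by simp [h m hm]
  let f : (n : ℕ) → A⟦X⟧ →+* R ⧸ J ^ n := fun n =>
    { toFun := fun g => Ideal.Quotient.mk (J ^ n) ((trunc n g).eval₂ φ r)
      map_one' := by
        rw [← map_one (Ideal.Quotient.mk (J ^ n)), ← Polynomial.eval₂_one φ r]
        refine key2 n _ _ fun m hm => ?_
        rw [coeff_trunc, if_pos hm, coeff_one, Polynomial.coeff_one]
      map_mul' := fun a b => by
        rw [← map_mul, ← Polynomial.eval₂_mul]
        refine key2 n _ _ fun m hm => ?_
        rw [coeff_trunc, if_pos hm, coeff_mul, Polynomial.coeff_mul]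
        refine Finset.sum_congr rfl fun x hx => ?_
        have := Finset.HasAntidiagonal.mem_antidiagonal.1 hx
        rw [coeff_trunc, coeff_trunc, if_pos (by omega), if_pos (by omega)]
      map_zero' := by simp
      map_add' := fun a b => by simp }
  have hf : ∀ {m n : ℕ} (hle : m ≤ n), (Ideal.Quotient.factorPow J hle).comp (f n) = f m := by
    intro m n hle
    ext g
    change Ideal.Quotient.mk (J ^ m) ((trunc n g).eval₂ φ r) = _
    refine key2 m _ _ fun i hi => ?_
    rw [coeff_trunc, coeff_trunc, if_pos (by omega), if_pos (by omega)]
  refine ⟨IsAdicComplete.liftRingHom J f hf, fun a => ?_, ?_⟩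
  · rw [← sub_eq_zero]
    refine aux_haus J _ fun n => ?_
    rw [← Ideal.Quotient.eq, IsAdicComplete.mk_liftRingHom]
    change Ideal.Quotient.mk (J ^ n) ((trunc n _).eval₂ φ r) = _
    rw [← Polynomial.eval₂_C φ r]
    refine key2 n _ _ fun i hi => ?_
    rw [coeff_trunc, if_pos hi, coeff_C, Polynomial.coeff_C]
  · rw [← sub_eq_zero]
    refine aux_haus J _ fun n => ?_
    rw [← Ideal.Quotient.eq, IsAdicComplete.mk_liftRingHom]
    change Ideal.Quotient.mk (J ^ n) ((trunc n _).eval₂ φ r) = _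
    conv_rhs => rw [← Polynomial.eval₂_X φ r]
    refine key2 n _ _ fun i hi => ?_
    rw [coeff_trunc, if_pos hi, coeff_X, Polynomial.coeff_X]
    simp [eq_comm]

theorem aux_eval_uniq {A R : Type*} [CommRing A] [CommRing R] (F G : A⟦X⟧ →+* R) (J : Ideal R)
    (hC : ∀ a, F (C a) = G (C a)) (hX : F X = G X) (hJ : F X ∈ J) (n : ℕ) (f : A⟦X⟧) :
    F f - G f ∈ J ^ n := by
  have hp : ∀ P : Polynomial A, F (P : A⟦X⟧) = G (P : A⟦X⟧) := by
    intro P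
    induction P using Polynomial.induction_on with
    | C a => simpa using hC a
    | add p q hp hq => simp [hp, hq]
    | monomial n a _ => simp [hC, hX]
  rw [eq_X_pow_mul_shift_add_trunc n f, map_add, map_add, hp, add_sub_add_right_eq_sub,
    map_mul, map_mul, map_pow, map_pow, ← hX, ← mul_sub]
  exact Ideal.mul_mem_right _ _ (Ideal.pow_mem_pow hJ n)

/-- Complete Noetherian normal local domain with finite residue field and given dimension. -/
structure NiceRing (A : Type) [CommRing A] (d : ℕ) : Prop where
  dom : IsDomain A
  loc : IsLocalRing A
  noe : IsNoetherianRing A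
  compl : IsAdicComplete (IsLocalRing.maximalIdeal A) A
  fin : Finite (IsLocalRing.ResidueField A)
  ic : IsIntegrallyClosed A
  dim : ringKrullDim A = d

theorem NiceRing.powerSeries {A : Type} [CommRing A] {d : ℕ} (h : NiceRing A d) :
    NiceRing A⟦X⟧ (d + 1) := by
  obtain ⟨_, _, _, _, _, _, hd⟩ := h
  refine ⟨inferInstance, inferInstance, inferInstance, aux_powerSeries_complete A, ?_,
    aux_powerSeries_intClosed A, ?_⟩
  · let f : IsLocalRing.ResidueField A →+* IsLocalRing.ResidueField A⟦X⟧ :=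
      Ideal.Quotient.lift (IsLocalRing.maximalIdeal A)
        ((IsLocalRing.residue A⟦X⟧).comp C) (fun a ha => by
          rw [RingHom.comp_apply, IsLocalRing.residue_eq_zero_iff, aux_mem_max]
          simpa using ha)
    refine Finite.of_surjective f fun y => ?_
    obtain ⟨g, rfl⟩ := IsLocalRing.residue_surjective y
    refine ⟨IsLocalRing.residue A (constantCoeff g), ?_⟩
    change IsLocalRing.residue A⟦X⟧ (C (constantCoeff g)) = _
    rw [← sub_eq_zero, ← map_sub, IsLocalRing.residue_eq_zero_iff, aux_mem_max]
    simp
  · have h1 : (X : A⟦X⟧) ∈ IsLocalRing.maximalIdeal A⟦X⟧ := by rw [aux_mem_max]; simp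
    have h2 := ringKrullDim_quotient_span_singleton_succ_eq_ringKrullDim_of_mem_nonZeroDivisors
      (mem_nonZeroDivisors_of_ne_zero (X_ne_zero : (X : A⟦X⟧) ≠ 0)) h1
    have hs : Function.Surjective (constantCoeff : A⟦X⟧ →+* A) := fun a => ⟨C a, by simp⟩
    have hk : Ideal.span {(X : A⟦X⟧)} = RingHom.ker (constantCoeff : A⟦X⟧ →+* A) := by
      ext g
      rw [Ideal.mem_span_singleton, X_dvd_iff, RingHom.mem_ker]
    rw [← h2, hk, ringKrullDim_eq_of_ringEquiv (RingHom.quotientKerEquivOfSurjective hs), hd]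
    norm_cast

/-- the universal property used for the tower -/
def EvalProp (Λ A : Type) [CommRing Λ] [CommRing A] (c : Λ →+* A) (n : ℕ) : Prop :=
  ∀ (R : Type) [CommRing R] [IsLocalRing R] [IsAdicComplete (IsLocalRing.maximalIdeal R) R]
    (l : Λ →+* R) (r : Fin n → R), (∀ i, r i ∈ IsLocalRing.maximalIdeal R) →
    ∃ ψ : A →+* R, ψ.comp c = l ∧ ∀ i, ∃ x, ¬ IsUnit x ∧ ψ x = r i

/-- the specialisation property of the tower -/
def SpecProp (Λ A : Type) [CommRing Λ] [CommRing A] (ϖ : Λ) (c : Λ →+* A) (n : ℕ) : Prop :=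
  ∀ D : A, D ≠ 0 → ∃ ev : A →+* Λ, (∀ x, ev (c x) = x) ∧ ev D ≠ 0 ∧
    ∀ (O : Type) [CommRing O] (ι : Λ →+* O) (N : ℕ), NiceRing O 1 → Function.Injective ι →
      ¬ IsUnit (ι ϖ) → 1 ≤ N →
      ∃ (B : Type) (_ : CommRing B) (γ : O →+* B) (σ : A →+* B), NiceRing B (n + 1) ∧
        Function.Injective γ ∧ ¬ IsUnit (γ (ι ϖ)) ∧ Function.Injective σ ∧
        ∀ g, γ (ι ϖ) ^ N ∣ σ g - γ (ι (ev g))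

theorem EvalProp.step {Λ A : Type} [CommRing Λ] [CommRing A] {c : Λ →+* A} {n : ℕ}
    (h : EvalProp Λ A c n) : EvalProp Λ A⟦X⟧ (C.comp c) (n + 1) := by
  intro R _ _ _ l r hr
  obtain ⟨ψ0, h1, h2⟩ := h R l (fun i => r i.castSucc) (fun i => hr _)
  obtain ⟨ψ, h3, h4⟩ := aux_eval_exists ψ0 (IsLocalRing.maximalIdeal R) (r (Fin.last n)) (hr _)
  refine ⟨ψ, ?_, fun i => ?_⟩
  · ext x
    simp [h3, ← h1]
  · induction i using Fin.lastCases with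
    | last =>
      refine ⟨X, fun hu => ?_, h4⟩
      have := hr (Fin.last n)
      rw [← h4, IsLocalRing.mem_maximalIdeal] at this
      exact this (hu.map ψ)
    | cast i =>
      obtain ⟨x, hx, hx2⟩ := h2 i
      refine ⟨C x, fun hu => hx ?_, by rw [h3, hx2]⟩
      simpa using hu.map (constantCoeff : A⟦X⟧ →+* A)

theorem SpecProp.step {Λ A : Type} [CommRing Λ] [IsDomain Λ] [CommRing A] {ϖ : Λ} {c : Λ →+* A}
    {n : ℕ} (hϖ : ϖ ≠ 0) (hA : NiceRing A (n + 1)) (hc : Function.Injective c)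
    (hu : ¬ IsUnit (c ϖ))
    (h : SpecProp Λ A ϖ c n) : SpecProp Λ A⟦X⟧ ϖ (C.comp c) (n + 1) := by
  obtain ⟨_, _, _, _, _, _, hd⟩ := hA
  intro D hD
  -- leading coefficient
  obtain ⟨m, D', hm, hDm⟩ : ∃ m D', constantCoeff D' ≠ 0 ∧ D = X ^ m * D' := by
    have hex : ∃ m, coeff m D ≠ 0 := by
      by_contra hc
      push Not at hc
      exact hD (by ext m; simpa using hc m)
    classical
    obtain ⟨m, hm, hm2⟩ : ∃ m, coeff m D ≠ 0 ∧ ∀ j < m, coeff j D = 0 :=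
      ⟨Nat.find hex, Nat.find_spec hex, fun j hj => by simpa using Nat.find_min hex hj⟩
    obtain ⟨h', rfl⟩ : X ^ m ∣ D := X_pow_dvd_iff.2 hm2
    refine ⟨m, h', ?_, rfl⟩
    rw [coeff_X_pow_mul'] at hm
    simpa using hm
  have hmem : c ϖ ∈ IsLocalRing.maximalIdeal A := hu
  obtain ⟨j0, hj0⟩ : ∃ j, constantCoeff D' ∉ IsLocalRing.maximalIdeal A ^ j := by
    by_contra hcon
    push Not at hcon
    exact hm (aux_haus _ _ hcon)
  obtain ⟨j, hj1, hj⟩ : ∃ j, 1 ≤ j ∧ constantCoeff D' ∉ IsLocalRing.maximalIdeal A ^ j :=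
    ⟨j0 + 1, by omega, fun hh => hj0 (Ideal.pow_le_pow_right (by omega) hh)⟩
  have hej : c ϖ ^ j ∈ IsLocalRing.maximalIdeal A ^ j := Ideal.pow_mem_pow hmem j
  have he : c ϖ ^ j ∈ IsLocalRing.maximalIdeal A := by
    simpa using Ideal.pow_le_pow_right hj1 hej
  obtain ⟨ψ, hψC, hψX⟩ := aux_eval_exists (RingHom.id A) (IsLocalRing.maximalIdeal A) (c ϖ ^ j) he
  have hcϖ : c ϖ ≠ 0 := by rwa [Ne, map_eq_zero_iff _ hc]
  have hψD : ψ D ≠ 0 := by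
    rw [hDm, map_mul, map_pow, hψX]
    refine mul_ne_zero (pow_ne_zero _ (pow_ne_zero _ hcϖ)) fun h0 => hj ?_
    obtain ⟨E, hE⟩ : X ∣ D' - C (constantCoeff D') := X_dvd_iff.2 (by simp)
    have := congrArg ψ hE
    rw [map_sub, h0, hψC, map_mul, hψX, RingHom.id_apply, zero_sub] at this
    rw [← neg_mem_iff, this]
    exact Ideal.mul_mem_right _ _ hej
  obtain ⟨ev0, hev0, hevD, hO⟩ := h _ hψD
  refine ⟨ev0.comp ψ, fun x => by simp [hψC, hev0], hevD, ?_⟩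
  intro O _ ι N hOn hι hιu hN
  obtain ⟨B, _, γ, σ, hB, hγ, hγu, hσ, hcong⟩ := hO O ι N hOn hι hιu hN
  refine ⟨B⟦X⟧, inferInstance, C.comp γ, ?_⟩
  have hB' := hB.powerSeries
  have hB2 := hB'
  obtain ⟨_, _, _, _, _, _, _⟩ := hB
  obtain ⟨_, _, _, _, _, _, _⟩ := hB'
  set q := γ (ι ϖ) with hq
  have hq0 : q ≠ 0 := by
    rw [hq, Ne, map_eq_zero_iff _ hγ, map_eq_zero_iff _ hι]; exact hϖ
  have hqm : q ∈ IsLocalRing.maximalIdeal B := hγu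
  have hqj : q ^ j ∈ IsLocalRing.maximalIdeal B := Ideal.pow_mem_of_mem _ hqm _ hj1
  obtain ⟨sh, hshC, hshX⟩ := aux_eval_exists (C : B →+* B⟦X⟧) (IsLocalRing.maximalIdeal B⟦X⟧)
    (X + C (q ^ j)) (by rw [aux_mem_max]; simpa using hqj)
  obtain ⟨sh', hshC', hshX'⟩ := aux_eval_exists (C : B →+* B⟦X⟧) (IsLocalRing.maximalIdeal B⟦X⟧)
    (X - C (q ^ j)) (by rw [aux_mem_max]; simpa using hqj)
  have hshinj : Function.Injective sh := by
    have : ∀ g, sh' (sh g) = g := by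
      intro g
      rw [← sub_eq_zero]
      refine aux_haus (IsLocalRing.maximalIdeal B⟦X⟧) _ fun n => ?_
      refine aux_eval_uniq (sh'.comp sh) (RingHom.id _) _ ?_ ?_ ?_ n g
      · intro a; simp only [RingHom.comp_apply, hshC, hshC', RingHom.id_apply]
      · simp only [RingHom.comp_apply, hshX, map_add, hshX', hshC', RingHom.id_apply]
        ring
      · have : (sh'.comp sh) X = X := by
          simp only [RingHom.comp_apply, hshX, map_add, hshX', hshC']
          ring
        rw [this, aux_mem_max]; simp
    exact Function.LeftInverse.injective this
  have hrinj : Function.Injective (rescale (q ^ N) : B⟦X⟧ →+* B⟦X⟧) := by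
    intro f g hfg
    ext i
    have := congrArg (coeff i) hfg
    rw [coeff_rescale, coeff_rescale] at this
    exact mul_left_cancel₀ (pow_ne_zero _ (pow_ne_zero _ hq0)) this
  have hrC : ∀ a : B, rescale (q ^ N) (C a) = C a := by
    intro a
    ext i
    rw [coeff_rescale, coeff_C]
    split_ifs with h <;> simp [h]
  have hrX : rescale (q ^ N) (X : B⟦X⟧) = C (q ^ N) * X := by
    ext i
    rw [coeff_rescale, coeff_X, coeff_C_mul, coeff_X]
    split_ifs with h <;> simp [h]
  refine ⟨(rescale (q ^ N)).comp (sh.comp (PowerSeries.map σ)), hB2,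
    (C_injective).comp hγ, ?_, ?_, ?_⟩
  · intro hh
    exact hγu (by simpa using hh.map (constantCoeff : B⟦X⟧ →+* B))
  · exact hrinj.comp (hshinj.comp (PowerSeries.map_injective _ hσ))
  · intro g
    change C q ^ N ∣ _
    rw [← Ideal.mem_span_singleton]
    let I := Ideal.span {(C q : B⟦X⟧) ^ N}
    have hI : Ideal.Quotient.mk I (C q) ^ N = 0 := by
      rw [← map_pow, Ideal.Quotient.eq_zero_iff_mem]
      exact Ideal.mem_span_singleton_self _
    let F : A⟦X⟧ →+* B⟦X⟧ ⧸ I :=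
      (Ideal.Quotient.mk I).comp ((rescale (q ^ N)).comp (sh.comp (PowerSeries.map σ)))
    let G : A⟦X⟧ →+* B⟦X⟧ ⧸ I :=
      (Ideal.Quotient.mk I).comp ((C.comp γ).comp (ι.comp (ev0.comp ψ)))
    have hFX : F X = Ideal.Quotient.mk I (C q) ^ j := by
      simp only [F, RingHom.comp_apply, PowerSeries.map_X, hshX, map_add, hrX, hrC, map_mul, map_pow,
        hI, zero_mul, zero_add]
    have hGX : G X = Ideal.Quotient.mk I (C q) ^ j := by
      simp only [G, RingHom.comp_apply, hψX, map_pow, hev0, hq]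
    have := aux_eval_uniq F G (Ideal.span {Ideal.Quotient.mk I (C q)}) ?_ ?_ ?_ N g
    · rw [Ideal.span_singleton_pow, hI, Ideal.span_singleton_zero, Ideal.mem_bot] at this
      rw [← Ideal.Quotient.eq_zero_iff_mem, map_sub]
      exact this
    · intro a
      simp only [F, G, RingHom.comp_apply, PowerSeries.map_C, hshC, hrC, hψC, RingHom.id_apply]
      rw [Ideal.Quotient.eq, ← map_sub, Ideal.mem_span_singleton, ← map_pow]
      exact map_dvd _ (hcong a)
    · rw [hFX, hGX]
    · rw [hFX]
      exact Ideal.pow_mem_of_mem _ (Ideal.mem_span_singleton_self _) _ hj1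

theorem tower_exists {Λ : Type} [CommRing Λ] (hΛ : NiceRing Λ 1) (ϖ : Λ) (hϖ : ϖ ≠ 0)
    (hu : ¬ IsUnit ϖ) (n : ℕ) : ∃ (A : Type) (_ : CommRing A) (c : Λ →+* A),
      NiceRing A (n + 1) ∧ Function.Injective c ∧ ¬ IsUnit (c ϖ) ∧ EvalProp Λ A c n ∧
      SpecProp Λ A ϖ c n := by
  induction n with
  | zero =>
    refine ⟨Λ, inferInstance, RingHom.id Λ, hΛ, Function.injective_id, hu, ?_, ?_⟩
    · intro R _ _ _ l r hr
      exact ⟨l, by simp, fun i => i.elim0⟩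
    · intro D hD
      refine ⟨RingHom.id Λ, fun _ => rfl, hD, ?_⟩
      intro O _ ι N hO hι hιu hN
      exact ⟨O, inferInstance, RingHom.id O, ι, hO, Function.injective_id, hιu, hι, by simp⟩
  | succ n ih =>
    obtain ⟨A, _, c, hA, hc, hcu, hE, hS⟩ := ih
    have := hΛ.dom
    refine ⟨A⟦X⟧, inferInstance, C.comp c, hA.powerSeries, C_injective.comp hc, fun hh => ?_,
      hE.step, hS.step hϖ hA hc hcu⟩
    exact hcu (by simpa using hh.map (constantCoeff : A⟦X⟧ →+* A))

end PowerSeriesPart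


section hensel
open Polynomial Ring

theorem aux_hensel {R : Type*} [CommRing R] (I : Ideal R) [IsAdicComplete I R] (f : Polynomial R)
    (a₀ : R) (h₁ : f.eval a₀ ∈ I) (h₂ : IsUnit ((derivative f).eval a₀)) :
    ∃ a, f.IsRoot a := by
  classical
    let f' := derivative f
    let c : ℕ → R := fun n => Nat.recOn n a₀ fun _ b => b - f.eval b * (f'.eval b)⁻¹ʳ
    have hc : ∀ n, c (n + 1) = c n - f.eval (c n) * (f'.eval (c n))⁻¹ʳ := by
      intro n
      simp only [c]
    have hc_mod : ∀ n, c n ≡ a₀ [SMOD I] := by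
      intro n
      induction n with
      | zero => rfl
      | succ n ih => ?_
      rw [hc, sub_eq_add_neg, ← add_zero a₀]
      refine ih.add ?_
      rw [SModEq.zero, Ideal.neg_mem_iff]
      refine I.mul_mem_right _ ?_
      rw [← SModEq.zero] at h₁ ⊢
      exact (ih.eval f).trans h₁
    have hf'c : ∀ n, IsUnit (f'.eval (c n)) := by
      intro n
      have := isLocalHom_of_le_jacobson_bot I (IsAdicComplete.le_jacobson_bot I)
      apply IsUnit.of_map (Ideal.Quotient.mk I)
      have h₃ := h₂.map (Ideal.Quotient.mk I)
      convert! h₃ using 1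
      exact SModEq.def.mp ((hc_mod n).eval _)
    have hfcI : ∀ n, f.eval (c n) ∈ I ^ (n + 1) := by
      intro n
      induction n with
      | zero => simpa only [Nat.rec_zero, zero_add, pow_one] using! h₁
      | succ n ih => ?_
      rw [← taylor_eval_sub (c n), hc, sub_eq_add_neg, sub_eq_add_neg,
        add_neg_cancel_comm]
      rw [eval_eq_sum, sum_over_range' _ _ _ (lt_add_of_pos_right _ zero_lt_two), ←
        Finset.sum_range_add_sum_Ico _ (Nat.le_add_left _ _)]
      swap
      · intro i
        rw [zero_mul]
      refine Ideal.add_mem _ ?_ ?_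
      · rw [← one_add_one_eq_two, Finset.sum_range_succ, Finset.range_one, Finset.sum_singleton,
          taylor_coeff_zero, taylor_coeff_one, pow_zero, pow_one, mul_one, mul_neg,
          mul_left_comm, Ring.mul_inverse_cancel _ (hf'c n), mul_one, add_neg_cancel]
        exact Ideal.zero_mem _
      · refine Submodule.sum_mem _ ?_
        simp only [Finset.mem_Ico]
        rintro i ⟨h2i, _⟩
        have aux : n + 2 ≤ i * (n + 1) := by trans 2 * (n + 1) <;> nlinarith only [h2i]
        refine Ideal.mul_mem_left _ _ (Ideal.pow_le_pow_right aux ?_)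
        rw [pow_mul']
        exact Ideal.pow_mem_pow ((Ideal.neg_mem_iff _).2 <| Ideal.mul_mem_right _ _ ih) _
    have aux : ∀ m n, m ≤ n → c m ≡ c n [SMOD (I ^ m • ⊤ : Ideal R)] := by
      intro m n hmn
      rw [← Ideal.one_eq_top, Ideal.smul_eq_mul, mul_one]
      obtain ⟨k, rfl⟩ := Nat.exists_eq_add_of_le hmn
      clear hmn
      induction k with
      | zero => rw [add_zero]
      | succ k ih => ?_
      rw [← add_assoc, hc, ← add_zero (c m), sub_eq_add_neg]
      refine ih.add ?_
      symm
      rw [SModEq.zero, Ideal.neg_mem_iff]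
      refine Ideal.mul_mem_right _ _ (Ideal.pow_le_pow_right ?_ (hfcI _))
      rw [add_assoc]
      exact le_self_add
    obtain ⟨a, ha⟩ := IsPrecomplete.prec' c (aux _ _)
    refine ⟨a, ?_⟩
    · show f.IsRoot a
      suffices ∀ n, f.eval a ≡ 0 [SMOD (I ^ n • ⊤ : Ideal R)] by exact IsHausdorff.haus' _ this
      intro n
      specialize ha n
      rw [← Ideal.one_eq_top, Ideal.smul_eq_mul, mul_one] at ha ⊢
      refine (ha.symm.eval f).trans ?_
      rw [SModEq.zero]
      exact Ideal.pow_le_pow_right le_self_add (hfcI _)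

theorem aux_newton {B : Type*} [CommRing B] [IsLocalRing B]
    [IsAdicComplete (IsLocalRing.maximalIdeal B) B] (f : Polynomial B) (α δ w : B) {u : B}
    (hu : IsUnit u) (hw : w ∈ IsLocalRing.maximalIdeal B)
    (h1 : f.eval α = δ ^ 2 * w) (h2 : (derivative f).eval α = δ * u) : ∃ β, f.IsRoot β := by
  set g := taylor α f with hg
  have e1 := divX_mul_X_add g
  have e2 := divX_mul_X_add g.divX
  have c0 : g.coeff 0 = δ ^ 2 * w := by rw [hg, taylor_coeff_zero, h1]
  have c1 : g.divX.coeff 0 = δ * u := by rw [coeff_divX, hg, zero_add, taylor_coeff_one, h2]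
  set h := g.divX.divX
  rw [c0] at e1
  rw [c1] at e2
  obtain ⟨z, hz⟩ := aux_hensel (IsLocalRing.maximalIdeal B)
    (C w + C u * X + X ^ 2 * h.comp (C δ * X)) 0 (by simpa using hw) (by simpa using hu)
  refine ⟨α + δ * z, ?_⟩
  have e3 : f.eval (α + δ * z) = g.eval (δ * z) := by
    rw [hg, taylor_eval, add_comm]
  rw [IsRoot, e3, ← e1, ← e2]
  simp only [IsRoot, eval_add, eval_mul, eval_C, eval_X, eval_pow, eval_comp] at hz ⊢
  linear_combination δ ^ 2 * hz
end hensel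

theorem aux_precomplete_pi {A : Type*} [CommRing A] (I : Ideal A) [IsPrecomplete I A]
    (ι : Type*) [Finite ι] : IsPrecomplete I (ι → A) where
  prec' f hf := by
    classical
    cases nonempty_fintype ι
    have key : ∀ (n : ℕ) (x : ι → A), x ∈ (I ^ n • ⊤ : Submodule A (ι → A)) ↔
        ∀ i, x i ∈ I ^ n := by
      intro n x
      constructor
      · intro hx i
        have := Submodule.mem_map_of_mem (f := LinearMap.proj (R := A) (φ := fun _ : ι => A) i) hx
        rw [Submodule.map_smul''] at this
        have h2 := Submodule.smul_mono (le_refl (I ^ n)) (le_top : _ ≤ (⊤ : Submodule A A)) this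
        simpa using h2
      · intro hx
        rw [pi_eq_sum_univ x]
        exact Submodule.sum_mem _ fun i _ => Submodule.smul_mem_smul (hx i) trivial
    have : ∀ i, ∃ L, ∀ n, f n i ≡ L [SMOD (I ^ n • ⊤ : Submodule A A)] := by
      intro i
      refine IsPrecomplete.prec' (fun n => f n i) fun {m n} hmn => ?_
      have h1 := hf hmn
      rw [SModEq.sub_mem, key] at h1
      rw [SModEq.sub_mem]
      simpa using h1 i
    choose L hL using this
    refine ⟨L, fun n => ?_⟩
    rw [SModEq.sub_mem, key]
    intro i
    have := hL i n
    rw [SModEq.sub_mem] at this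
    simpa using this

theorem aux_precomplete_finite {A : Type*} [CommRing A] (I : Ideal A) [IsPrecomplete I A]
    (M : Type*) [AddCommGroup M] [Module A M] [Module.Finite A M] : IsPrecomplete I M := by
  obtain ⟨n, f, hf⟩ := Module.Finite.exists_fin' A M
  have := aux_precomplete_pi I (Fin n)
  rw [← AdicCompletion.of_surjective_iff]
  intro y
  obtain ⟨x, rfl⟩ := AdicCompletion.map_surjective I hf y
  obtain ⟨z, rfl⟩ := AdicCompletion.of_surjective I (Fin n → A) x
  exact ⟨f z, by rw [AdicCompletion.map_of]⟩

theorem aux_complete_of_pow {A : Type*} [CommRing A] (I J : Ideal A) [IsAdicComplete I A]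
    (hIJ : I ≤ J) (e : ℕ) (he : J ^ e ≤ I) : IsAdicComplete J A := by
  obtain ⟨e, he1, he⟩ : ∃ e, 1 ≤ e ∧ J ^ e ≤ I :=
    ⟨e + 1, by omega, (Ideal.pow_le_pow_right (by omega)).trans he⟩
  have hp : ∀ n, J ^ (e * n) ≤ I ^ n := fun n => by
    rw [pow_mul]; exact Ideal.pow_right_mono he n
  have hen : ∀ n, n ≤ e * n := fun n => Nat.le_mul_of_pos_left n he1
  refine aux_complete_iff J (fun x hx => aux_haus I x fun n => hp n (hx _)) fun f hf => ?_
  obtain ⟨L, hL⟩ := aux_complete_lim I (fun n => f (e * n))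
    (fun m n hmn => hp m (hf _ _ (Nat.mul_le_mul_left _ hmn)))
  refine ⟨L, fun n => ?_⟩
  have := add_mem (hf n (e * n) (hen n)) (Ideal.pow_right_mono hIJ n (hL n))
  simpa using this

theorem aux_finite_complete (A O : Type*) [CommRing A] [IsLocalRing A] [IsNoetherianRing A]
    [IsAdicComplete (IsLocalRing.maximalIdeal A) A] [CommRing O] [Algebra A O]
    [Module.Finite A O] :
    IsAdicComplete ((IsLocalRing.maximalIdeal A).map (algebraMap A O)) O where
  toIsHausdorff := by rw [IsHausdorff.map_algebraMap_iff]; infer_instance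
  toIsPrecomplete := by
    rw [IsPrecomplete.map_algebraMap_iff]
    exact aux_precomplete_finite _ _

theorem aux_idem_pow {A : Type*} [CommRing A] [Finite A] (x : A) :
    ∃ n, 1 ≤ n ∧ x ^ n * x ^ n = x ^ n := by
  obtain ⟨a, b, hab, h⟩ : ∃ a b : ℕ, a < b ∧ x ^ a = x ^ b := by
    obtain ⟨a, b, hne, h⟩ := Finite.exists_ne_map_eq_of_infinite (fun n : ℕ => x ^ n)
    rcases lt_or_gt_of_ne hne with hl | hl
    · exact ⟨a, b, hl, h⟩
    · exact ⟨b, a, hl, h.symm⟩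
  obtain ⟨c, hc, rfl⟩ : ∃ c, 1 ≤ c ∧ b = a + c := ⟨b - a, by omega, by omega⟩
  have key : ∀ t k, x ^ (a + k + c * t) = x ^ (a + k) := by
    intro t k
    induction t with
    | zero => simp
    | succ t ih =>
      rw [show a + k + c * (t + 1) = (a + c) + (k + c * t) by ring, pow_add, ← h, ← pow_add,
        ← add_assoc, ih]
  refine ⟨c * (a + 1), by nlinarith, ?_⟩
  have hle : a ≤ c * (a + 1) := by nlinarith
  obtain ⟨k, hk⟩ := Nat.exists_eq_add_of_le hle
  rw [← pow_add]
  nth_rewrite 1 [hk]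
  rw [key, ← hk]

theorem aux_finite_quot (A O : Type*) [CommRing A] [IsLocalRing A]
    [Finite (IsLocalRing.ResidueField A)] [CommRing O] [Algebra A O] [Module.Finite A O] :
    Finite (O ⧸ (IsLocalRing.maximalIdeal A).map (algebraMap A O)) := by
  set I := (IsLocalRing.maximalIdeal A).map (algebraMap A O)
  obtain ⟨n, f, hf⟩ := Module.Finite.exists_fin' A O
  have : Finite (A ⧸ IsLocalRing.maximalIdeal A) := ‹Finite (IsLocalRing.ResidueField A)›
  let s : (Fin n → A ⧸ IsLocalRing.maximalIdeal A) → O ⧸ I :=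
    fun v => Ideal.Quotient.mk I (f fun i => (v i).out)
  refine Finite.of_surjective s fun y => ?_
  obtain ⟨y, rfl⟩ := Ideal.Quotient.mk_surjective y
  obtain ⟨v, rfl⟩ := hf y
  refine ⟨fun i => Ideal.Quotient.mk _ (v i), ?_⟩
  rw [← sub_eq_zero, ← map_sub, ← map_sub, Ideal.Quotient.eq_zero_iff_mem]
  rw [pi_eq_sum_univ (_ - v), map_sum]
  refine Ideal.sum_mem _ fun i _ => ?_
  rw [map_smul, Algebra.smul_def]
  refine Ideal.mul_mem_right _ _ (Ideal.mem_map_of_mem _ ?_)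
  rw [← Ideal.Quotient.eq_zero_iff_mem, Pi.sub_apply, map_sub, sub_eq_zero]
  exact Quotient.out_eq' _

theorem aux_finite_local (A O : Type*) [CommRing A] [IsLocalRing A] [IsNoetherianRing A]
    [IsAdicComplete (IsLocalRing.maximalIdeal A) A] [Finite (IsLocalRing.ResidueField A)]
    [CommRing O] [IsDomain O] [Algebra A O] [Module.Finite A O] :
    ∃ _ : IsLocalRing O, IsAdicComplete (IsLocalRing.maximalIdeal O) O ∧
      Finite (IsLocalRing.ResidueField O) ∧
      (IsLocalRing.maximalIdeal A).map (algebraMap A O) ≤ IsLocalRing.maximalIdeal O := by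
  have hcomp := aux_finite_complete A O
  have hfin := aux_finite_quot A O
  have hnoe : IsNoetherianRing O := IsNoetherianRing.of_finite A O
  set I := (IsLocalRing.maximalIdeal A).map (algebraMap A O) with hI
  have hjac : I ≤ (⊥ : Ideal O).jacobson := IsAdicComplete.le_jacobson_bot I
  have hunit : ∀ x ∈ I, ∀ y, IsUnit (1 + x * y) := fun x hx y => by
    have := Ideal.mem_jacobson_bot.1 (hjac hx) y
    rwa [add_comm]
  have hnu : ∀ x ∈ I, ¬ IsUnit x := by
    rintro x hx ⟨u, rfl⟩
    have := hunit _ hx (-(↑u⁻¹ : O))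
    simp at this
  have key : ∀ x : O, ¬ IsUnit x → x ∈ I.radical := by
    intro x hx
    obtain ⟨n, hn, h⟩ := aux_idem_pow (Ideal.Quotient.mk I x)
    have h1 : x ^ n * x ^ n - x ^ n ∈ I := by
      rw [← Ideal.Quotient.eq_zero_iff_mem]; simp [h]
    obtain ⟨a, ha, ha2⟩ := HenselianRing.is_henselian (I := I) (Polynomial.X ^ 2 - Polynomial.X)
      (by
        have : (Polynomial.X : Polynomial O).degree < ((Polynomial.X : Polynomial O) ^ 2).degree := by
          simp
        exact (Polynomial.monic_X_pow 2).sub_of_left this) (x ^ n)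
      (by simpa [sq] using h1)
      (by
        have := hunit _ h1 4
        have h2 : IsUnit (2 * x ^ n - 1) := by
          refine isUnit_of_mul_isUnit_left (y := 2 * x ^ n - 1) ?_
          convert this using 1; ring
        have h3 := h2.map (Ideal.Quotient.mk I)
        convert h3 using 2
        simp only [Polynomial.derivative_sub, Polynomial.derivative_X_pow, Polynomial.derivative_X,
          Polynomial.eval_sub, Polynomial.eval_mul, Polynomial.eval_C, Polynomial.eval_pow,
          Polynomial.eval_X, Polynomial.eval_one]
        norm_num)
    have ha3 : a * (a - 1) = 0 := by
      have : a ^ 2 - a = 0 := by simpa using ha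
      linear_combination this
    rcases mul_eq_zero.1 ha3 with h0 | h0
    · rw [h0, zero_sub, neg_mem_iff] at ha2
      exact ⟨n, ha2⟩
    · exfalso
      apply hx
      rw [sub_eq_zero.1 h0] at ha2
      have := hunit _ ha2 (-1)
      rw [← isUnit_pow_iff (n := n) (by omega)]
      convert this using 1; ring
  have hrad : ∀ x ∈ I.radical, ¬ IsUnit x := by
    rintro x ⟨n, hn⟩ hu
    exact hnu _ hn (hu.pow n)
  have hloc : IsLocalRing O := IsLocalRing.of_nonunits_add fun a b ha hb =>
    hrad _ (add_mem (key a ha) (key b hb))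
  have hM : IsLocalRing.maximalIdeal O = I.radical := by
    ext x
    exact ⟨fun h => key x h, fun h => hrad x h⟩
  obtain ⟨e, he⟩ := I.exists_radical_pow_le_of_fg (IsNoetherian.noetherian _)
  have hle : I ≤ IsLocalRing.maximalIdeal O := hM ▸ Ideal.le_radical
  refine ⟨hloc, aux_complete_of_pow I _ hle e (hM ▸ he), ?_, hle⟩
  exact Finite.of_surjective _ (Ideal.Quotient.factor_surjective hle)

section OConstr
open Polynomial IntermediateField

theorem aux_O {Λ : Type} [CommRing Λ] (hΛ : NiceRing Λ 1) (ϖ : Λ)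
    (hϖ : ∀ x, ¬ IsUnit x ↔ ϖ ∣ x) (hϖ0 : ϖ ≠ 0) (f : Λ[X]) (hf : f.Monic) (hdeg : f.natDegree ≠ 0)
    (u v : Λ[X]) (D : Λ) (hD : D ≠ 0) (huv : u * f + v * derivative f = C D) :
    ∃ (O : Type) (_ : CommRing O) (ι : Λ →+* O) (α : O), NiceRing O 1 ∧ Function.Injective ι ∧
      ¬ IsUnit (ι ϖ) ∧ (f.map ι).eval α = 0 := by
  obtain ⟨_, _, _, _, _, _, _⟩ := hΛ
  have hprin : (IsLocalRing.maximalIdeal Λ).IsPrincipal := by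
    refine ⟨ϖ, ?_⟩
    ext x
    rw [IsLocalRing.mem_maximalIdeal, mem_nonunits_iff, hϖ]
    exact Ideal.mem_span_singleton.symm
  have hded : IsDedekindDomain Λ :=
    ((tfae_of_isNoetherianRing_of_isLocalRing_of_isDomain Λ).out 4 2).1 hprin
  let K := FractionRing Λ
  let L := AlgebraicClosure K
  set fK : K[X] := f.map (algebraMap Λ K) with hfK
  have hsep : fK.Separable := by
    have hu : IsUnit (algebraMap Λ K D) := by
      rw [isUnit_iff_ne_zero, Ne, FaithfulSMul.algebraMap_eq_zero_iff]; exact hD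
    obtain ⟨w, hw⟩ := hu
    refine ⟨C ((w⁻¹ : Kˣ) : K) * u.map (algebraMap Λ K), C ((w⁻¹ : Kˣ) : K) * v.map (algebraMap Λ K), ?_⟩
    have h1 := congrArg (Polynomial.map (algebraMap Λ K)) huv
    simp only [Polynomial.map_add, Polynomial.map_mul, map_C, ← hw] at h1
    have h2 : (C ((w⁻¹ : Kˣ) : K) : K[X]) * C (w : K) = 1 := by rw [← C_mul]; simp
    rw [hfK, derivative_map]
    rw [← h2, ← h1]
    ring
  obtain ⟨α, hα⟩ := IsAlgClosed.exists_aeval_eq_zero L fK (by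
    rw [hfK, hf.degree_map]
    intro h0
    exact hdeg (natDegree_eq_of_degree_eq_some h0))
  have hαsep : IsSeparable K α := hsep.of_dvd (minpoly.dvd K α hα)
  let F := K⟮α⟯
  have h1 : Algebra.IsSeparable K F := (isSeparable_adjoin_simple_iff_isSeparable K L).2 hαsep
  have h2 : FiniteDimensional K F := adjoin.finiteDimensional hαsep.isIntegral
  let O := integralClosure Λ F
  have h3 : Module.Finite Λ O := IsIntegralClosure.finite Λ K F O
  have h4 : IsDedekindDomain O := integralClosure.isDedekindDomain Λ K F
  have hinj : Function.Injective (algebraMap Λ O) := by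
    have hF : Function.Injective (algebraMap Λ F) := by
      rw [IsScalarTower.algebraMap_eq Λ K F]
      exact (algebraMap K F).injective.comp (IsFractionRing.injective Λ K)
    intro x y hxy
    exact hF (congrArg Subtype.val hxy)
  obtain ⟨hl, hc, hfr, hle⟩ := aux_finite_local Λ O
  have hnu : ¬ IsUnit (algebraMap Λ O ϖ) :=
    hle (Ideal.mem_map_of_mem _ (show ϖ ∈ IsLocalRing.maximalIdeal Λ from (hϖ ϖ).2 dvd_rfl))
  have hg : aeval (AdjoinSimple.gen K α) f = 0 := by
    rw [← aeval_map_algebraMap K, ← hfK]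
    apply (algebraMap F L).injective
    rw [map_zero, ← aeval_algebraMap_apply, AdjoinSimple.algebraMap_gen]
    exact hα
  have hInt : IsIntegral Λ (AdjoinSimple.gen K α) := ⟨f, hf, by simpa [aeval_def] using hg⟩
  refine ⟨O, inferInstance, algebraMap Λ O, ⟨AdjoinSimple.gen K α, hInt⟩,
    ⟨inferInstance, hl, inferInstance, hc, hfr, inferInstance, ?_⟩, hinj, hnu, ?_⟩
  · rw [Nat.cast_one]
    refine IsPrincipalIdealRing.ringKrullDim_eq_one O fun hF => hnu ?_
    obtain ⟨b, hb⟩ := hF.mul_inv_cancel (a := algebraMap Λ O ϖ)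
      (by rw [Ne, map_eq_zero_iff _ hinj]; exact hϖ0)
    exact IsUnit.of_mul_eq_one b hb
  · rw [eval_map_algebraMap]
    apply Subtype.val_injective
    have := aeval_algebraMap_apply F (⟨AdjoinSimple.gen K α, hInt⟩ : O) f
    exact this.symm.trans hg
end OConstr

section Base

theorem aux_nice_zp (p : ℕ) [Fact p.Prime] : NiceRing ℤ_[p] 1 := by
  refine ⟨inferInstance, inferInstance, inferInstance, inferInstance, ?_, inferInstance, ?_⟩
  · exact Finite.of_equiv _ (PadicInt.residueField (p := p)).symm.toEquiv
  · rw [Nat.cast_one]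
    refine IsPrincipalIdealRing.ringKrullDim_eq_one _ fun hF => ?_
    exact IsDiscreteValuationRing.not_isField _ hF

theorem aux_nice_zmod (p : ℕ) [Fact p.Prime] : NiceRing (ZMod p) 0 := by
  refine ⟨inferInstance, inferInstance, inferInstance, inferInstance, ?_, inferInstance, ?_⟩
  · exact Finite.of_surjective _ (IsLocalRing.residue_surjective (R := ZMod p))
  · simp

theorem aux_zp_hom (p : ℕ) [Fact p.Prime] (R : Type) [CommRing R] (I : Ideal R)
    [IsAdicComplete I R] (hp : (p : R) ∈ I) : Nonempty (ℤ_[p] →+* R) := by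
  have hz : ∀ n, ((p ^ n : ℕ) : R ⧸ I ^ n) = 0 := fun n => by
    have : Ideal.Quotient.mk (I ^ n) ((p : R) ^ n) = 0 :=
      Ideal.Quotient.eq_zero_iff_mem.2 (Ideal.pow_mem_pow hp n)
    simpa using this
  let f : ∀ n, ℤ_[p] →+* R ⧸ I ^ n := fun n =>
    (ZMod.castHom (ringChar.dvd (hz n)) (R ⧸ I ^ n)).comp (PadicInt.toZModPow n)
  refine ⟨IsAdicComplete.liftRingHom I f ?_⟩
  intro m n hmn
  ext x
  obtain ⟨y, hy⟩ := Ideal.mem_span_singleton.1 (PadicInt.appr_spec n x)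
  rw [sub_eq_iff_eq_add] at hy
  have h1 : ((p : R ⧸ I ^ m)) ^ n = 0 := by
    have := hz m
    push_cast at this
    exact pow_eq_zero_of_le hmn this
  have h2 : ((p : R ⧸ I ^ n)) ^ n = 0 := by simpa using hz n
  rw [hy]
  simp only [map_add, map_mul, map_pow, map_natCast, h1]
  simp

theorem aux_base (p : ℕ) [Fact p.Prime] (R : Type) [CommRing R] [IsDomain R] [IsLocalRing R]
    [IsAdicComplete (IsLocalRing.maximalIdeal R) R] [CharP (IsLocalRing.ResidueField R) p]
    (t : R) (ht0 : t ≠ 0) (ht : t ∈ IsLocalRing.maximalIdeal R) :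
    ∃ (Λ : Type) (_ : CommRing Λ) (ϖ : Λ) (l : Λ →+* R), NiceRing Λ 1 ∧
      (∀ x, ¬ IsUnit x ↔ ϖ ∣ x) ∧ ϖ ≠ 0 ∧ l ϖ ≠ 0 ∧ l ϖ ∈ IsLocalRing.maximalIdeal R := by
  have hpm : (p : R) ∈ IsLocalRing.maximalIdeal R := by
    rw [← IsLocalRing.residue_eq_zero_iff, map_natCast, CharP.cast_eq_zero]
  by_cases hp : (p : R) = 0
  · have : CharP R p := (CharP.charP_iff_prime_eq_zero Fact.out).2 hp
    obtain ⟨l, -, hl⟩ := aux_eval_exists (ZMod.castHom dvd_rfl R : ZMod p →+* R)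
      (IsLocalRing.maximalIdeal R) t ht
    refine ⟨PowerSeries (ZMod p), inferInstance, PowerSeries.X, l, (aux_nice_zmod p).powerSeries,
      fun x => ?_, PowerSeries.X_ne_zero, by rwa [hl], by rwa [hl]⟩
    rw [PowerSeries.X_dvd_iff, PowerSeries.isUnit_iff_constantCoeff, isUnit_iff_ne_zero, not_not]
  · obtain ⟨l⟩ := aux_zp_hom p R (IsLocalRing.maximalIdeal R) hpm
    refine ⟨ℤ_[p], inferInstance, p, l, aux_nice_zp p, fun x => ?_, ?_, by simpa, by simpa⟩
    · rw [← Ideal.mem_span_singleton, ← PadicInt.maximalIdeal_eq_span_p]; rfl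
    · exact_mod_cast (Fact.out : p.Prime).ne_zero

end Base

section Cohen

theorem aux_params (R : Type) [CommRing R] [IsDomain R] [IsLocalRing R] [IsNoetherianRing R]
    (t : R) (ht0 : t ≠ 0) (ht : t ∈ IsLocalRing.maximalIdeal R) :
    ∃ (n j : ℕ) (r : Fin n → R), ringKrullDim R = ((n + 1 : ℕ) : WithBot ℕ∞) ∧
      (∀ i, r i ∈ IsLocalRing.maximalIdeal R) ∧
      ∀ J : Ideal R, t ∈ J → (∀ i, r i ∈ J) → IsLocalRing.maximalIdeal R ^ j ≤ J := by
  have hd := ringKrullDim_quotient_span_singleton_succ_eq_ringKrullDim_of_mem_nonZeroDivisors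
    (mem_nonZeroDivisors_of_ne_zero ht0) ht
  let Q := R ⧸ Ideal.span {t}
  let mk : R →+* Q := Ideal.Quotient.mk _
  have hmk : Function.Surjective mk := Ideal.Quotient.mk_surjective
  have hnt : Nontrivial Q := Ideal.Quotient.nontrivial_iff.2 (by
    rw [Ne, Ideal.span_singleton_eq_top]; exact ht)
  have hloc : IsLocalRing Q := IsLocalRing.of_surjective' mk hmk
  have hlm : IsLocalHom mk := IsLocalHom.of_surjective mk hmk
  obtain ⟨s, hs, hcard⟩ := Ideal.exists_finset_card_eq_height_of_isNoetherianRing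
    (IsLocalRing.maximalIdeal Q)
  have hdim : ringKrullDim Q = (s.card : WithBot ℕ∞) := by
    rw [← IsLocalRing.maximalIdeal_height_eq_ringKrullDim, ← hcard]; rfl
  have hrad : IsLocalRing.maximalIdeal Q ≤ (Ideal.span (s : Set Q)).radical := by
    rw [Ideal.radical_eq_sInf]
    refine le_sInf fun P hP => ?_
    have := hP.2
    exact hs.2 ⟨hP.2, hP.1⟩ (IsLocalRing.le_maximalIdeal hP.2.ne_top)
  obtain ⟨j, hj⟩ := Ideal.exists_pow_le_of_le_radical_of_fg hrad (IsNoetherian.noetherian _)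
  choose lift hlift using hmk
  let e := s.equivFin
  refine ⟨s.card, j, fun i => lift (e.symm i), ?_, fun i => ?_, fun J htJ hrJ => ?_⟩
  · rw [← hd, hdim]; norm_cast
  · have h1 : ((e.symm i : s) : Q) ∈ IsLocalRing.maximalIdeal Q :=
      hs.1.2 (Ideal.subset_span (e.symm i).2)
    rw [← hlift (e.symm i)] at h1
    intro hu
    exact h1 (hu.map mk)
  · have h1 : Ideal.span (s : Set Q) ≤ J.map mk := by
      rw [Ideal.span_le]
      intro x hx
      have := Ideal.mem_map_of_mem mk (hrJ (e ⟨x, hx⟩))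
      simp only [Equiv.symm_apply_apply, hlift] at this
      exact this
    have h2 : (IsLocalRing.maximalIdeal R).map mk ≤ IsLocalRing.maximalIdeal Q := by
      rw [Ideal.map_le_iff_le_comap]
      intro x hx hu
      exact hx (isUnit_of_map_unit mk x hu)
    have h3 : (IsLocalRing.maximalIdeal R ^ j).map mk ≤ J.map mk := by
      rw [Ideal.map_pow]
      exact (Ideal.pow_right_mono h2 j).trans (hj.trans h1)
    rw [Ideal.map_le_iff_le_comap, Ideal.comap_map_of_surjective mk Ideal.Quotient.mk_surjective]
      at h3
    refine h3.trans (sup_le le_rfl ?_)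
    intro x hx
    rw [Ideal.mem_comap, Ideal.mem_bot, Ideal.Quotient.eq_zero_iff_mem] at hx
    exact (Ideal.span_singleton_le_iff_mem _).2 htJ hx

theorem aux_map_nonunit {A R : Type} [CommRing A] [IsLocalRing A] [CommRing R] [IsLocalRing R]
    [Finite (IsLocalRing.ResidueField R)] (ψ : A →+* R) (x : A)
    (hx : x ∈ IsLocalRing.maximalIdeal A) : ψ x ∈ IsLocalRing.maximalIdeal R := by
  let f : A →+* IsLocalRing.ResidueField R := (IsLocalRing.residue R).comp ψ
  have h1 : Finite (A ⧸ RingHom.ker f) :=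
    Finite.of_injective _ (RingHom.kerLift_injective f)
  have hp : (RingHom.ker f).IsPrime := RingHom.ker_isPrime f
  have h2 : (RingHom.ker f).IsMaximal :=
    Ideal.Quotient.maximal_of_isField _ (Finite.isField_of_domain _)
  rw [← IsLocalRing.eq_maximalIdeal h2] at hx
  rwa [← IsLocalRing.residue_eq_zero_iff]

theorem aux_module_finite (A R : Type) [CommRing A] [IsLocalRing A]
    [IsAdicComplete (IsLocalRing.maximalIdeal A) A] [CommRing R] [IsDomain R] [IsNoetherianRing R]
    [IsLocalRing R] [Finite (IsLocalRing.ResidueField R)] [Algebra A R] (j : ℕ)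
    (hj : IsLocalRing.maximalIdeal R ^ j ≤ (IsLocalRing.maximalIdeal A).map (algebraMap A R)) :
    Module.Finite A R := by
  set I := IsLocalRing.maximalIdeal A
  have hle : I.map (algebraMap A R) ≤ IsLocalRing.maximalIdeal R := by
    rw [Ideal.map_le_iff_le_comap]
    exact fun x hx => aux_map_nonunit (algebraMap A R) x hx
  have hH : IsHausdorff I R := by
    rw [← IsHausdorff.map_algebraMap_iff (S := R)]
    refine IsHausdorff.of_isDomain _ fun h => ?_
    rw [h, top_le_iff] at hle
    exact (IsLocalRing.maximalIdeal.isMaximal R).ne_top hle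
  have hf0 : Finite (R ⧸ IsLocalRing.maximalIdeal R) :=
    ‹Finite (IsLocalRing.ResidueField R)›
  have hf1 : Finite (R ⧸ IsLocalRing.maximalIdeal R ^ j) :=
    Ideal.finite_quotient_pow (IsNoetherian.noetherian _) j
  have hf2 : Finite (R ⧸ (I • ⊤ : Submodule A R)) := by
    refine Finite.of_surjective (α := R ⧸ IsLocalRing.maximalIdeal R ^ j)
      (fun q => Submodule.Quotient.mk q.out) fun y => ?_
    obtain ⟨y, rfl⟩ := Submodule.Quotient.mk_surjective _ y
    refine ⟨Ideal.Quotient.mk _ y, ?_⟩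
    rw [Submodule.Quotient.eq, Ideal.smul_top_eq_map]
    refine hj ?_
    rw [← Ideal.Quotient.eq_zero_iff_mem, map_sub, sub_eq_zero]
    exact Quotient.out_eq' _
  cases nonempty_fintype (R ⧸ (I • ⊤ : Submodule A R))
  have hP := aux_precomplete_pi I (R ⧸ (I • ⊤ : Submodule A R))
  let f : ((R ⧸ (I • ⊤ : Submodule A R)) → A) →ₗ[A] R :=
    Fintype.linearCombination A (fun q => q.out)
  have hf : Function.Surjective f := by
    classical
    refine surjective_of_mkQ_comp_surjective (I := I) fun y => ?_
    refine ⟨Pi.single y 1, ?_⟩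
    simp only [LinearMap.comp_apply, f, Fintype.linearCombination_apply_single, one_smul]
    exact Quotient.out_eq' _
  exact Module.Finite.of_surjective f hf

theorem aux_dim_le (A R : Type) [CommRing A] [CommRing R] [Algebra A R] [Algebra.IsIntegral A R] :
    ringKrullDim R ≤ ringKrullDim A := by
  refine Order.krullDim_le_of_strictMono (PrimeSpectrum.comap (algebraMap A R)) ?_
  intro P Q hPQ
  have h1 : P.asIdeal ≤ Q.asIdeal := hPQ.le
  obtain ⟨x, hx1, hx2⟩ : ∃ x ∈ Q.asIdeal, x ∉ P.asIdeal := by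
    by_contra h
    push Not at h
    exact hPQ.not_ge h
  exact Ideal.comap_lt_comap_of_integral_mem_sdiff h1 ⟨hx1, hx2⟩ (Algebra.IsIntegral.isIntegral x)

theorem aux_injective (A R : Type) [CommRing A] [IsDomain A] [CommRing R] [Algebra A R]
    [Algebra.IsIntegral A R] (d : ℕ) (hA : ringKrullDim A = d) (hR : ringKrullDim R = d) :
    Function.Injective (algebraMap A R) := by
  rw [injective_iff_map_eq_zero]
  intro a ha
  by_contra h0
  set f := algebraMap A R
  let A' := A ⧸ RingHom.ker f
  let : Algebra A' R := (RingHom.kerLift f).toAlgebra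
  have : Algebra.IsIntegral A' R := ⟨fun x => by
    obtain ⟨P, hP, hP2⟩ := Algebra.IsIntegral.isIntegral (R := A) x
    refine ⟨P.map (Ideal.Quotient.mk (RingHom.ker f)), hP.map _, ?_⟩
    rw [Polynomial.eval₂_map]
    exact hP2⟩
  have h1 := aux_dim_le A' R
  have h2 := ringKrullDim_succ_le_of_surjective (Ideal.Quotient.mk (RingHom.ker f))
    Ideal.Quotient.mk_surjective (mem_nonZeroDivisors_of_ne_zero h0)
    (Ideal.Quotient.eq_zero_iff_mem.2 ha)
  rw [hA] at h2
  rw [hR] at h1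
  have h3 : (d : WithBot ℕ∞) + 1 ≤ d := (add_le_add_left h1 1).trans h2
  have h4 : ((d + 1 : ℕ) : WithBot ℕ∞) ≤ (d : ℕ) := by exact_mod_cast h3
  have h5 : d + 1 ≤ d := by exact_mod_cast h4
  omega

end Cohen

section FieldPart
open Polynomial IntermediateField

theorem aux_sep (A K F : Type) [CommRing A] [IsDomain A] [IsIntegrallyClosed A] [Field K]
    [Algebra A K] [IsFractionRing A K] [Field F] [Algebra K F] [Algebra A F] [IsScalarTower A K F]
    [FiniteDimensional K F] [Algebra.IsSeparable K F] :
    ∃ θ : F, IsIntegral A θ ∧ K⟮θ⟯ = ⊤ ∧ ∃ (u v : A[X]) (D : A), D ≠ 0 ∧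
      u * minpoly A θ + v * derivative (minpoly A θ) = C D := by
  obtain ⟨θ0, h0⟩ := Field.exists_primitive_element K F
  have halg : Algebra.IsAlgebraic A F := by
    have : Algebra.IsAlgebraic A K := IsLocalization.isAlgebraic K (nonZeroDivisors A)
    exact Algebra.IsAlgebraic.trans A K F
  obtain ⟨y, hy, hInt⟩ := (halg.isAlgebraic θ0).exists_integral_multiple
  refine ⟨y • θ0, hInt, ?_, ?_⟩
  · rw [eq_top_iff, ← h0, adjoin_simple_le_iff]
    have h1 : y • θ0 ∈ K⟮y • θ0⟯ := mem_adjoin_simple_self K _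
    have hy' : algebraMap A K y ≠ 0 := by
      rwa [Ne, FaithfulSMul.algebraMap_eq_zero_iff]
    have h2 : θ0 = (algebraMap A K y)⁻¹ • (y • θ0) := by
      rw [← algebraMap_smul K y θ0, smul_smul, inv_mul_cancel₀ hy', one_smul]
    have h3 := K⟮y • θ0⟯.smul_mem (x := (algebraMap A K y)⁻¹) h1
    rwa [← h2] at h3
  · set f := minpoly A (y • θ0) with hf
    have hfK := minpoly.isIntegrallyClosed_eq_field_fractions' K hInt
    have hsep : (minpoly K (y • θ0)).Separable := Algebra.IsSeparable.isSeparable K (y • θ0)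
    obtain ⟨a, b, hab⟩ := hsep
    obtain ⟨d1, hd1, e1⟩ := IsLocalization.integerNormalization_spec (nonZeroDivisors A) a
    obtain ⟨d2, hd2, e2⟩ := IsLocalization.integerNormalization_spec (nonZeroDivisors A) b
    set a' := IsLocalization.integerNormalization (nonZeroDivisors A) a
    set b' := IsLocalization.integerNormalization (nonZeroDivisors A) b
    refine ⟨C d2 * a', C d1 * b', d1 * d2,
      mul_ne_zero (nonZeroDivisors.ne_zero hd1) (nonZeroDivisors.ne_zero hd2), ?_⟩
    apply map_injective (algebraMap A K) (IsFractionRing.injective A K)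
    rw [hfK, ← hf] at hab
    simp only [Polynomial.map_add, Polynomial.map_mul, e1, e2, map_C, ← derivative_map]
    have s1 : ∀ (d : A) (P : K[X]), d • P = C (algebraMap A K d) * P := fun d P => by
      rw [← algebraMap_smul K d P, smul_eq_C_mul]
    rw [s1, s1, map_mul, C_mul]
    linear_combination (C (algebraMap A K d1) * C (algebraMap A K d2)) * hab

theorem aux_tau (A K F B : Type) [CommRing A] [IsDomain A] [IsIntegrallyClosed A] [Field K]
    [Algebra A K] [IsFractionRing A K] [Field F] [Algebra K F] [Algebra A F] [IsScalarTower A K F]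
    [CommRing B] [IsDomain B] (θ : F) (hθ : IsIntegral A θ) (htop : K⟮θ⟯ = ⊤)
    (σ : A →+* B) (hσ : Function.Injective σ) (β : B) (hβ : ((minpoly A θ).map σ).IsRoot β) :
    ∃ τ : F →+* FractionRing B, ∀ x, τ (algebraMap A F x) = algebraMap B (FractionRing B) (σ x) := by
  let σK : K →+* FractionRing B := IsFractionRing.map (K := K) (L := FractionRing B) hσ
  have hσK : ∀ x, σK (algebraMap A K x) = algebraMap B (FractionRing B) (σ x) := fun x =>
    IsLocalization.map_eq _ x
  let _ : Algebra K (FractionRing B) := σK.toAlgebra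
  have hKint : IsIntegral K θ := hθ.tower_top
  have hroot : algebraMap B (FractionRing B) β ∈ (minpoly K θ).aroots (FractionRing B) := by
    rw [mem_aroots]
    refine ⟨minpoly.ne_zero hKint, ?_⟩
    rw [minpoly.isIntegrallyClosed_eq_field_fractions' K hθ, aeval_def, eval₂_map]
    have : (algebraMap K (FractionRing B)).comp (algebraMap A K) =
        (algebraMap B (FractionRing B)).comp σ := RingHom.ext hσK
    rw [this, ← eval₂_map, eval₂_at_apply, hβ.eq_zero, map_zero]
  let τ0 : K⟮θ⟯ →ₐ[K] FractionRing B := (algHomAdjoinIntegralEquiv K hKint).symm ⟨_, hroot⟩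
  let τ : F →ₐ[K] FractionRing B :=
    (τ0.comp (equivOfEq htop.symm).toAlgHom).comp topEquiv.symm.toAlgHom
  refine ⟨τ, fun x => ?_⟩
  rw [IsScalarTower.algebraMap_apply A K F]
  exact (τ.commutes _).trans (hσK x)

theorem aux_ext0 (A R K F L : Type) [CommRing A] [IsDomain A] [IsIntegrallyClosed A] [CommRing R]
    [IsDomain R] [Algebra A R] [Module.Finite A R]
    [Field K] [Algebra A K] [IsFractionRing A K]
    [Field F] [Algebra K F] [Algebra A F] [IsScalarTower A K F]
    [FiniteDimensional K F] [Algebra.IsSeparable K F]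
    [Field L] [Algebra R L] [IsFractionRing R L] [Algebra F L] [Algebra A L]
    [IsScalarTower A R L] [IsScalarTower A F L]
    [FiniteDimensional F L] [IsPurelyInseparable F L] :
    ∃ (f : A[X]) (u v : A[X]) (D : A) (M : ℕ), f.Monic ∧ f.natDegree ≠ 0 ∧ D ≠ 0 ∧
      u * f + v * derivative f = C D ∧ M ≠ 0 ∧
      ∀ (B : Type) [CommRing B] [IsDomain B] [IsIntegrallyClosed B] (σ : A →+* B) (β : B),
        Function.Injective σ → (f.map σ).IsRoot β →
        ∃ φ : R →+* B, Function.Injective φ ∧ ∀ x, φ (algebraMap A R x) = σ x ^ M := by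
  obtain ⟨θ, hθ, htop, u, v, D, hD, huv⟩ := aux_sep A K F
  obtain ⟨q, hq⟩ := ExpChar.exists A
  have hqK : ExpChar K q := expChar_of_injective_algebraMap (IsFractionRing.injective A K) q
  have hqF : ExpChar F q := expChar_of_injective_algebraMap (algebraMap K F).injective q
  set N := IsPurelyInseparable.exponent F L with hN
  let Fr : L →+* F := IsPurelyInseparable.iterateFrobenius F L q (le_refl N)
  have hFr : ∀ x, algebraMap F L (Fr x) = x ^ q ^ N :=
    IsPurelyInseparable.algebraMap_iterateFrobenius F q (le_refl N)
  refine ⟨minpoly A θ, u, v, D, q ^ N, minpoly.monic hθ, (minpoly.natDegree_pos hθ).ne', hD, huv,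
    pow_ne_zero _ (expChar_pos A q).ne', ?_⟩
  intro B _ _ _ σ β hσ hβ
  obtain ⟨τ, hτ⟩ := aux_tau A K F B θ hθ htop σ hσ β hβ
  let Φ : R →+* FractionRing B := (τ.comp Fr).comp (algebraMap R L)
  have hΦinj : Function.Injective Φ :=
    (τ.comp Fr).injective.comp (IsFractionRing.injective R L)
  have hΦ : ∀ x, Φ (algebraMap A R x) = algebraMap B (FractionRing B) (σ x ^ q ^ N) := by
    intro x
    have : Fr (algebraMap R L (algebraMap A R x)) = (algebraMap A F x) ^ q ^ N := by
      apply (algebraMap F L).injective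
      rw [hFr, map_pow, ← IsScalarTower.algebraMap_apply A R L, IsScalarTower.algebraMap_apply A F L]
    change τ (Fr (algebraMap R L (algebraMap A R x))) = _
    rw [this, map_pow, hτ, map_pow]
  let ρ : A →+* B := σ.comp (iterateFrobenius A q N)
  have hρ : ∀ x, ρ x = σ x ^ q ^ N := fun x => by simp [ρ, iterateFrobenius_def]
  have hmem : ∀ r, ∃ b, algebraMap B (FractionRing B) b = Φ r := by
    intro r
    rw [← IsIntegrallyClosed.isIntegral_iff]
    obtain ⟨P, hP, hP2⟩ := Algebra.IsIntegral.isIntegral (R := A) r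
    refine ⟨P.map ρ, hP.map _, ?_⟩
    have : (algebraMap B (FractionRing B)).comp ρ = Φ.comp (algebraMap A R) := by
      ext x
      exact (congrArg _ (hρ x)).trans (hΦ x).symm
    rw [eval₂_map, this, ← hom_eval₂, hP2, map_zero]
  choose g hg using hmem
  have hBi := IsFractionRing.injective B (FractionRing B)
  let φ : R →+* B :=
    { toFun := g
      map_one' := hBi (by rw [hg, map_one, map_one])
      map_zero' := hBi (by rw [hg, map_zero, map_zero])
      map_add' := fun x y => hBi (by rw [hg, map_add, map_add, hg, hg])
      map_mul' := fun x y => hBi (by rw [hg, map_mul, map_mul, hg, hg]) }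
  refine ⟨φ, fun x y hxy => hΦinj ?_, fun x => hBi ?_⟩
  · rw [← hg, ← hg]; exact congrArg _ hxy
  · rw [← hΦ, ← hg]; rfl

theorem aux_ext1 (A R K L : Type) [CommRing A] [IsDomain A] [IsIntegrallyClosed A] [CommRing R]
    [IsDomain R] [Algebra A R] [Module.Finite A R]
    [Field K] [Algebra A K] [IsFractionRing A K]
    [Field L] [Algebra R L] [IsFractionRing R L] [Algebra K L] [Algebra A L]
    [IsScalarTower A R L] [IsScalarTower A K L] [FiniteDimensional K L] :
    ∃ (f : A[X]) (u v : A[X]) (D : A) (M : ℕ), f.Monic ∧ f.natDegree ≠ 0 ∧ D ≠ 0 ∧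
      u * f + v * derivative f = C D ∧ M ≠ 0 ∧
      ∀ (B : Type) [CommRing B] [IsDomain B] [IsIntegrallyClosed B] (σ : A →+* B) (β : B),
        Function.Injective σ → (f.map σ).IsRoot β →
        ∃ φ : R →+* B, Function.Injective φ ∧ ∀ x, φ (algebraMap A R x) = σ x ^ M := by
  have := separableClosure.isPurelyInseparable K L
  have : IsScalarTower A (separableClosure K L) L := IsScalarTower.of_algebraMap_eq fun x => by
    rw [IsScalarTower.algebraMap_apply A K L, IsScalarTower.algebraMap_apply A K
      (separableClosure K L), ← IsScalarTower.algebraMap_apply K (separableClosure K L) L]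
  exact aux_ext0 A R K (separableClosure K L) L

attribute [local instance] FractionRing.liftAlgebra

theorem aux_ext (A R : Type) [CommRing A] [IsDomain A] [IsIntegrallyClosed A] [CommRing R]
    [IsDomain R] [Algebra A R] [Module.Finite A R] [FaithfulSMul A R] :
    ∃ (f : A[X]) (u v : A[X]) (D : A) (M : ℕ), f.Monic ∧ f.natDegree ≠ 0 ∧ D ≠ 0 ∧
      u * f + v * derivative f = C D ∧ M ≠ 0 ∧
      ∀ (B : Type) [CommRing B] [IsDomain B] [IsIntegrallyClosed B] (σ : A →+* B) (β : B),
        Function.Injective σ → (f.map σ).IsRoot β →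
        ∃ φ : R →+* B, Function.Injective φ ∧ ∀ x, φ (algebraMap A R x) = σ x ^ M := by
  exact aux_ext1 A R (FractionRing A) (FractionRing R)

end FieldPart

section FinalPart
open Polynomial

theorem aux_dvd_pow {Λ : Type} [CommRing Λ] [IsDomain Λ] [IsNoetherianRing Λ] (ϖ : Λ)
    (hu : ¬ IsUnit ϖ) (hϖ : ∀ x, ¬ IsUnit x → ϖ ∣ x) (x : Λ) (hx : x ≠ 0) :
    ∃ e : ℕ, x ∣ ϖ ^ e := by
  obtain ⟨n, a, h1, h2⟩ := WfDvdMonoid.max_power_factor' hx hu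
  have ha : IsUnit a := by
    by_contra h
    exact h1 (hϖ a h)
  refine ⟨n, ?_⟩
  rw [h2]
  exact ha.mul_right_dvd.mpr dvd_rfl

theorem aux_unit_one_add {B : Type} [CommRing B] [IsLocalRing B] (q y : B) (hq : ¬ IsUnit q) :
    IsUnit (1 + q * y) := by
  by_contra h
  have h1 : 1 + q * y ∈ IsLocalRing.maximalIdeal B := h
  have h2 : q * y ∈ IsLocalRing.maximalIdeal B := Ideal.mul_mem_right _ _ hq
  have h3 := sub_mem h1 h2
  rw [add_sub_cancel_right] at h3
  exact h3 isUnit_one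

theorem aux_root_exists {B : Type} [CommRing B] [IsLocalRing B]
    [IsAdicComplete (IsLocalRing.maximalIdeal B) B] (F G : B[X]) (q α w : B) (e : ℕ)
    (hq : ¬ IsUnit q) (hG : G.eval α = 0) (hw : (derivative G).eval α * w = q ^ e)
    (hFG : ∀ i, q ^ (2 * e + 1) ∣ (F - G).coeff i) : ∃ β, F.IsRoot β := by
  obtain ⟨H, hH⟩ := C_dvd_iff_dvd_coeff _ _ |>.mpr hFG
  have hF : F = G + C (q ^ (2 * e + 1)) * H := by rw [← hH]; ring
  refine aux_newton F α ((derivative G).eval α) (q * (w ^ 2 * H.eval α))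
    (u := 1 + q * (w * q ^ e * (derivative H).eval α)) (aux_unit_one_add q _ hq)
    (Ideal.mul_mem_right _ _ hq) ?_ ?_
  · rw [hF, eval_add, hG, eval_mul, eval_C]
    have : q ^ (2 * e + 1) = (q ^ e) ^ 2 * q := by ring
    rw [this, ← hw]; ring
  · rw [hF, derivative_add, derivative_C_mul, eval_add, eval_mul, eval_C]
    have : q ^ (2 * e + 1) = (q ^ e) * (q ^ e) * q := by ring
    rw [this]
    nth_rw 1 [← hw]; ring

theorem aux_dvd_transfer {B : Type} [CommRing B] [IsLocalRing B] (q s b : B) (e : ℕ)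
    (hq : ¬ IsUnit q) (hb : b ∣ q ^ e) (h : q ^ (2 * e + 1) ∣ s - b) : s ∣ q ^ e := by
  obtain ⟨z, hz⟩ := hb
  obtain ⟨y, hy⟩ := h
  have hs : s = b + q ^ (2 * e + 1) * y := by rw [← hy]; ring
  have hu := aux_unit_one_add q (q ^ e * y * z) hq
  have h1 : s * z = q ^ e * (1 + q * (q ^ e * y * z)) := by
    rw [hs, add_mul, ← hz]; ring
  have h2 : s ∣ q ^ e * (1 + q * (q ^ e * y * z)) := ⟨z, h1.symm⟩
  exact hu.dvd_mul_right.mp h2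

theorem aux_positive_dim (p : ℕ) [Fact p.Prime]
    (R : Type) [CommRing R] [IsDomain R] [IsNoetherianRing R] [IsLocalRing R]
    [IsAdicComplete (IsLocalRing.maximalIdeal R) R]
    [Finite (IsLocalRing.ResidueField R)] [CharP (IsLocalRing.ResidueField R) p]
    (a : R) (ha : a ≠ 0) (t0 : R) (ht00 : t0 ≠ 0) (ht0 : t0 ∈ IsLocalRing.maximalIdeal R) :
    Nonempty (EmbeddingIntoIntegrallyClosedProPDomain p R a) := by
  obtain ⟨Λ, _, ϖ, l, hΛ, hϖ, hϖ0, hl0, hlm⟩ := aux_base p R t0 ht00 ht0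
  have hϖu : ¬ IsUnit ϖ := (hϖ ϖ).mpr dvd_rfl
  obtain ⟨n, j, r, hdim, hr, hJ⟩ := aux_params R (l ϖ) hl0 hlm
  obtain ⟨A, _, c, hA, hc, hcu, hev, hsp⟩ := tower_exists hΛ ϖ hϖ0 hϖu n
  obtain ⟨ψ, hψ, hψr⟩ := hev R l r hr
  let _ : Algebra A R := ψ.toAlgebra
  have hmap : ∀ x, algebraMap A R x = ψ x := fun _ => rfl
  have := hA.dom
  have := hA.loc
  have := hA.noe
  have := hA.compl
  have := hA.ic
  have hj : IsLocalRing.maximalIdeal R ^ j ≤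
      (IsLocalRing.maximalIdeal A).map (algebraMap A R) := by
    apply hJ
    · have : l ϖ = algebraMap A R (c ϖ) := by rw [← hψ]; rfl
      rw [this]
      exact Ideal.mem_map_of_mem _ hcu
    · intro i
      obtain ⟨x, hx, hxr⟩ := hψr i
      rw [← hxr]
      exact Ideal.mem_map_of_mem (algebraMap A R) hx
  have : Module.Finite A R := aux_module_finite A R j hj
  have hinj : Function.Injective (algebraMap A R) := aux_injective A R (n + 1) hA.dim hdim
  have : FaithfulSMul A R := (faithfulSMul_iff_algebraMap_injective A R).mpr hinj
  obtain ⟨f, u, v, D, M, hf, hfdeg, hD, huv, hM, hext⟩ := aux_ext A R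
  obtain ⟨a', ha'0, ha'⟩ : ∃ a' : A, a' ≠ 0 ∧ a ∣ ψ a' := by
    have h := Ideal.comap_ne_bot_of_integral_mem (R := A) (I := Ideal.span {a}) ha
      (Ideal.mem_span_singleton_self a) (Algebra.IsIntegral.isIntegral a)
    obtain ⟨x, hx, hx0⟩ := Submodule.exists_mem_ne_zero_of_ne_bot h
    exact ⟨x, hx0, Ideal.mem_span_singleton.mp hx⟩
  obtain ⟨ev, hevc, hevD, hspec⟩ := hsp (D * a') (mul_ne_zero hD ha'0)
  have := hΛ.dom
  have := hΛ.noe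
  have := hΛ.loc
  have hevD0 : ev D ≠ 0 := fun h => hevD (by rw [map_mul, h, zero_mul])
  obtain ⟨e, he⟩ := aux_dvd_pow ϖ hϖu (fun x hx => (hϖ x).mp hx) _ hevD
  have heD : ev D ∣ ϖ ^ e := (Dvd.intro _ (map_mul ev D a').symm).trans he
  have hea : ev a' ∣ ϖ ^ e := (Dvd.intro_left _ (map_mul ev D a').symm).trans he
  have huv' : u.map ev * f.map ev + v.map ev * derivative (f.map ev) = C (ev D) := by
    rw [derivative_map, ← Polynomial.map_mul, ← Polynomial.map_mul, ← Polynomial.map_add, huv,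
      map_C]
  obtain ⟨O, _, ι, α, hO, hι, hιu, hα⟩ := aux_O hΛ ϖ hϖ hϖ0 (f.map ev) (hf.map ev)
    (by rwa [hf.natDegree_map]) _ _ _ hevD0 huv'
  obtain ⟨B, _, γ, σ, hB, hγ, hγu, hσ, hcong⟩ := hspec O ι (2 * e + 1) hO hι hιu (by omega)
  have := hB.dom
  have := hB.loc
  have := hB.noe
  have := hB.compl
  have := hB.fin
  have := hB.ic
  set q := γ (ι ϖ) with hq
  let κ : Λ →+* B := γ.comp ι
  have hroot : ∃ β, (f.map σ).IsRoot β := by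
    have hG : ((f.map ev).map κ).eval (γ α) = 0 := by
      rw [← Polynomial.map_map, eval_map_apply, hα, map_zero]
    have h1 : (derivative ((f.map ev).map κ)).eval (γ α) ∣ q ^ e := by
      have h2 := congrArg (fun P => (P.map κ).eval (γ α)) huv'
      simp only [Polynomial.map_add, Polynomial.map_mul, eval_add, eval_mul, hG, mul_zero, zero_add,
        map_C, eval_C, ← derivative_map] at h2
      refine (Dvd.intro_left _ h2).trans ?_
      have := map_dvd κ heD
      rwa [map_pow] at this
    obtain ⟨w, hw⟩ := h1
    refine aux_root_exists (f.map σ) ((f.map ev).map κ) q (γ α) w e hγu hG hw.symm fun i => ?_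
    rw [coeff_sub, coeff_map, coeff_map, coeff_map]
    exact hcong _
  obtain ⟨β, hβ⟩ := hroot
  obtain ⟨φ, hφ, hφσ⟩ := hext B σ β hσ hβ
  have hqx : ∀ x ∈ IsLocalRing.maximalIdeal A, q ∣ φ (algebraMap A R x) := by
    intro x hx
    have hevx : ¬ IsUnit (ev x) := by
      intro hun
      have h1 : x - c (ev x) ∉ IsLocalRing.maximalIdeal A := fun h => by
        have h2 := sub_mem hx h
        rw [sub_sub_cancel] at h2
        exact h2 (hun.map c)
      have h3 : IsUnit (x - c (ev x)) := by
        by_contra h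
        exact h1 h
      have h4 := h3.map ev
      rw [map_sub, hevc, sub_self] at h4
      exact not_isUnit_zero h4
    obtain ⟨z, hz⟩ := (hϖ _).mp hevx
    have h5 : q ∣ σ x := by
      have h6 : q ∣ σ x - γ (ι (ev x)) := (dvd_pow_self q (by omega)).trans (hcong x)
      refine (dvd_sub_left ?_).mp h6
      rw [hz, map_mul, map_mul]
      exact Dvd.intro _ rfl
    rw [hφσ]
    exact h5.trans (dvd_pow_self _ hM)
  have hjq : Ideal.map φ (IsLocalRing.maximalIdeal R ^ j) ≤ Ideal.span {q} := by
    refine (Ideal.map_mono hj).trans ?_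
    rw [Ideal.map_map, Ideal.map_le_iff_le_comap]
    intro x hx
    exact Ideal.mem_span_singleton.mpr (hqx x hx)
  have haq : φ a ∣ q ^ (e * M) := by
    refine (map_dvd φ ha').trans ?_
    rw [← hmap, hφσ, pow_mul]
    apply pow_dvd_pow_of_dvd
    refine aux_dvd_transfer q (σ a') (γ (ι (ev a'))) e hγu ?_ (hcong a')
    have := map_dvd κ hea
    rwa [map_pow] at this
  have hchar : CharP (IsLocalRing.ResidueField B) p := by
    rw [CharP.charP_iff_prime_eq_zero Fact.out]
    have hpR : (p : R) ∈ IsLocalRing.maximalIdeal R := by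
      rw [← IsLocalRing.residue_eq_zero_iff, map_natCast, CharP.cast_eq_zero]
    have hpq : q ∣ (p : B) ^ j := by
      have := hjq (Ideal.mem_map_of_mem φ (Ideal.pow_mem_pow hpR j))
      rw [map_pow, map_natCast] at this
      exact Ideal.mem_span_singleton.mp this
    rw [← map_natCast (IsLocalRing.residue B), IsLocalRing.residue_eq_zero_iff]
    intro hun
    exact hγu (isUnit_of_dvd_unit hpq (hun.pow j))
  exact ⟨{ S := B
           dim_eq := hB.dim.trans hdim.symm
           φ := φ
           injective := hφ
           k := j * (e * M)
           map_pow_le := by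
             rw [pow_mul, Ideal.map_pow]
             refine (Ideal.pow_right_mono hjq _).trans ?_
             rw [Ideal.span_singleton_pow, Ideal.span_singleton_le_span_singleton]
             exact haq }⟩

end FinalPart

/-- For a commutative Noetherian local pro-`p` domain `R` and `0 ≠ a ∈ R`
there are an integrally closed commutative Noetherian local pro-`p` domain `S` of the same
Krull dimension, an injective ring homomorphism `φ : R → S`, and `k ∈ ℕ` with
`φ((maximalIdeal R)^k) ⊆ φ(a)·S`. -/
theorem exists_embedding_into_integrallyClosed_proP_domain (p : ℕ) [Fact p.Prime]
    (R : Type) [CommRing R] [IsDomain R] [IsNoetherianRing R] [IsLocalRing R]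
    [IsAdicComplete (IsLocalRing.maximalIdeal R) R]
    [Finite (IsLocalRing.ResidueField R)] [CharP (IsLocalRing.ResidueField R) p]
    (a : R) (ha : a ≠ 0) :
    Nonempty (EmbeddingIntoIntegrallyClosedProPDomain p R a) := by
  by_cases h : ∃ t : R, t ≠ 0 ∧ t ∈ IsLocalRing.maximalIdeal R
  · obtain ⟨t, h1, h2⟩ := h
    exact aux_positive_dim p R a ha t h1 h2
  · have hu : ∀ x : R, x ≠ 0 → IsUnit x := fun x hx => by
      by_contra hx'
      exact h ⟨x, hx, hx'⟩
    have hic : IsIntegrallyClosed R := by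
      let _ : Field R := IsField.toField
        { exists_pair_ne := ⟨0, 1, zero_ne_one⟩
          mul_comm := mul_comm
          mul_inv_cancel := fun {x} hx => (hu x hx).exists_right_inv }
      infer_instance
    exact ⟨{ S := R
             dim_eq := rfl
             φ := RingHom.id R
             injective := Function.injective_id
             k := 0
             map_pow_le := by
               have : Ideal.span {RingHom.id R a} = ⊤ :=
                 Ideal.span_singleton_eq_top.mpr (hu a ha)
               rw [this]
               exact le_top }⟩
end

section
/- Let p be a prime, let R be a commutative Noetherian local pro-p domain, let W be a finitely generated R-module that is torsion-free over R, and let G be a subgroup of the group of R-linear automorphisms of W. Then there exist a commutative ring S that is a Noetherian local integral domain, Hausdorff and complete with respect to the adic topology of its maximal ideal, with finite residue field of characteristic p, satisfying char S = char R and with Krull dimension equal to that of R, together with a natural number n and an injective group homomorphism from G into GL_n(S). -/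
/-- The data asserted to exist in Statement 5: a commutative Noetherian local pro-`p`
domain `S` with the same characteristic and Krull dimension as `R`, together with `n : ℕ`
and an injective group homomorphism `G →* GL_n(S)`. -/
structure LinearisationOverProPDomain (p : ℕ) (R : Type) [CommRing R] (G : Type)
    [Group G] : Type 1 where
  S : Type
  [commRing : CommRing S]
  [isDomain : IsDomain S]
  [isNoetherianRing : IsNoetherianRing S]
  [isLocalRing : IsLocalRing S]
  [isAdicComplete : IsAdicComplete (IsLocalRing.maximalIdeal S) S]
  [finiteResidueField : Finite (IsLocalRing.ResidueField S)]
  [charPResidueField : CharP (IsLocalRing.ResidueField S) p]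
  char_eq : ringChar S = ringChar R
  dim_eq : ringKrullDim S = ringKrullDim R
  n : ℕ
  f : G →* Matrix.GeneralLinearGroup (Fin n) S
  injective : Function.Injective f

section AuxA
open IsLocalRing

theorem aux_noeth (L : Type) [CommRing L] [IsNoetherianRing L] [IsLocalRing L] :
    IsNoetherianRing (AdicCompletion (maximalIdeal L) L) := by
  classical
  obtain ⟨k, a, ha⟩ := Submodule.fg_iff_exists_fin_generating_family.mp
    (IsNoetherian.noetherian (maximalIdeal L))
  let S := AdicCompletion (maximalIdeal L) L
  let I := maximalIdeal S
  let A := MvPolynomial (Fin k) L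
  let J : Ideal A := MvPolynomial.idealOfVars (Fin k) L
  have hJfg : J.FG := MvPolynomial.idealOfVars_fg _ _
  let g : A →+* S := (MvPolynomial.aeval (R := L) (S₁ := S) fun i => algebraMap L S (a i)).toRingHom
  have hg : J.map g = I := by
    change Ideal.map g (Ideal.span (Set.range MvPolynomial.X)) = maximalIdeal S
    have h1 : (maximalIdeal L).map (algebraMap L S) = Ideal.span (Set.range fun i => algebraMap L S (a i)) := by
      conv_lhs => arg 2; rw [← ha]
      rw [← Ideal.span, Ideal.map_span, ← Set.range_comp]; rfl
    rw [AdicCompletion.maximalIdeal_eq_map, h1, Ideal.map_span, ← Set.range_comp]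
    congr 2
    ext i
    simp [g]
  let T := AdicCompletion J A
  have hTN : IsNoetherianRing T :=
    isNoetherianRing_of_ringEquiv _ (MvPowerSeries.toAdicCompletionAlgEquiv (Fin k) L).toRingEquiv
  have hle : ∀ n, J ^ n ≤ (I ^ n).comap g := fun n => by
    rw [← Ideal.map_le_iff_le_comap, Ideal.map_pow, hg]
  let f : (n : ℕ) → T →+* S ⧸ I ^ n := fun n =>
    (Ideal.quotientMap (I ^ n) g (hle n)).comp (AdicCompletion.evalₐ J n).toRingHom
  have hf : ∀ {m n : ℕ} (hmn : m ≤ n), (Ideal.Quotient.factorPow I hmn).comp (f n) = f m := by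
    intro m n hmn
    ext x
    obtain ⟨y, hy⟩ := Ideal.Quotient.mk_surjective (AdicCompletion.evalₐ J n x)
    have h2 : AdicCompletion.evalₐ J m x = Ideal.Quotient.mk _ y := by
      obtain ⟨c, rfl⟩ := AdicCompletion.mk_surjective J A x
      rw [AdicCompletion.evalₐ_mk] at hy ⊢
      have h3 := (Ideal.Quotient.eq).mp hy
      have h4 := (c.mk_eq_mk hmn)
      rw [Ideal.Quotient.eq]
      have h5 := Ideal.pow_le_pow_right hmn h3
      have h6 : c.1 n - c.1 m ∈ J ^ m := by
        have := (Submodule.Quotient.eq _).mp h4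
        simpa using this
      have h7 := neg_mem (add_mem h5 h6)
      convert h7 using 1
      simp
    simp [f, h2, ← hy]
  let F : T →+* S := IsAdicComplete.liftRingHom I f hf
  have hF : F.comp (algebraMap A T) = g := by
    apply DFunLike.coe_injective
    apply IsHausdorff.funext' I
    intro n x
    have := IsAdicComplete.mk_liftRingHom I f hf n (algebraMap A T x)
    simp only [RingHom.comp_apply]
    rw [this]
    simp [f]
  have hmap : (J.map (algebraMap A T)).map F = I := by
    rw [Ideal.map_map, hF, hg]
  have := AdicCompletion.isAdicComplete_self J hJfg
  have : IsHausdorff ((J.map (algebraMap A T)).map F) S := by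
    rw [hmap]; infer_instance
  have hs : Function.Surjective F := by
    apply surjective_of_mk_map_comp_surjective (I := J.map (algebraMap A T))
    intro y
    obtain ⟨y, rfl⟩ := Ideal.Quotient.mk_surjective y
    obtain ⟨z, hz⟩ := (AdicCompletion.residueField_map_bijective L).2 (residue _ y)
    obtain ⟨z, rfl⟩ := residue_surjective z
    refine ⟨algebraMap A T (MvPolynomial.C z), ?_⟩
    rw [RingHom.comp_apply, ← RingHom.comp_apply F, hF, Ideal.Quotient.eq, hmap]
    rw [IsLocalRing.ResidueField.map_residue] at hz
    have := (Ideal.Quotient.eq).mp hz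
    have h9 : g (MvPolynomial.C z) = algebraMap L S z := MvPolynomial.algHom_C _ z
    rw [h9]
    exact this
  exact isNoetherianRing_of_surjective T S F hs

theorem aux_complete_quot (A : Type) [CommRing A] [IsNoetherianRing A] [IsLocalRing A]
    [IsAdicComplete (maximalIdeal A) A] (q : Ideal A) [q.IsPrime] [IsLocalRing (A ⧸ q)] :
    IsAdicComplete (maximalIdeal (A ⧸ q)) (A ⧸ q) := by
  have h1 : (maximalIdeal A).map (algebraMap A (A ⧸ q)) = maximalIdeal (A ⧸ q) :=
    eq_maximalIdeal (Ideal.IsMaximal.map_of_surjective_of_ker_le Ideal.Quotient.mk_surjective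
      (by rw [Ideal.mk_ker]; exact le_maximalIdeal (Ideal.IsPrime.ne_top ‹_›)))
  have h2 : IsPrecomplete (maximalIdeal A) (A ⧸ q) := by
    rw [← AdicCompletion.of_surjective_iff]
    intro y
    obtain ⟨x, rfl⟩ := AdicCompletion.map_surjective (maximalIdeal A)
      (f := q.mkQ) (Submodule.mkQ_surjective q) y
    obtain ⟨x, rfl⟩ := AdicCompletion.of_surjective (maximalIdeal A) A x
    exact ⟨q.mkQ x, rfl⟩
  have h3 := (IsPrecomplete.map_algebraMap_iff (I := maximalIdeal A) (M := A ⧸ q) (S := A ⧸ q)).mpr h2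
  rw [h1] at h3
  exact { toIsHausdorff := inferInstance, toIsPrecomplete := h3 }

theorem aux_dim_quot (A : Type) [CommRing A] [IsNoetherianRing A] [IsLocalRing A] :
    ∃ q ∈ minimalPrimes A, ringKrullDim (A ⧸ q) = ringKrullDim A := by
  obtain ⟨l, hl, hlen⟩ := Ideal.exists_ltSeries_length_eq_height (maximalIdeal A)
  obtain ⟨p, hp, hp'⟩ := Ideal.exists_minimalPrimes_le (J := l.head.asIdeal) bot_le
  refine ⟨p, hp, le_antisymm (ringKrullDim_quotient_le p) ?_⟩
  rw [← maximalIdeal_height_eq_ringKrullDim, ← hlen, ringKrullDim_quotient]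
  have hmem : ∀ i, l i ∈ PrimeSpectrum.zeroLocus (p : Set A) := by
    intro i
    exact hp'.trans (LTSeries.head_le l i)
  let l' : LTSeries (PrimeSpectrum.zeroLocus (R := A) p) :=
    { length := l.length, toFun := fun i => ⟨l i, hmem i⟩, step := fun i => l.step i }
  exact Order.LTSeries.length_le_krullDim l'

theorem aux_inj (L : Type) [CommRing L] [IsDomain L] [IsNoetherianRing L] [IsLocalRing L]
    (q : Ideal (AdicCompletion (maximalIdeal L) L))
    (hq : q ∈ minimalPrimes (AdicCompletion (maximalIdeal L) L)) :
    Function.Injective ((Ideal.Quotient.mk q).comp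
      (algebraMap L (AdicCompletion (maximalIdeal L) L))) := by
  rw [injective_iff_map_eq_zero]
  intro x hx
  by_contra hne
  rw [RingHom.comp_apply, Ideal.Quotient.eq_zero_iff_mem] at hx
  refine Set.disjoint_left.mp (Ideal.disjoint_nonZeroDivisors_of_mem_minimalPrimes hq) hx ?_
  have := Module.Flat.isSMulRegular_of_nonZeroDivisors (M := AdicCompletion (maximalIdeal L) L)
    (mem_nonZeroDivisors_of_ne_zero hne)
  rw [SetLike.mem_coe, mem_nonZeroDivisors_iff_right]
  intro y hy
  apply this
  simpa [Algebra.smul_def, mul_comm] using hy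

theorem aux_completion (L : Type) [CommRing L] [IsDomain L] [IsNoetherianRing L] [IsLocalRing L]
    [Finite (ResidueField L)] :
    ∃ (S : Type) (_ : CommRing S) (_ : IsDomain S) (_ : IsNoetherianRing S) (_ : IsLocalRing S)
      (_ : IsAdicComplete (maximalIdeal S) S) (_ : Finite (ResidueField S)) (f : L →+* S),
      Function.Injective f ∧ IsLocalHom f ∧ ringKrullDim S = ringKrullDim L := by
  let A := AdicCompletion (maximalIdeal L) L
  have : IsNoetherianRing A := aux_noeth L
  obtain ⟨q, hq, hdim⟩ := aux_dim_quot A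
  have : q.IsPrime := hq.1.1
  have : IsLocalRing (A ⧸ q) := .of_surjective' (Ideal.Quotient.mk q) Ideal.Quotient.mk_surjective
  have hloc : IsLocalHom (Ideal.Quotient.mk q) :=
    IsLocalHom.of_surjective _ Ideal.Quotient.mk_surjective
  have hfA : Finite (ResidueField A) :=
    Finite.of_surjective _ (AdicCompletion.residueField_map_bijective L).2
  refine ⟨A ⧸ q, inferInstance, inferInstance, inferInstance, inferInstance,
    aux_complete_quot A q, ?_, (Ideal.Quotient.mk q).comp (algebraMap L A), aux_inj L q hq, ?_, ?_⟩
  · refine Finite.of_surjective (ResidueField.map (Ideal.Quotient.mk q)) ?_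
    intro y
    obtain ⟨y, rfl⟩ := residue_surjective y
    obtain ⟨y, rfl⟩ := Ideal.Quotient.mk_surjective y
    exact ⟨residue _ y, by simp⟩
  · exact RingHom.isLocalHom_comp _ _
  · rw [hdim, ← maximalIdeal_height_eq_ringKrullDim, ← maximalIdeal_height_eq_ringKrullDim]
    have : (maximalIdeal A).LiesOver (maximalIdeal L) :=
      ⟨(maximalIdeal_comap (algebraMap L A)).symm⟩
    rw [Ideal.height_eq_height_add_of_liesOver_of_hasGoingDown (maximalIdeal L) (maximalIdeal A)]
    have h0 : (Ideal.map (Ideal.Quotient.mk ((maximalIdeal L).map (algebraMap L A)))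
      (maximalIdeal A)) = ⊥ := by
      rw [← AdicCompletion.maximalIdeal_eq_map, Ideal.map_quotient_self]
    have : Nontrivial (A ⧸ ((maximalIdeal L).map (algebraMap L A))) := by
      rw [← AdicCompletion.maximalIdeal_eq_map]; infer_instance
    rw [h0, Ideal.height_bot, add_zero]

end AuxA

section AuxB
open IsLocalRing

theorem aux_height_surj {A B : Type} [CommRing A] [IsDomain A] [CommRing B] [IsNoetherianRing B]
    (f : A →+* B) (hf : Function.Surjective f) (hker : RingHom.ker f ≠ ⊥)
    (Q : Ideal B) [Q.IsPrime] : Q.height + 1 ≤ (Q.comap f).height := by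
  obtain ⟨l, hl, hlen⟩ := Ideal.exists_ltSeries_length_eq_height Q
  let l' : LTSeries (PrimeSpectrum A) := l.map (PrimeSpectrum.comap f)
    ((show Monotone (PrimeSpectrum.comap f) from fun _ _ h => Ideal.comap_mono h).strictMono_of_injective
      (PrimeSpectrum.comap_injective_of_surjective f hf))
  have hlt : (⟨⊥, Ideal.isPrime_bot⟩ : PrimeSpectrum A) < l'.head := by
    rw [← PrimeSpectrum.asIdeal_lt_asIdeal]
    refine lt_of_lt_of_le (bot_lt_iff_ne_bot.mpr hker) ?_
    exact Ideal.comap_mono bot_le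
  have h := Order.length_le_height_last (p := l'.cons _ hlt)
  have hlast : (RelSeries.cons l' _ hlt).last = ⟨Q.comap f, inferInstance⟩ := by
    rw [RelSeries.last_cons, LTSeries.last_map, hl]
    rfl
  rw [hlast, ← PrimeSpectrum.height_eq_orderHeight] at h
  rw [← hlen]
  simpa [l'] using h

theorem aux_height_step {A B : Type} [CommRing A] [IsDomain A] [IsNoetherianRing A]
    [CommRing B] [Algebra A B] (b : B) (hb : Algebra.adjoin A {b} = ⊤)
    (halg : IsAlgebraic A b) (Q : Ideal B) [Q.IsMaximal] :
    Q.height ≤ (Q.comap (algebraMap A B)).height := by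
  let f : Polynomial A →ₐ[A] B := Polynomial.aeval b
  have hf : Function.Surjective f := by
    rw [← AlgHom.range_eq_top, ← Algebra.adjoin_singleton_eq_range_aeval, hb]
  have : IsNoetherianRing B := isNoetherianRing_of_surjective _ _ f.toRingHom hf
  obtain ⟨P, hP, hP0⟩ := halg
  have h1 := aux_height_surj f.toRingHom hf
    (fun h => hP (by
      have h3 : P ∈ RingHom.ker f.toRingHom := hP0
      rwa [h, Ideal.mem_bot] at h3)) Q
  have : (Q.comap f.toRingHom).IsMaximal := Ideal.comap_isMaximal_of_surjective _ hf
  have : (Q.comap f.toRingHom).LiesOver (Q.comap (algebraMap A B)) := ⟨by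
    rw [Ideal.under, Ideal.comap_comap]
    congr 1
    ext a
    exact (f.commutes a).symm⟩
  rw [Polynomial.height_eq_height_add_one (Q.comap (algebraMap A B)) (Q.comap f.toRingHom)] at h1
  exact (ENat.add_le_add_iff_right (by simp)).mp h1

theorem aux_height_adjoin {A K : Type} [CommRing A] [IsDomain A] [IsNoetherianRing A]
    [Field K] [Algebra A K] [Algebra.IsAlgebraic A K] (hinj : Function.Injective (algebraMap A K)) (s : Finset K) :
    ∀ (Q : Ideal (Algebra.adjoin A (s : Set K))) [Q.IsMaximal]
      [Finite (Algebra.adjoin A (s : Set K) ⧸ Q)],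
      Q.height ≤ (Q.comap (algebraMap A (Algebra.adjoin A (s : Set K)))).height := by
  classical
  induction s using Finset.induction_on with
  | empty =>
    intro Q _ _
    refine aux_height_step 0 ?_ isAlgebraic_zero Q
    apply top_unique
    rintro ⟨x, hx⟩ -
    have hx' := hx
    simp only [Finset.coe_empty, Algebra.adjoin_empty] at hx
    obtain ⟨a, ha⟩ := Algebra.mem_bot.mp hx
    have : (⟨x, hx'⟩ : Algebra.adjoin A ((∅ : Finset K) : Set K)) = algebraMap A _ a :=
      Subtype.ext ha.symm
    rw [this]
    exact Subalgebra.algebraMap_mem _ a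
  | insert x s hxs ih =>
    intro Q _ _
    let B₀ := Algebra.adjoin A (s : Set K)
    let B := Algebra.adjoin A ((insert x s : Finset K) : Set K)
    have hle : B₀ ≤ B := Algebra.adjoin_mono (by simp)
    have hN : IsNoetherianRing B₀ :=
      have : Algebra.FiniteType A B₀ :=
        (Subalgebra.fg_iff_finiteType _).mp (Subalgebra.fg_adjoin_finset s)
      Algebra.FiniteType.isNoetherianRing A B₀
    let _ : Algebra B₀ B := (Subalgebra.inclusion hle).toRingHom.toAlgebra
    have hxB : x ∈ B := Algebra.subset_adjoin (by simp)
    have h1 : Q.height ≤ (Q.comap (algebraMap B₀ B)).height := by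
      refine aux_height_step (A := B₀) (B := B) ⟨x, hxB⟩ ?_ ?_ Q
      · apply top_unique
        rintro ⟨y, hy⟩ -
        have key : ∀ y (hy : y ∈ Algebra.adjoin A ((insert x s : Finset K) : Set K)),
            (⟨y, hy⟩ : B) ∈ Algebra.adjoin B₀ {(⟨x, hxB⟩ : B)} := by
          intro y hy
          induction hy using Algebra.adjoin_induction with
          | mem z hz =>
            simp only [Finset.coe_insert, Set.mem_insert_iff] at hz
            rcases hz with rfl | hz
            · exact Algebra.subset_adjoin rfl
            · exact Subalgebra.algebraMap_mem (Algebra.adjoin B₀ {(⟨x, hxB⟩ : B)})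
                (⟨z, Algebra.subset_adjoin hz⟩ : B₀)
          | algebraMap r =>
            exact Subalgebra.algebraMap_mem (Algebra.adjoin B₀ {(⟨x, hxB⟩ : B)})
                (algebraMap A B₀ r)
          | add a b ha hb h1 h2 => exact add_mem h1 h2
          | mul a b ha hb h1 h2 => exact mul_mem h1 h2
        exact key y hy
      · have : IsAlgebraic B₀ x := (Algebra.IsAlgebraic.isAlgebraic (R := A) x).extendScalars
          (fun a b hab => hinj (congrArg Subtype.val hab))
        obtain ⟨P, hP, hP0⟩ := this
        refine ⟨P, hP, ?_⟩
        apply Subtype.val_injective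
        have : (Polynomial.aeval (⟨x, hxB⟩ : B) P).1 = Polynomial.aeval x P := by
          rw [Polynomial.aeval_def, Polynomial.aeval_def]
          change B.val.toRingHom _ = _
          rw [Polynomial.hom_eval₂]
          rfl
        rw [this, hP0]; rfl
    have hfin : Finite (B₀ ⧸ Q.comap (algebraMap B₀ B)) :=
      Finite.of_injective (Ideal.quotientMap Q (algebraMap B₀ B) le_rfl) Ideal.quotientMap_injective
    have hmax : (Q.comap (algebraMap B₀ B)).IsMaximal :=
      Ideal.Quotient.maximal_of_isField _ (Finite.isField_of_domain _)
    have h2 := ih (Q.comap (algebraMap B₀ B))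
    rw [Ideal.comap_comap] at h2
    exact h1.trans h2

theorem aux_enlarge (d : ℕ) : ∀ (e : ℕ) (L : Type) [CommRing L] [IsDomain L] [IsNoetherianRing L] [IsLocalRing L]
    [Finite (ResidueField L)], ringKrullDim L + e = d →
    ∃ (S : Type) (_ : CommRing S) (_ : IsDomain S) (_ : IsNoetherianRing S) (_ : IsLocalRing S)
      (_ : Finite (ResidueField S)) (f : L →+* S),
      Function.Injective f ∧ IsLocalHom f ∧ ringKrullDim S = d := by
  intro e
  induction e with
  | zero =>
    intro L _ _ _ _ _ h
    exact ⟨L, inferInstance, inferInstance, inferInstance, inferInstance, inferInstance,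
      RingHom.id L, Function.injective_id, inferInstance, by simpa using h⟩
  | succ e ih =>
    intro L _ _ _ _ _ h
    let g : Polynomial L →+* ResidueField L := (residue L).comp Polynomial.constantCoeff
    have hg : Function.Surjective g := fun y => by
      obtain ⟨y, rfl⟩ := residue_surjective y
      exact ⟨Polynomial.C y, by simp [g]⟩
    let Q := RingHom.ker g
    have hQ : Q.IsMaximal := RingHom.ker_isMaximal_of_surjective g hg
    let M := Localization.AtPrime Q
    have hunder : maximalIdeal L = Q.comap (algebraMap L (Polynomial L)) := by
      ext x
      simp [Q, g, RingHom.mem_ker, -mem_maximalIdeal, residue_eq_zero_iff]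
    have : Q.LiesOver (maximalIdeal L) := ⟨hunder⟩
    have hdim : ringKrullDim M = ringKrullDim L + 1 := by
      rw [IsLocalization.AtPrime.ringKrullDim_eq_height Q M,
        Polynomial.height_eq_height_add_one (maximalIdeal L) Q,
        ← maximalIdeal_height_eq_ringKrullDim]
      rfl
    have : IsNoetherianRing M := IsLocalization.isNoetherianRing Q.primeCompl M inferInstance
    have : IsDomain M := IsLocalization.isDomain_of_atPrime M Q
    have : Finite (ResidueField M) := by
      have : Finite (Polynomial L ⧸ Q) :=
        Finite.of_equiv _ (RingHom.quotientKerEquivOfSurjective hg).symm.toEquiv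
      exact Finite.of_equiv _ (IsLocalization.AtPrime.equivQuotMaximalIdeal Q M).toEquiv
    obtain ⟨S, i1, i2, i3, i4, i5, f, hf, hloc, hS⟩ := ih M (by
      rw [hdim, ← h]; push_cast; rw [add_assoc, add_comm 1])
    let f0 : L →+* M := (algebraMap (Polynomial L) M).comp Polynomial.C
    have hf0 : IsLocalHom f0 := by
      refine ((local_hom_TFAE f0).out 0 4).mpr ?_
      change ((maximalIdeal M).comap ((algebraMap (Polynomial L) M).comp (algebraMap L (Polynomial L)))) = _
      rw [← Ideal.comap_comap, hunder]
      congr 1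
      exact IsLocalization.AtPrime.comap_maximalIdeal M Q
    refine ⟨S, i1, i2, i3, i4, i5, f.comp f0, hf.comp ?_, RingHom.isLocalHom_comp _ _, hS⟩
    exact (IsLocalization.injective M Q.primeCompl_le_nonZeroDivisors).comp Polynomial.C_injective

end AuxB

section AuxC
open IsLocalRing
open scoped TensorProduct

theorem aux_free (O M : Type) [CommRing O] [IsDomain O] [ValuationRing O] [AddCommGroup M]
    [Module O M] [Module.Finite O M] [Module.IsTorsionFree O M] : Module.Free O M := by
  have hflat : Module.Flat O M := by
    rw [Module.Flat.flat_iff_torsion_eq_bot_of_isBezout,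
      ← Submodule.isTorsionFree_iff_torsion_eq_bot]
    infer_instance
  exact Module.free_of_flat_of_isLocalRing

theorem aux_lattice_basis (V K E : Type) [CommRing V] [IsDomain V] [ValuationRing V] [Field K]
    [Algebra V K] [IsFractionRing V K] [AddCommGroup E] [Module K E] [Module V E]
    [IsScalarTower V K E] (k : ℕ) (v : Fin k → E) :
    ∃ (n : ℕ) (b : Fin n → E), LinearIndependent K b ∧
      (∀ j, ∃ c : Fin k → V, ∑ l, c l • v l = b j) ∧
      (∀ l, ∃ a : Fin n → V, ∑ i, a i • b i = v l) := by
  have hMfin : Module.Finite V (Submodule.span V (Set.range v)) :=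
    Module.Finite.span_of_finite V (Set.finite_range _)
  have : Module.IsTorsionFree V E := Module.IsTorsionFree.trans_faithfulSMul V K E
  have htf : Module.IsTorsionFree V (Submodule.span V (Set.range v)) := inferInstance
  have hfree : Module.Free V (Submodule.span V (Set.range v)) := aux_free _ _
  obtain ⟨n, ⟨b⟩⟩ : ∃ n : ℕ, Nonempty (Module.Basis (Fin n) V (Submodule.span V (Set.range v))) :=
    ⟨_, ⟨Module.finBasis V _⟩⟩
  refine ⟨n, fun i => (b i : E), ?_, ?_, ?_⟩
  · rw [← LinearIndependent.iff_fractionRing V K]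
    exact b.linearIndependent.map' (Submodule.span V (Set.range v)).subtype
      (Submodule.ker_subtype _)
  · intro j
    exact (Submodule.mem_span_range_iff_exists_fun V).mp (b j).2
  · intro l
    refine ⟨fun i => b.repr ⟨v l, Submodule.subset_span ⟨l, rfl⟩⟩ i, ?_⟩
    have h2 := congrArg Subtype.val (b.sum_repr ⟨v l, Submodule.subset_span ⟨l, rfl⟩⟩)
    simpa only [Submodule.coe_sum, Submodule.coe_smul] using h2

theorem aux_module_abs (R K W : Type) [CommRing R] [IsDomain R] [Field K] [Algebra R K]
    [IsFractionRing R K] [AddCommGroup W] [Module R W] [Module.Finite R W]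
    (hW : ∀ r : R, r ≠ 0 → Function.Injective fun w : W => r • w)
    (V : Type) [CommRing V] [IsDomain V] [ValuationRing V] [Algebra V K] [IsFractionRing V K] :
    ∃ (n : ℕ) (s : Finset K), (∀ x ∈ s, x ∈ (algebraMap V K).range) ∧
      ∃ ρ : Module.End R W →* Matrix (Fin n) (Fin n) K, Function.Injective ρ ∧
        ∀ g i j, ρ g i j ∈ Algebra.adjoin R (s : Set K) := by
  classical
  have hsc : SMulCommClass R V K := ⟨fun r v x => by
    simp only [Algebra.smul_def]; ring⟩
  let E := K ⊗[R] W
  let ι : W →ₗ[R] E := TensorProduct.mk R K W 1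
  have hι : Function.Injective ι := by
    have hloc : IsLocalizedModule (nonZeroDivisors R) ι :=
      (isLocalizedModule_iff_isBaseChange (nonZeroDivisors R) K ι).mpr
        (TensorProduct.isBaseChange R W K)
    intro x y hxy
    obtain ⟨c, hc⟩ := (IsLocalizedModule.eq_iff_exists (nonZeroDivisors R) ι).mp hxy
    exact hW c (nonZeroDivisors.ne_zero c.2) hc
  obtain ⟨k, w, hw⟩ := Submodule.fg_iff_exists_fin_generating_family.mp
    (Module.Finite.fg_top : (⊤ : Submodule R W).FG)
  obtain ⟨n, b, hli, hc, ha0⟩ := aux_lattice_basis V K E k (fun i => ι (w i))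
  choose c hc using hc
  choose a ha0 using ha0
  have hMsp : ∀ l, ι (w l) ∈ Submodule.span K (Set.range b) := by
    intro l
    rw [← ha0]
    refine Submodule.sum_mem _ fun i _ => ?_
    rw [← IsScalarTower.algebraMap_smul K]
    exact Submodule.smul_mem _ _ (Submodule.subset_span ⟨i, rfl⟩)
  have hιsp : ∀ x, ι x ∈ Submodule.span K (Set.range b) := by
    intro x
    have hx : x ∈ Submodule.span R (Set.range w) := hw ▸ Submodule.mem_top
    induction hx using Submodule.span_induction with
    | mem x h => obtain ⟨i, rfl⟩ := h; exact hMsp i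
    | zero => simp
    | add x y _ _ h1 h2 => rw [map_add]; exact add_mem h1 h2
    | smul r x _ h1 =>
      rw [map_smul, ← IsScalarTower.algebraMap_smul K]
      exact Submodule.smul_mem _ _ h1
  have hsp : ⊤ ≤ Submodule.span K (Set.range b) := by
    intro x _
    induction x using TensorProduct.induction_on with
    | zero => simp
    | tmul a x =>
      have : a ⊗ₜ[R] x = a • ι x := by
        change a ⊗ₜ[R] x = a • ((1 : K) ⊗ₜ[R] x)
        rw [TensorProduct.smul_tmul', smul_eq_mul, mul_one]
      rw [this]
      exact Submodule.smul_mem _ _ (hιsp x)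
    | add x y h1 h2 => exact add_mem (h1 trivial) (h2 trivial)
  let e : Module.Basis (Fin n) K E := Module.Basis.mk hli hsp
  have he : ∀ i, e i = b i := fun i => Module.Basis.mk_apply hli hsp i
  have ha : ∀ l i, e.repr (ι (w l)) i = algebraMap V K (a l i) := by
    intro l i
    have h3 : ι (w l) = ∑ i, (algebraMap V K (a l i)) • e i := by
      rw [← ha0]
      refine Finset.sum_congr rfl fun i _ => ?_
      rw [he, algebraMap_smul]
    rw [h3, e.repr_sum_self]
  let s : Finset K := (Finset.univ.image fun x : Fin k × Fin n => (algebraMap V K (a x.1 x.2))) ∪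
    (Finset.univ.image fun x : Fin n × Fin k => (algebraMap V K (c x.1 x.2)))
  let B := Algebra.adjoin R (s : Set K)
  have haB : ∀ l i, (algebraMap V K (a l i)) ∈ B := fun l i => Algebra.subset_adjoin (by
    simp only [s, Finset.coe_union, Finset.coe_image]; left; exact ⟨(l, i), by simp⟩)
  have hcB : ∀ l i, (algebraMap V K (c l i)) ∈ B := fun l i => Algebra.subset_adjoin (by
    simp only [s, Finset.coe_union, Finset.coe_image]; right; exact ⟨(l, i), by simp⟩)
  have hxB : ∀ x i, e.repr (ι x) i ∈ B := by
    intro x i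
    have hx : x ∈ Submodule.span R (Set.range w) := hw ▸ Submodule.mem_top
    induction hx using Submodule.span_induction with
    | mem x h => obtain ⟨l, rfl⟩ := h; rw [ha]; exact haB l i
    | zero => simp
    | add x y _ _ h1 h2 => simpa using add_mem h1 h2
    | smul r x _ h1 =>
      rw [map_smul, ← IsScalarTower.algebraMap_smul K, map_smul, Finsupp.smul_apply, smul_eq_mul]
      exact mul_mem (Subalgebra.algebraMap_mem B r) h1
  refine ⟨n, s, ?_, ?_⟩
  · intro x hx
    simp only [s, Finset.mem_union, Finset.mem_image] at hx
    rcases hx with ⟨y, -, rfl⟩ | ⟨y, -, rfl⟩ <;> exact ⟨_, rfl⟩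
  · let ρ : Module.End R W →* Matrix (Fin n) (Fin n) K :=
      ((LinearMap.toMatrixAlgEquiv e : Module.End K E →* _)).comp
        (Module.End.baseChangeHom R K W : Module.End R W →* Module.End K E)
    have hρ : ∀ g, ρ g = LinearMap.toMatrixAlgEquiv e (g.baseChange K) := fun g => rfl
    refine ⟨ρ, ?_, ?_⟩
    · intro g h hgh
      rw [hρ, hρ] at hgh
      have := (LinearMap.toMatrixAlgEquiv e).injective hgh
      ext x
      apply hι
      have h2 := LinearMap.congr_fun this (1 ⊗ₜ x)
      simp only [LinearMap.baseChange_tmul] at h2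
      exact h2
    · intro g i j
      rw [hρ, LinearMap.toMatrixAlgEquiv_apply, he, ← hc]
      have : (g.baseChange K) (∑ l, c j l • ι (w l)) = ∑ l, (algebraMap V K (c j l)) • ι (g (w l)) := by
        rw [map_sum]
        refine Finset.sum_congr rfl fun l _ => ?_
        rw [← algebraMap_smul K (c j l), map_smul]
        exact congrArg _ (LinearMap.baseChange_tmul _ _ _)
      rw [this, map_sum, Finsupp.finsetSum_apply]
      refine sum_mem fun l _ => ?_
      rw [map_smul, Finsupp.smul_apply, smul_eq_mul]
      exact mul_mem (hcB j l) (hxB _ i)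

theorem aux_module (R K W : Type) [CommRing R] [IsDomain R] [Field K] [Algebra R K]
    [IsFractionRing R K] [AddCommGroup W] [Module R W] [Module.Finite R W]
    (hW : ∀ r : R, r ≠ 0 → Function.Injective fun w : W => r • w)
    (V : ValuationSubring K) :
    ∃ (n : ℕ) (s : Finset K), (∀ x ∈ s, x ∈ V) ∧
      ∃ ρ : Module.End R W →* Matrix (Fin n) (Fin n) K, Function.Injective ρ ∧
        ∀ g i j, ρ g i j ∈ Algebra.adjoin R (s : Set K) := by
  obtain ⟨n, s, hs, h⟩ := aux_module_abs R K W hW V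
  refine ⟨n, s, fun x hx => ?_, h⟩
  obtain ⟨y, rfl⟩ := hs x hx
  exact y.2

end AuxC

section AuxD
open IsLocalRing

theorem aux_exists_maximal (R K : Type) [CommRing R] [IsLocalRing R]
    [Field K] [Algebra R K] (V : ValuationSubring K) (hV : ∀ r : R, algebraMap R K r ∈ V)
    (hloc : ∀ r ∈ maximalIdeal R, V.valuation (algebraMap R K r) < 1)
    (s : Finset K) (hs : ∀ x ∈ s, x ∈ V) :
    ∃ Q : Ideal (Algebra.adjoin R (s : Set K)), Q.IsMaximal ∧
      Q.comap (algebraMap R (Algebra.adjoin R (s : Set K))) = maximalIdeal R := by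
  have hBV : ∀ x ∈ Algebra.adjoin R (s : Set K), x ∈ V := by
    intro x hx
    induction hx using Algebra.adjoin_induction with
    | mem x hx => exact hs x hx
    | algebraMap r => exact hV r
    | add x y _ _ h1 h2 => exact add_mem h1 h2
    | mul x y _ _ h1 h2 => exact mul_mem h1 h2
  let j : Algebra.adjoin R (s : Set K) →+* V :=
    ((Algebra.adjoin R (s : Set K)).val.toRingHom).codRestrict V.toSubring
      (fun x => hBV _ x.2)
  let P := (maximalIdeal V).comap j
  have hPp : P.IsPrime := inferInstance
  obtain ⟨Q, hQ, hPQ⟩ := Ideal.exists_le_maximal P hPp.ne_top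
  refine ⟨Q, hQ, ?_⟩
  have hle : maximalIdeal R ≤ Q.comap (algebraMap R (Algebra.adjoin R (s : Set K))) := by
    intro r hr
    apply hPQ
    change j _ ∈ maximalIdeal V
    exact (ValuationSubring.valuation_lt_one_iff V _).mpr (hloc r hr)
  exact ((maximalIdeal.isMaximal R).eq_of_le (Ideal.comap_ne_top _ hQ.ne_top) hle).symm

theorem aux_finite_quot_s5 (R B : Type) [CommRing R] [IsLocalRing R] [Finite (ResidueField R)]
    [CommRing B] [Algebra R B] [Algebra.FiniteType R B] (Q : Ideal B) [hQ : Q.IsMaximal]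
    (hQR : Q.comap (algebraMap R B) = maximalIdeal R) : Finite (B ⧸ Q) := by
  have : Q.LiesOver (maximalIdeal R) := ⟨hQR.symm⟩
  let _ : Field (R ⧸ maximalIdeal R) := Ideal.Quotient.field _
  let _ : Field (B ⧸ Q) := Ideal.Quotient.field _
  have : Finite (R ⧸ maximalIdeal R) := ‹Finite (ResidueField R)›
  have h1 : Algebra.FiniteType R (B ⧸ Q) := inferInstance
  have h2 : Algebra.FiniteType (R ⧸ maximalIdeal R) (B ⧸ Q) :=
    Algebra.FiniteType.of_restrictScalars_finiteType R _ _
  have h3 : Module.Finite (R ⧸ maximalIdeal R) (B ⧸ Q) := finite_of_finite_type_of_isJacobsonRing _ _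
  exact Module.finite_of_finite (R ⧸ maximalIdeal R)

theorem aux_dim_nat (R : Type) [CommRing R] [IsNoetherianRing R] [IsLocalRing R] :
    ∃ d : ℕ, ringKrullDim R = d := by
  rw [← IsLocalRing.maximalIdeal_height_eq_ringKrullDim]
  obtain ⟨d, hd⟩ := ENat.ne_top_iff_exists.mp
    (Ideal.height_ne_top_of_isPrime (I := IsLocalRing.maximalIdeal R))
  exact ⟨d, by rw [← hd]; rfl⟩

end AuxD

/-- Let `R` be a commutative Noetherian local pro-`p` domain, `W` a
finitely generated torsion-free `R`-module and `G ≤ Aut_R(W)`. Then `G` embeds into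
`GL_n(S)` for some commutative Noetherian local pro-`p` domain `S` with the same
characteristic and Krull dimension as `R`. -/
theorem exists_linearisation_of_subgroup_aut_torsionFree (p : ℕ) [Fact p.Prime]
    (R : Type) [CommRing R] [IsDomain R] [IsNoetherianRing R] [IsLocalRing R]
    [IsAdicComplete (IsLocalRing.maximalIdeal R) R]
    [Finite (IsLocalRing.ResidueField R)] [CharP (IsLocalRing.ResidueField R) p]
    (W : Type) [AddCommGroup W] [Module R W] [Module.Finite R W]
    (hW : ∀ r : R, r ≠ 0 → Function.Injective fun w : W => r • w)
    (G : Subgroup (LinearMap.GeneralLinearGroup R W)) :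
    Nonempty (LinearisationOverProPDomain p R G) := by
  classical
  let K := FractionRing R
  obtain ⟨V, hV, hloc⟩ := IsLocalRing.exists_factor_valuationRing (algebraMap R K)
  have hV' : ∀ r : R, algebraMap R K r ∈ V := fun r => hV r
  have hval : ∀ r ∈ IsLocalRing.maximalIdeal R, V.valuation (algebraMap R K r) < 1 := by
    intro r hr
    have h1 : ¬ IsUnit ((algebraMap R K).codRestrict V.toSubring hV r) := fun hu =>
      ((IsLocalRing.mem_maximalIdeal r).mp hr) (hloc.map_nonunit r hu)
    exact (ValuationSubring.valuation_lt_one_iff V ⟨algebraMap R K r, hV' r⟩).mp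
      ((IsLocalRing.mem_maximalIdeal _).mpr h1)
  obtain ⟨n, s, hs, ρ, hρ, hρB⟩ := aux_module R K W hW V
  obtain ⟨Q, hQ, hQR⟩ := aux_exists_maximal R K V hV' hval s hs
  let B := Algebra.adjoin R (s : Set K)
  have hft : Algebra.FiniteType R B :=
    (Subalgebra.fg_iff_finiteType _).mp ⟨s, rfl⟩
  have hBn : IsNoetherianRing B := Algebra.FiniteType.isNoetherianRing R B
  have hfq : Finite (B ⧸ Q) := aux_finite_quot_s5 R B Q hQR
  have hKalg : Algebra.IsAlgebraic R K := IsLocalization.isAlgebraic K (nonZeroDivisors R)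
  have hht := aux_height_adjoin (K := K) (IsFractionRing.injective R K) s Q
  rw [hQR] at hht
  let L := Localization.AtPrime Q
  have hLd : IsDomain L := IsLocalization.isDomain_localization Q.primeCompl_le_nonZeroDivisors
  have hLn : IsNoetherianRing L := IsLocalization.isNoetherianRing Q.primeCompl L inferInstance
  have hLf : Finite (IsLocalRing.ResidueField L) :=
    Finite.of_equiv _ (IsLocalization.AtPrime.equivQuotMaximalIdeal Q L).toEquiv
  have hLdim : ringKrullDim L ≤ ringKrullDim R := by
    rw [IsLocalization.AtPrime.ringKrullDim_eq_height Q L,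
      ← IsLocalRing.maximalIdeal_height_eq_ringKrullDim]
    exact_mod_cast hht
  obtain ⟨d, hd⟩ := aux_dim_nat R
  obtain ⟨e, he⟩ : ∃ e : ℕ, ringKrullDim L + e = d := by
    rw [hd] at hLdim
    obtain ⟨l, hl⟩ := aux_dim_nat L
    rw [hl] at hLdim ⊢
    have hle : l ≤ d := by exact_mod_cast hLdim
    refine ⟨d - l, ?_⟩
    have : l + (d - l) = d := by omega
    exact_mod_cast this
  obtain ⟨L', _, _, _, _, _, f, hf, hfl, hfd⟩ := aux_enlarge d e L he
  obtain ⟨S, _, _, _, _, _, _, g, hg, hgl, hgd⟩ := aux_completion L'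
  let φ : B →+* S := (g.comp f).comp (algebraMap B L)
  have hφ : Function.Injective φ := (hg.comp hf).comp
    (IsLocalization.injective L Q.primeCompl_le_nonZeroDivisors)
  let ψ : R →+* S := φ.comp (algebraMap R B)
  have hψ : Function.Injective ψ := hφ.comp
    (FaithfulSMul.algebraMap_injective R B)
  have hchar : ringChar S = ringChar R := by
    have : CharP S (ringChar R) := charP_of_injective_ringHom hψ (ringChar R)
    exact ringChar.eq S (ringChar R) ▸ rfl
  have hpR : (p : R) ∈ IsLocalRing.maximalIdeal R := by
    rw [← IsLocalRing.residue_eq_zero_iff, map_natCast]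
    exact CharP.cast_eq_zero _ p
  have hpL : algebraMap B L (p : B) ∈ IsLocalRing.maximalIdeal L := by
    rw [IsLocalization.AtPrime.to_map_mem_maximal_iff L Q]
    have : (p : R) ∈ Q.comap (algebraMap R B) := hQR ▸ hpR
    simpa using this
  have hpS : (p : S) ∈ IsLocalRing.maximalIdeal S := by
    rw [map_natCast] at hpL
    rw [IsLocalRing.mem_maximalIdeal, mem_nonunits_iff] at hpL ⊢
    intro hu
    apply hpL
    apply hfl.map_nonunit
    apply hgl.map_nonunit
    simpa using hu
  have hcp : CharP (IsLocalRing.ResidueField S) p := by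
    rw [← IsLocalRing.residue_eq_zero_iff, map_natCast] at hpS
    have h1 := ringChar.dvd hpS
    have h2 := ((Nat.dvd_prime (Fact.out : p.Prime)).mp h1).resolve_left CharP.ringChar_ne_one
    rw [← h2]
    exact ringChar.charP _
  let β : Module.End R W →* Matrix (Fin n) (Fin n) B :=
    { toFun := fun x => Matrix.of fun i j => ⟨ρ x i j, hρB x i j⟩
      map_one' := by
        ext i j
        simp [Matrix.one_apply]
        split_ifs <;> simp
      map_mul' := by
        intro x y
        ext i j
        simp [Matrix.mul_apply] }
  have hβ : Function.Injective β := by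
    intro x y hxy
    apply hρ
    ext i j
    exact congrArg Subtype.val (congrFun (congrFun hxy i) j)
  let γ : Module.End R W →* Matrix (Fin n) (Fin n) S :=
    (φ.mapMatrix (m := Fin n)).toMonoidHom.comp β
  have hγ : Function.Injective γ := by
    intro x y hxy
    apply hβ
    ext1 i j
    exact hφ (congrFun (congrFun hxy i) j)
  let F : G →* Matrix.GeneralLinearGroup (Fin n) S := (Units.map γ).comp G.subtype
  have hF : Function.Injective F := (Units.map_injective hγ).comp G.subtype_injective
  exact ⟨{ S := S, char_eq := hchar, dim_eq := by rw [hgd, hfd, hd], n := n, f := F, injective := hF }⟩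
end
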